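/- arXiv:2012.00275 — 2 statements merged into one kernel-verified Lean document; each statement's English description precedes it below -/
import Mathlib

section
/- Let M be a connected compact topological n-manifold without boundary and let f : M → M be a continuous map. If f is homotopic to the identity map, then f is surjective. -/
namespace VC
open Finset Classical

noncomputable section

/-- mod 2 chains -/
abbrev C (X : Type*) := Finset X →₀ ZMod 2

def bdS {X : Type*} (σ : Finset X) : C X := ∑ x ∈ σ, Finsupp.single (σ.erase x) 1

def bd {X : Type*} : C X →ₗ[ZMod 2] C X := Finsupp.linearCombination (ZMod 2) bdS

def pushS {X Y : Type*} (f : X → Y) (σ : Finset X) : C Y :=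
  if Set.InjOn f σ then Finsupp.single (σ.image f) 1 else 0

def push {X Y : Type*} (f : X → Y) : C X →ₗ[ZMod 2] C Y :=
  Finsupp.linearCombination (ZMod 2) (pushS f)

lemma bd_single {X : Type*} (σ : Finset X) : bd (Finsupp.single σ 1) = bdS σ := by
  simp [bd]

lemma push_single {X Y : Type*} (f : X → Y) (σ : Finset X) :
    push f (Finsupp.single σ 1) = pushS f σ := by
  simp [push]

lemma bdS_apply {X : Type*} (σ τ : Finset X) :
    bdS σ τ = if τ ⊆ σ ∧ σ.card = τ.card + 1 then 1 else 0 := by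
  unfold bdS
  rw [Finsupp.finsetSum_apply]
  simp only [Finsupp.single_apply]
  split_ifs with h
  · obtain ⟨h1, h2⟩ := h
    have h3 : (σ \ τ).card = 1 := by rw [card_sdiff_of_subset h1]; omega
    obtain ⟨x, hx⟩ := card_eq_one.1 h3
    have hxs : x ∈ σ \ τ := by simp [hx]
    rw [mem_sdiff] at hxs
    rw [Finset.sum_eq_single x]
    · rw [if_pos]
      ext y
      have : y ∈ σ \ τ ↔ y ∈ ({x} : Finset X) := by rw [hx]
      simp only [mem_sdiff, mem_singleton] at this
      simp only [mem_erase]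
      constructor
      · rintro ⟨h, h'⟩; by_contra h4; exact h (this.1 ⟨h', h4⟩)
      · intro h; exact ⟨fun h' => hxs.2 (h' ▸ h), h1 h⟩
    · intro y hy hyx
      rw [if_neg]
      intro h
      have : x ∈ σ.erase y := by simp [hxs.1, Ne.symm hyx]
      rw [h] at this
      exact hxs.2 this
    · intro h; exact absurd hxs.1 h
  · apply Finset.sum_eq_zero
    intro x hx
    rw [if_neg]
    rintro rfl
    exact h ⟨erase_subset _ _, (card_erase_add_one hx).symm⟩

lemma bd_apply {X : Type*} (z : C X) (τ : Finset X) :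
    bd z τ = ∑ σ ∈ z.support, if τ ⊆ σ ∧ σ.card = τ.card + 1 then z σ else 0 := by
  unfold bd
  rw [Finsupp.linearCombination_apply, Finsupp.sum, Finsupp.finsetSum_apply]
  apply Finset.sum_congr rfl
  intro σ _
  rw [Finsupp.smul_apply, bdS_apply]
  split_ifs <;> simp

def Hit {X Y : Type*} (f : X → Y) (σ : Finset X) (T : Finset Y) : Prop :=
  Set.InjOn f σ ∧ f '' σ = (T : Set Y)

lemma push_apply {X Y : Type*} (f : X → Y) (z : C X) (T : Finset Y) :
    push f z T = ∑ σ ∈ z.support, if Hit f σ T then z σ else 0 := by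
  unfold push
  rw [Finsupp.linearCombination_apply, Finsupp.sum, Finsupp.finsetSum_apply]
  apply Finset.sum_congr rfl
  intro σ _
  rw [Finsupp.smul_apply, pushS]
  by_cases h : Set.InjOn f σ
  · simp [h, Hit, Finsupp.single_apply, ← Finset.coe_inj]
  · simp [h, Hit]

lemma push_congr_apply {X Y : Type*} (f g : X → Y) (z : C X) (T : Finset Y)
    (h : ∀ σ ∈ z.support, Hit f σ T ↔ Hit g σ T) :
    push f z T = push g z T := by
  rw [push_apply, push_apply]
  apply Finset.sum_congr rfl
  intro σ hσ
  simp only [h σ hσ]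

lemma exists_of_push_ne {X Y : Type*} {f : X → Y} {z : C X} {T : Finset Y}
    (h : push f z T ≠ 0) : ∃ σ ∈ z.support, Hit f σ T := by
  by_contra! hc
  apply h
  rw [push_apply]
  apply Finset.sum_eq_zero
  intro σ hσ
  rw [if_neg]
  exact hc σ hσ

lemma exists_of_bd_ne {X : Type*} {z : C X} {τ : Finset X}
    (h : bd z τ ≠ 0) : ∃ σ ∈ z.support, τ ⊆ σ ∧ σ.card = τ.card + 1 := by
  by_contra! hc
  apply h
  rw [bd_apply]
  apply Finset.sum_eq_zero
  intro σ hσ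
  rw [if_neg]
  rintro ⟨h1, h2⟩
  exact hc σ hσ h1 h2

lemma push_push {X Y Z : Type*} (f : X → Y) (g : Y → Z) (z : C X) :
    push g (push f z) = push (g ∘ f) z := by
  have : (push g).comp (push f) = push (g ∘ f) := by
    apply Finsupp.lhom_ext'
    intro σ
    apply LinearMap.ext_ring
    simp only [LinearMap.comp_apply, Finsupp.lsingle_apply, push_single]
    unfold pushS
    by_cases h : Set.InjOn f σ
    · rw [if_pos h, push_single, pushS]
      by_cases h2 : Set.InjOn g (f '' σ)
      · have h3 : Set.InjOn (g ∘ f) σ := h2.comp h (Set.mapsTo_image _ _)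
        rw [if_pos h3, if_pos (by simpa using h2), image_image]
      · rw [if_neg (by simpa using h2), if_neg]
        intro h3; exact h2 h3.image_of_comp
    · rw [if_neg h, map_zero, if_neg]
      intro h3; exact h (Set.InjOn.of_comp h3)
  exact LinearMap.congr_fun this z

lemma push_bd {X Y : Type*} (f : X → Y) (z : C X) : push f (bd z) = bd (push f z) := by
  have : (push f).comp bd = bd.comp (push f) := by
    apply Finsupp.lhom_ext'
    intro σ
    apply LinearMap.ext_ring
    simp only [LinearMap.comp_apply, Finsupp.lsingle_apply, push_single, bd_single]
    unfold bdS
    rw [map_sum]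
    simp only [push_single]
    unfold pushS
    by_cases h : Set.InjOn f σ
    · rw [if_pos h, bd_single, bdS, Finset.sum_image h]
      apply Finset.sum_congr rfl
      intro x hx
      rw [if_pos (h.mono (by simp))]
      congr 1
      ext y
      simp only [mem_image, mem_erase]
      constructor
      · rintro ⟨a, ⟨h1, h2⟩, rfl⟩
        exact ⟨fun h3 => h1 (h h2 hx h3), a, h2, rfl⟩
      · rintro ⟨h1, a, h2, rfl⟩
        exact ⟨a, ⟨fun h3 => h1 (h3 ▸ rfl), h2⟩, rfl⟩
    · rw [if_neg h, map_zero]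
      unfold Set.InjOn at h
      push Not at h
      obtain ⟨x, hx, y, hy, hxy, hne⟩ := h
      have key : ∀ w ∈ σ, w ∉ ({x, y} : Finset X) → (if Set.InjOn f (σ.erase w : Finset X) then
          (Finsupp.single ((σ.erase w).image f) 1 : C Y) else 0) = 0 := by
        intro w hw hw2
        simp only [mem_insert, mem_singleton, not_or] at hw2
        rw [if_neg]
        intro h
        exact hne (h (by simpa using ⟨hx, Ne.symm hw2.1⟩) (by simpa using ⟨hy, Ne.symm hw2.2⟩) hxy)
      rw [← Finset.sum_subset (s₁ := {x, y}) (by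
        intro w; simp only [mem_insert, mem_singleton]; rintro (rfl | rfl) <;> assumption) key]
      rw [Finset.sum_pair hne]
      have e1 : (σ.erase x).image f = (σ.erase y).image f := by
        ext w
        simp only [mem_image, mem_erase]
        constructor
        · rintro ⟨a, ⟨h1, h2⟩, rfl⟩
          by_cases hay : a = y
          · exact ⟨x, ⟨hne, hx⟩, by rw [hay, hxy]⟩
          · exact ⟨a, ⟨hay, h2⟩, rfl⟩
        · rintro ⟨a, ⟨h1, h2⟩, rfl⟩
          by_cases hay : a = x
          · exact ⟨y, ⟨Ne.symm hne, hy⟩, by rw [hay, hxy]⟩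
          · exact ⟨a, ⟨hay, h2⟩, rfl⟩
      have e2 : Set.InjOn f (σ.erase x : Finset X) ↔ Set.InjOn f (σ.erase y : Finset X) := by
        rw [← Finset.card_image_iff, ← Finset.card_image_iff, e1, card_erase_of_mem hx,
          card_erase_of_mem hy]
      rw [e1]
      simp only [e2]
      ext T
      exact CharTwo.add_self_eq_zero _
  exact LinearMap.congr_fun this z

/-- all genuine labels -/
def LL (n : ℕ) : Finset (Option (Fin (n + 1))) := univ.image some

def om {X : Type*} {n : ℕ} (l : X → Option (Fin (n + 1))) (z : C X) : ZMod 2 := push l z (LL n)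

lemma mem_LL {n : ℕ} (a : Option (Fin (n + 1))) : a ∈ LL n ↔ a ≠ none := by
  cases a <;> simp [LL]

lemma card_LL (n : ℕ) : (LL n).card = n + 1 := by
  rw [LL, card_image_of_injective _ (Option.some_injective _)]; simp

lemma bd_LL {n : ℕ} (w : C (Option (Fin (n + 1)))) (c : Fin (n + 1)) :
    bd w ((LL n).erase (some c)) = w (LL n) + w (insert none ((LL n).erase (some c))) := by
  have hc : some c ∈ LL n := by simp [mem_LL]
  have hne : LL n ≠ insert none ((LL n).erase (some c)) := by
    intro h
    have : none ∈ LL n := by rw [h]; simp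
    simp [mem_LL] at this
  have h0 : (none : Option (Fin (n+1))) ∉ (LL n).erase (some c) := by simp [mem_LL]
  have hw : w (LL n) + w (insert none ((LL n).erase (some c))) =
      ∑ σ ∈ {LL n, insert none ((LL n).erase (some c))}, w σ := by
    rw [Finset.sum_pair hne]
  rw [hw, bd_apply]
  have : ∀ σ : Finset (Option (Fin (n+1))), ((LL n).erase (some c) ⊆ σ ∧
      σ.card = ((LL n).erase (some c)).card + 1) ↔
      σ ∈ ({LL n, insert none ((LL n).erase (some c))} : Finset (Finset (Option (Fin (n+1))))) := by
    intro σ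
    simp only [mem_insert, mem_singleton]
    constructor
    · rintro ⟨h1, h2⟩
      by_cases h3 : none ∈ σ
      · right
        symm
        apply eq_of_subset_of_card_le
        · exact insert_subset h3 h1
        · rw [h2, card_insert_of_notMem h0]
      · left
        apply eq_of_subset_of_card_le
        · intro a ha; rw [mem_LL]; rintro rfl; exact h3 ha
        · rw [h2, card_erase_of_mem hc, card_LL]; simp
    · rintro (rfl | rfl)
      · exact ⟨erase_subset _ _, (card_erase_add_one hc).symm⟩
      · exact ⟨subset_insert _ _, card_insert_of_notMem h0⟩
  simp only [this]
  rw [← Finset.sum_filter]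
  apply Finset.sum_subset
  · intro σ; simp
  · intro σ h1 h2
    rw [mem_filter] at h2
    by_contra h3
    exact h2 ⟨by simpa using h3, h1⟩

lemma om_eq {X : Type*} {n : ℕ} (l : X → Option (Fin (n + 1))) (z : C X) (c : Fin (n + 1)) :
    om l z = push l (bd z) ((LL n).erase (some c)) +
      push l z (insert none ((LL n).erase (some c))) := by
  rw [push_bd, bd_LL, om, add_assoc, CharTwo.add_self_eq_zero, add_zero]

/-- one vertex change -/
lemma om_step {X : Type*} {n : ℕ} (l m : X → Option (Fin (n + 1))) (z : C X) (v : X)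
    (hv : ∀ x, x ≠ v → l x = m x)
    (h1 : ∀ σ ∈ z.support, ∃ a, ∀ x ∈ σ, l x ≠ a ∧ m x ≠ a)
    (h2 : ∀ τ ∈ (bd z).support, ∃ a ∈ LL n, ∀ x ∈ τ, l x ≠ a ∧ m x ≠ a) :
    om l z = om m z := by
  wlog hl : ∃ c, l v = some c generalizing l m
  · by_cases hm : ∃ c, m v = some c
    · symm
      apply this m l (fun x hx => (hv x hx).symm) _ _ hm
      · intro σ hσ; obtain ⟨a, h⟩ := h1 σ hσ; exact ⟨a, fun x hx => (h x hx).symm⟩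
      · intro σ hσ; obtain ⟨a, h0, h⟩ := h2 σ hσ; exact ⟨a, h0, fun x hx => (h x hx).symm⟩
    · have : l = m := by
        funext x
        by_cases hx : x = v
        · subst hx
          rw [Option.eq_none_iff_forall_ne_some.2 (fun c h => hl ⟨c, h⟩),
            Option.eq_none_iff_forall_ne_some.2 (fun c h => hm ⟨c, h⟩)]
        · exact hv x hx
      rw [this]
  obtain ⟨c, hc⟩ := hl
  have agree : ∀ τ : Finset X, v ∉ τ → Set.EqOn l m τ := by
    intro τ hτ x hx
    exact hv x (fun h => hτ (h ▸ hx))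
  have agree2 : ∀ (τ : Finset X) (T : Finset (Option (Fin (n+1)))), v ∉ τ →
      (Hit l τ T ↔ Hit m τ T) := by
    intro τ T hτ
    rw [Hit, Hit, (agree τ hτ).injOn_iff, (agree τ hτ).image_eq]
  have gen : ∀ (τ : Finset X) (T : Finset (Option (Fin (n+1)))), some c ∉ T →
      (m '' τ = T → v ∈ τ → False) → (Hit l τ T ↔ Hit m τ T) := by
    intro τ T hT hh
    by_cases hvτ : v ∈ τ
    · constructor
      · rintro ⟨_, h⟩
        exact absurd (by rw [← hc, ← mem_coe, ← h]; exact Set.mem_image_of_mem _ hvτ) hT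
      · rintro ⟨_, h⟩
        exact (hh h hvτ).elim
    · exact agree2 τ T hvτ
  rw [om_eq l z c, om_eq m z c]
  congr 1
  · apply push_congr_apply
    intro τ hτ
    apply gen
    · simp
    · intro h hvτ
      obtain ⟨a, ha, hal⟩ := h2 τ hτ
      have hac : a ≠ some c := fun h3 => (hal v hvτ).1 (by rw [hc, h3])
      have : a ∈ m '' τ := by rw [h, mem_coe, mem_erase]; exact ⟨hac, ha⟩
      obtain ⟨x, hx, hxa⟩ := this
      exact (hal x hx).2 hxa
  · apply push_congr_apply
    intro τ hτ
    apply gen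
    · simp
    · intro h hvτ
      obtain ⟨a, hal⟩ := h1 τ hτ
      have hac : a ≠ some c := fun h3 => (hal v hvτ).1 (by rw [hc, h3])
      have : a ∈ m '' τ := by
        rw [h, mem_coe, mem_insert, mem_erase, mem_LL]
        tauto
      obtain ⟨x, hx, hxa⟩ := this
      exact (hal x hx).2 hxa

lemma om_homotopy {X : Type*} {n : ℕ} (l m : X → Option (Fin (n + 1))) (z : C X)
    (h1 : ∀ σ ∈ z.support, ∃ a, ∀ x ∈ σ, l x ≠ a ∧ m x ≠ a)
    (h2 : ∀ τ ∈ (bd z).support, ∃ a ∈ LL n, ∀ x ∈ τ, l x ≠ a ∧ m x ≠ a) :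
    om l z = om m z := by
  have key : ∀ F : Finset X, om l z = om (fun x => if x ∈ F then m x else l x) z := by
    intro F
    induction F using Finset.induction_on with
    | empty => simp
    | insert v F hv ih =>
      rw [ih]
      have aux : ∀ (F : Finset X) (x : X) (a : Option (Fin (n+1))),
          (l x ≠ a ∧ m x ≠ a) → (if x ∈ F then m x else l x) ≠ a := by
        intro F x a h
        split_ifs
        · exact h.2
        · exact h.1
      apply om_step _ _ z v
      · intro x hx
        simp [hx]
      · intro σ hσ
        obtain ⟨a, ha⟩ := h1 σ hσ
        exact ⟨a, fun x hx => ⟨aux _ x a (ha x hx), aux _ x a (ha x hx)⟩⟩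
      · intro σ hσ
        obtain ⟨a, h0, ha⟩ := h2 σ hσ
        exact ⟨a, h0, fun x hx => ⟨aux _ x a (ha x hx), aux _ x a (ha x hx)⟩⟩
  rw [key (z.support.biUnion id)]
  apply push_congr_apply
  intro σ hσ
  have : Set.EqOn (fun x => if x ∈ z.support.biUnion id then m x else l x) m σ := by
    intro x hx
    simp only
    rw [if_pos]
    rw [mem_biUnion]
    exact ⟨σ, hσ, hx⟩
  rw [Hit, Hit, this.injOn_iff, this.image_eq]

end
end VC

namespace VC
open Finset Classical

noncomputable section

abbrev V (n : ℕ) := Fin n → ℤ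

def adj {n : ℕ} (v w : V n) : Prop := (v ≤ w ∧ w ≤ v + 1) ∨ (w ≤ v ∧ v ≤ w + 1)

def Clq {n : ℕ} (σ : Finset (V n)) : Prop := ∀ v ∈ σ, ∀ w ∈ σ, adj v w

def sm {n : ℕ} (v : V n) : ℤ := ∑ i, v i

lemma sm_mono {n : ℕ} {v w : V n} (h : v ≤ w) : sm v ≤ sm w := Finset.sum_le_sum fun i _ => h i

lemma sm_eq {n : ℕ} {v w : V n} (h : v ≤ w) (h2 : sm w ≤ sm v) : v = w := by
  have := (Finset.sum_eq_sum_iff_of_le (s := univ) (fun i _ => h i)).1 (le_antisymm (sm_mono h) h2)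
  funext i
  exact this i (mem_univ i)

lemma sm_add_one {n : ℕ} (v : V n) : sm (v + 1) = sm v + n := by
  simp [sm, Finset.sum_add_distrib]

lemma sm_add {n : ℕ} (v w : V n) : sm (v + w) = sm v + sm w := by
  simp [sm, Finset.sum_add_distrib]

lemma sm_sub {n : ℕ} (v w : V n) : sm (v - w) = sm v - sm w := by
  simp [sm]

lemma adj.symm {n : ℕ} {v w : V n} (h : adj v w) : adj w v := Or.symm h

lemma adj_self {n : ℕ} (v : V n) : adj v v :=
  Or.inl ⟨le_refl _, fun i => by simp⟩

lemma adj.of_sm_le {n : ℕ} {v w : V n} (h : adj v w) (h2 : sm v ≤ sm w) : v ≤ w ∧ w ≤ v + 1 := by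
  rcases h with h | h
  · exact h
  · have := sm_eq h.1 h2
    subst this
    exact ⟨le_refl _, h.2⟩

lemma adj.eq_of_sm {n : ℕ} {v w : V n} (h : adj v w) (h2 : sm v = sm w) : v = w :=
  sm_eq (h.of_sm_le h2.le).1 h2.ge

lemma unit_vec {n : ℕ} {d : V n} (h : 0 ≤ d) (h1 : sm d = 1) : ∃ a, d = Pi.single a 1 := by
  have : ∃ a, 0 < d a := by
    by_contra! hc
    have : sm d ≤ 0 := Finset.sum_nonpos fun i _ => hc i
    omega
  obtain ⟨a, ha⟩ := this
  refine ⟨a, ?_⟩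
  symm
  apply sm_eq
  · intro i
    by_cases hi : i = a
    · subst hi; simp; omega
    · simp [Pi.single_eq_of_ne hi]; exact h i
  · rw [h1]; simp [sm]

lemma enum {n : ℕ} {σ : Finset (V n)} (hσ : Clq σ) (hc : σ.card = n + 1) :
    ∃ w : ℕ → V n, (∀ k ≤ n, w k ∈ σ) ∧ (∀ k ≤ n, sm (w k) = sm (w 0) + k) ∧
      (∀ j k, j ≤ k → k ≤ n → w j ≤ w k) ∧ w n = w 0 + 1 ∧ ∀ u ∈ σ, ∃ k ≤ n, u = w k := by
  have hne : σ.Nonempty := by rw [← card_pos]; omega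
  obtain ⟨v, hv, hmin⟩ := Finset.exists_min_image σ sm hne
  have hb : ∀ u ∈ σ, v ≤ u ∧ u ≤ v + 1 := fun u hu => (hσ v hv u hu).of_sm_le (hmin u hu)
  have hinj : Set.InjOn sm (σ : Set (V n)) := fun u hu u' hu' h => (hσ u hu u' hu').eq_of_sm h
  have himg : σ.image sm = Finset.Icc (sm v) (sm v + n) := by
    apply Finset.eq_of_subset_of_card_le
    · intro t ht
      rw [mem_image] at ht
      obtain ⟨u, hu, rfl⟩ := ht
      rw [mem_Icc]
      refine ⟨hmin u hu, ?_⟩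
      rw [← sm_add_one]
      exact sm_mono (hb u hu).2
    · rw [Finset.card_image_of_injOn hinj, hc, Int.card_Icc]
      omega
  have hex : ∀ k : ℕ, ∃ u, k ≤ n → u ∈ σ ∧ sm u = sm v + k := by
    intro k
    by_cases hk : k ≤ n
    · have : sm v + k ∈ σ.image sm := by rw [himg, mem_Icc]; omega
      rw [mem_image] at this
      obtain ⟨u, hu, h⟩ := this
      exact ⟨u, fun _ => ⟨hu, h⟩⟩
    · exact ⟨0, fun h => absurd h hk⟩
  choose w hw using hex
  have h0 : w 0 = v := hinj (hw 0 (by omega)).1 hv (by rw [(hw 0 (by omega)).2]; simp)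
  refine ⟨w, fun k hk => (hw k hk).1, fun k hk => by rw [h0, (hw k hk).2], ?_, ?_, ?_⟩
  · intro j k hjk hk
    refine ((hσ _ (hw j (by omega)).1 _ (hw k hk).1).of_sm_le ?_).1
    rw [(hw j (by omega)).2, (hw k hk).2]; omega
  · rw [h0]
    apply sm_eq (hb _ (hw n le_rfl).1).2
    rw [sm_add_one, (hw n le_rfl).2]
  · intro u hu
    have : sm u ∈ σ.image sm := mem_image_of_mem _ hu
    rw [himg, mem_Icc] at this
    refine ⟨(sm u - sm v).toNat, by omega, ?_⟩
    apply hinj hu (hw _ (by omega)).1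
    rw [(hw _ (by omega)).2]; omega

lemma two_completions {n : ℕ} (hn : 1 ≤ n) {τ : Finset (V n)} (hc : τ.card = n) {u : V n}
    (hu : u ∉ τ) (hq : Clq (insert u τ)) :
    ∃ u', u' ≠ u ∧ u' ∉ τ ∧ Clq (insert u' τ) ∧
      ∀ x, x ∉ τ → Clq (insert x τ) → x = u ∨ x = u' := by
  obtain ⟨w, hw, hs, hmono, htop, hall⟩ := enum hq (by rw [card_insert_of_notMem hu, hc])
  obtain ⟨k, hk, huk⟩ := hall u (mem_insert_self _ _)
  have hτ : Clq τ := fun a ha b hb => hq a (mem_insert_of_mem ha) b (mem_insert_of_mem hb)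
  have hwτ : ∀ j ≤ n, j ≠ k → w j ∈ τ := by
    intro j hj hjk
    rcases mem_insert.1 (hw j hj) with h | h
    · exfalso
      have h1 := hs j hj
      have h2 := hs k hk
      rw [h, huk] at h1
      omega
    · exact h
  have hτw : ∀ x ∈ τ, ∃ j ≤ n, j ≠ k ∧ x = w j := by
    intro x hx
    obtain ⟨j, hj, h⟩ := hall x (mem_insert_of_mem hx)
    refine ⟨j, hj, ?_, h⟩
    rintro rfl
    rw [huk, ← h] at hu
    exact hu hx
  have hclq : ∀ x, (∀ j ≤ n, j ≠ k → adj x (w j)) → Clq (insert x τ) := by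
    intro x hx a ha b hb
    rw [mem_insert] at ha hb
    rcases ha with rfl | ha <;> rcases hb with rfl | hb
    · exact adj_self _
    · obtain ⟨j, hj, hjk, rfl⟩ := hτw b hb
      exact hx j hj hjk
    · obtain ⟨j, hj, hjk, rfl⟩ := hτw a ha
      exact (hx j hj hjk).symm
    · exact hτ a ha b hb
  have hadj : ∀ x, Clq (insert x τ) → ∀ j ≤ n, j ≠ k → adj (w j) x := fun x hx j hj hjk =>
    hx _ (mem_insert_of_mem (hwτ j hj hjk)) _ (mem_insert_self _ _)
  have hnot : ∀ x, x ∉ τ → Clq (insert x τ) → ∀ j ≤ n, j ≠ k → sm x ≠ sm (w 0) + j := by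
    intro x hx hx2 j hj hjk h
    have := (hadj x hx2 j hj hjk).eq_of_sm (by rw [h, hs j hj])
    exact hx (this ▸ hwτ j hj hjk)
  have hb0 : ∀ j ≤ n, w n ≤ w j + 1 := by
    intro j hj
    rw [htop]
    exact add_le_add_left (hmono 0 j (by omega) hj) 1
  by_cases hk0 : k = 0
  · subst hk0
    refine ⟨w 1 + 1, ?_, ?_, ?_, ?_⟩
    · intro h
      have := congrArg sm h
      rw [sm_add_one, hs 1 hn, huk] at this
      omega
    · intro h
      obtain ⟨j, hj, hjk, h⟩ := hτw _ h
      have := congrArg sm h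
      rw [sm_add_one, hs 1 hn, hs j hj] at this
      omega
    · apply hclq
      intro j hj hjk
      right
      constructor
      · refine (hmono j n hj le_rfl).trans (hb0 1 hn)
      · exact add_le_add_left (hmono 1 j (by omega) hj) 1
    · intro x hx hx2
      have h1 := hadj x hx2 1 hn (by omega)
      have h2 := hadj x hx2 n le_rfl (by omega)
      by_cases hsx : sm x ≤ sm (w 0)
      · left
        have h3 := (h2.symm.of_sm_le (by rw [hs n le_rfl]; omega)).2
        rw [huk]
        symm
        apply sm_eq _ hsx
        rw [htop] at h3
        intro i
        have := h3 i
        simpa using this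
      · right
        have h4 : sm (w 0) + n < sm x := by
          by_contra h5
          exact hnot x hx hx2 (sm x - sm (w 0)).toNat (by omega) (by omega) (by omega)
        have h3 := (h1.of_sm_le (by rw [hs 1 hn]; omega)).2
        apply sm_eq h3
        rw [sm_add_one, hs 1 hn]; omega
  by_cases hkn : k = n
  · subst hkn
    have hn1 : sm (w (k-1)) = sm (w 0) + k - 1 := by rw [hs (k-1) (by omega)]; omega
    have hsm : sm (w (k-1) - 1) = sm (w 0) - 1 := by
      have := sm_add_one (w (k-1) - 1)
      rw [sub_add_cancel] at this
      omega
    refine ⟨w (k-1) - 1, ?_, ?_, ?_, ?_⟩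
    · intro h
      have := congrArg sm h
      rw [hsm, huk, hs k le_rfl] at this
      omega
    · intro h
      obtain ⟨j, hj, hjk, h⟩ := hτw _ h
      have := congrArg sm h
      rw [hsm, hs j hj] at this
      omega
    · apply hclq
      intro j hj hjk
      left
      constructor
      · rw [sub_le_iff_le_add]
        refine (hmono (k-1) k (by omega) le_rfl).trans (hb0 j hj)
      · rw [sub_add_cancel]
        exact hmono j (k-1) (by omega) (by omega)
    · intro x hx hx2
      have h1 := hadj x hx2 (k-1) (by omega) (by omega)
      have h2 := hadj x hx2 0 (by omega) (by omega)
      by_cases hsx : sm (w 0) + k ≤ sm x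
      · left
        have h3 := (h2.of_sm_le (by omega)).2
        rw [huk, htop]
        apply sm_eq h3
        rw [sm_add_one]; omega
      · right
        have h4 : sm x < sm (w 0) := by
          by_contra h5
          exact hnot x hx hx2 (sm x - sm (w 0)).toNat (by omega) (by omega) (by omega)
        have h3 := (h1.symm.of_sm_le (by omega)).2
        symm
        apply sm_eq
        · rw [sub_le_iff_le_add]; exact h3
        · omega
  · have hk1 : 1 ≤ k := by omega
    have hkn' : k + 1 ≤ n := by omega
    have sA : sm (w (k-1)) = sm (w 0) + k - 1 := by rw [hs (k-1) (by omega)]; omega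
    have sB : sm (w k) = sm (w 0) + k := hs k hk
    have sC : sm (w (k+1)) = sm (w 0) + k + 1 := by rw [hs (k+1) (by omega)]; push_cast; ring
    have lAB : w (k-1) ≤ w k := hmono _ _ (by omega) hk
    have lBC : w k ≤ w (k+1) := hmono _ _ (by omega) hkn'
    have lCA : w (k+1) ≤ w (k-1) + 1 := (hmono (k+1) n hkn' le_rfl).trans (hb0 (k-1) (by omega))
    obtain ⟨b, hb⟩ := unit_vec (d := w k - w (k-1)) (by rw [sub_nonneg]; exact lAB)
      (by rw [sm_sub]; omega)
    have hsu' : sm (w (k-1) + w (k+1) - w k) = sm (w 0) + k := by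
      rw [sm_sub, sm_add]; omega
    refine ⟨w (k-1) + w (k+1) - w k, ?_, ?_, ?_, ?_⟩
    · intro h
      rw [huk] at h
      have h1 := congrFun h b
      have h2 := congrFun hb b
      have h3 := lCA b
      simp at h1 h2 h3
      omega
    · intro h
      obtain ⟨j, hj, hjk, h⟩ := hτw _ h
      have := congrArg sm h
      rw [hsu', hs j hj] at this
      omega
    · apply hclq
      intro j hj hjk
      have l1 : w (k-1) ≤ w (k-1) + w (k+1) - w k := fun i => by
        have h : w k i ≤ w (k+1) i := lBC i
        simp only [Pi.sub_apply, Pi.add_apply]; omega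
      have l2 : w (k-1) + w (k+1) - w k ≤ w (k+1) := fun i => by
        have h : w (k-1) i ≤ w k i := lAB i
        simp only [Pi.sub_apply, Pi.add_apply]; omega
      by_cases hjk' : j < k
      · right
        exact ⟨(hmono j (k-1) (by omega) (by omega)).trans l1,
          (l2.trans (hmono _ n hkn' le_rfl)).trans (hb0 j hj)⟩
      · left
        refine ⟨l2.trans (hmono (k+1) j (by omega) hj), ?_⟩
        refine ((hmono j n hj le_rfl).trans (hb0 (k-1) (by omega))).trans ?_
        exact add_le_add_left l1 1
    · intro x hx hx2
      have h1 := hadj x hx2 0 (by omega) (Ne.symm hk0)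
      have h2 := hadj x hx2 n le_rfl (Ne.symm hkn)
      have hxs : sm (w 0) ≤ sm x ∧ sm x ≤ sm (w 0) + n := by
        by_contra hcon
        have hx0 : x ≤ w 0 ∨ w n ≤ x := by
          by_cases h3 : sm x ≤ sm (w 0)
          · left; exact (h1.symm.of_sm_le h3).1
          · right; exact (h2.of_sm_le (by rw [hs n le_rfl]; omega)).1
        rcases hx0 with h3 | h3
        · have h4 := (h2.symm.of_sm_le (by have := sm_mono h3; rw [hs n le_rfl]; omega)).2
          rw [htop] at h4
          have h5 : w 0 ≤ x := fun i => by simpa using h4 i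
          have : x = w 0 := le_antisymm h3 h5
          rw [this] at hcon
          omega
        · have h4 := (h1.of_sm_le (by have := sm_mono h3; rw [hs n le_rfl] at this; omega)).2
          rw [← htop] at h4
          have : x = w n := le_antisymm h4 h3
          rw [this, hs n le_rfl] at hcon
          omega
      have hsx : sm x = sm (w 0) + k := by
        by_contra h3
        exact hnot x hx hx2 (sm x - sm (w 0)).toNat (by omega) (by omega) (by omega)
      have lAx : w (k-1) ≤ x := ((hadj x hx2 (k-1) (by omega) (by omega)).of_sm_le (by omega)).1
      have lxC : x ≤ w (k+1) := ((hadj x hx2 (k+1) (by omega) (by omega)).symm.of_sm_le (by omega)).1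
      obtain ⟨a, ha⟩ := unit_vec (d := x - w (k-1)) (by rw [sub_nonneg]; exact lAx)
        (by rw [sm_sub]; omega)
      by_cases hab : a = b
      · left
        rw [huk]
        rw [hab, ← hb] at ha
        exact sub_left_injective ha
      · right
        have : x + w k - w (k-1) ≤ w (k+1) := by
          intro i
          have e1 := congrFun ha i
          have e2 := congrFun hb i
          have e3 := lxC i
          have e4 := lBC i
          simp only [Pi.sub_apply, Pi.add_apply] at *
          by_cases hi : i = a
          · subst hi
            rw [Pi.single_eq_of_ne hab] at e2
            omega
          · rw [Pi.single_eq_of_ne hi] at e1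
            omega
        have h3 := sm_eq this (by rw [sm_sub, sm_add]; omega)
        rw [← h3]
        abel

end
end VC

namespace VC
open Finset Classical

noncomputable section

def W {n : ℕ} (v : V n) (r : Equiv.Perm (Fin n)) (k : ℕ) : V n :=
  fun i => v i + if (r i).val < k then 1 else 0

def S {n : ℕ} (v : V n) (r : Equiv.Perm (Fin n)) : Finset (V n) := (range (n+1)).image (W v r)

lemma W_mono {n : ℕ} (v : V n) (r : Equiv.Perm (Fin n)) {j k : ℕ} (h : j ≤ k) :
    W v r j ≤ W v r k := by
  intro i
  simp only [W]
  split_ifs <;> omega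

lemma W_le {n : ℕ} (v : V n) (r : Equiv.Perm (Fin n)) (k : ℕ) : W v r k ≤ v + 1 := by
  intro i
  simp only [W, Pi.add_apply, Pi.one_apply]
  split_ifs <;> omega

lemma le_W {n : ℕ} (v : V n) (r : Equiv.Perm (Fin n)) (k : ℕ) : v ≤ W v r k := by
  intro i
  simp only [W]
  split_ifs <;> omega

lemma W_inj {n : ℕ} (v : V n) (r : Equiv.Perm (Fin n)) : Set.InjOn (W v r) (range (n+1)) := by
  have key : ∀ j k, j < k → k ≤ n → W v r j ≠ W v r k := by
    intro j k hjk hk h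
    have := congrFun h (r.symm ⟨j, by omega⟩)
    simp [W, hjk] at this
  intro j hj k hk h
  simp at hj hk
  rcases lt_trichotomy j k with h1 | h1 | h1
  · exact absurd h (key j k h1 (by omega))
  · exact h1
  · exact absurd h.symm (key k j h1 (by omega))

lemma S_card {n : ℕ} (v : V n) (r : Equiv.Perm (Fin n)) : (S v r).card = n + 1 := by
  rw [S, card_image_of_injOn (W_inj v r), card_range]

lemma S_clq {n : ℕ} (v : V n) (r : Equiv.Perm (Fin n)) : Clq (S v r) := by
  have key : ∀ j k, j ≤ k → adj (W v r j) (W v r k) := by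
    intro j k hjk
    exact Or.inl ⟨W_mono v r hjk, (W_le v r k).trans (add_le_add_left (le_W v r j) 1)⟩
  intro a ha b hb
  simp only [S, mem_image] at ha hb
  obtain ⟨j, _, rfl⟩ := ha
  obtain ⟨k, _, rfl⟩ := hb
  rcases le_total j k with h | h
  · exact key j k h
  · exact (key k j h).symm

lemma S_box {n : ℕ} (v : V n) (r : Equiv.Perm (Fin n)) : ∀ w ∈ S v r, v ≤ w ∧ w ≤ v + 1 := by
  intro w hw
  simp only [S, mem_image] at hw
  obtain ⟨j, _, rfl⟩ := hw
  exact ⟨le_W _ _ _, W_le _ _ _⟩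

lemma exists_S {n : ℕ} {σ : Finset (V n)} (hσ : Clq σ) (hc : σ.card = n + 1) :
    ∃ v r, σ = S v r ∧ v ∈ σ ∧ v + 1 ∈ σ := by
  obtain ⟨w, hw, hs, hmono, htop, hall⟩ := enum hσ hc
  have hex : ∀ k : Fin n, ∃ a, w (k+1) - w k = Pi.single a 1 := by
    intro k
    apply unit_vec
    · rw [sub_nonneg]; exact hmono _ _ (by omega) (by omega)
    · rw [sm_sub, hs (k+1) (by omega), hs k (by omega)]; push_cast; ring
  choose p hp using hex
  have hsum : ∀ k, k ≤ n → ∀ i, w k i = w 0 i + ∑ l ∈ univ.filter (fun l : Fin n => l.val < k),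
      (if p l = i then 1 else 0) := by
    intro k
    induction k with
    | zero => intro _ i; simp
    | succ k ih =>
      intro hk i
      have e : univ.filter (fun l : Fin n => l.val < k + 1) =
          insert ⟨k, by omega⟩ (univ.filter (fun l : Fin n => l.val < k)) := by
        ext l; simp [Fin.ext_iff]; omega
      rw [e, sum_insert (by simp)]
      have h1 := congrFun (hp ⟨k, by omega⟩) i
      have h2 := ih (by omega) i
      simp only [Pi.sub_apply, Pi.single_apply] at h1
      simp only [eq_comm (b := i)] at *
      omega
  have hsurj : Function.Surjective p := by
    intro i
    by_contra! hcon
    have h1 := hsum n le_rfl i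
    rw [htop, sum_eq_zero (fun l _ => by rw [if_neg (hcon l)])] at h1
    simp at h1
  have hbij : Function.Bijective p := ⟨Finite.injective_iff_surjective.2 hsurj, hsurj⟩
  set r := (Equiv.ofBijective p hbij).symm with hr
  have hpr : ∀ i, p (r i) = i := fun i => Equiv.ofBijective_apply_symm_apply p hbij i
  have hW : ∀ k ≤ n, w k = W (w 0) r k := by
    intro k hk
    funext i
    rw [hsum k hk i, W]
    congr 1
    have : ∀ l, p l = i ↔ l = r i := by
      intro l
      constructor
      · intro h; apply hbij.1; rw [hpr, h]
      · rintro rfl; exact hpr i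
    simp only [this]
    rw [sum_ite_eq']
    simp
  refine ⟨w 0, r, ?_, hw 0 (by omega), htop ▸ hw n le_rfl⟩
  ext u
  simp only [S, mem_image, mem_range]
  constructor
  · intro hu
    obtain ⟨k, hk, rfl⟩ := hall u hu
    exact ⟨k, by omega, (hW k hk).symm⟩
  · rintro ⟨k, hk, rfl⟩
    rw [← hW k (by omega)]
    exact hw k (by omega)

/-- invariance under exchanges -/
def Inv {n : ℕ} {α : Type*} (lo hi : V n) (a : Finset (V n) → α) : Prop :=
  ∀ (τ : Finset (V n)) (u u' : V n), τ.card = n → u ∉ τ → u' ∉ τ → Clq (insert u τ) →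
    Clq (insert u' τ) → (∀ x ∈ insert u τ, lo ≤ x ∧ x ≤ hi) →
    (∀ x ∈ insert u' τ, lo ≤ x ∧ x ≤ hi) → a (insert u τ) = a (insert u' τ)

lemma S_box' {n : ℕ} {lo hi v : V n} (r : Equiv.Perm (Fin n)) (h1 : lo ≤ v) (h2 : v + 1 ≤ hi) :
    ∀ w ∈ S v r, lo ≤ w ∧ w ≤ hi := fun w hw =>
  ⟨h1.trans (S_box v r w hw).1, (S_box v r w hw).2.trans h2⟩

lemma inv_swap {n : ℕ} {α : Type*} {lo hi : V n} {a : Finset (V n) → α} (ha : Inv lo hi a)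
    {v : V n} (h1 : lo ≤ v) (h2 : v + 1 ≤ hi) (r r' : Equiv.Perm (Fin n)) (k : ℕ) (hk : k ≤ n)
    (h : ∀ j, j ≤ n → j ≠ k → W v r j = W v r' j) : a (S v r) = a (S v r') := by
  have hk' : k ∈ range (n+1) := by simp; omega
  have e1 : S v r = insert (W v r k) (((range (n+1)).erase k).image (W v r)) := by
    rw [← image_insert, insert_erase hk', S]
  have e2 : S v r' = insert (W v r' k) (((range (n+1)).erase k).image (W v r)) := by
    have : ((range (n+1)).erase k).image (W v r) = ((range (n+1)).erase k).image (W v r') := by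
      apply image_congr
      intro j hj
      simp at hj
      exact h j (by omega) hj.2
    rw [this, ← image_insert, insert_erase hk', S]
  have hcard : (((range (n+1)).erase k).image (W v r)).card = n := by
    rw [card_image_of_injOn ((W_inj v r).mono (by simp)), card_erase_of_mem hk', card_range]
    omega
  have c1 := S_card v r
  have c2 := S_card v r'
  have q1 := S_clq v r
  have q2 := S_clq v r'
  have b1 := S_box' (hi := hi) r h1 h2
  have b2 := S_box' (hi := hi) r' h1 h2
  rw [e1] at c1 q1 b1
  rw [e2] at c2 q2 b2
  rw [e1, e2]
  refine ha _ _ _ hcard ?_ ?_ q1 q2 b1 b2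
  · intro h; rw [insert_eq_of_mem h] at c1; omega
  · intro h; rw [insert_eq_of_mem h] at c2; omega

lemma inv_perm {n : ℕ} {α : Type*} {lo hi : V n} {a : Finset (V n) → α} (ha : Inv lo hi a)
    {v : V n} (h1 : lo ≤ v) (h2 : v + 1 ≤ hi) (r r' : Equiv.Perm (Fin n)) :
    a (S v r) = a (S v r') := by
  cases n with
  | zero => congr 2; ext i; exact i.elim0
  | succ m =>
    have key : ∀ g : Equiv.Perm (Fin (m+1)), ∀ r, a (S v (g * r)) = a (S v r) := by
      intro g
      have hg : g ∈ Submonoid.closure (Set.range fun i : Fin m => Equiv.swap i.castSucc i.succ) := by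
        rw [Equiv.Perm.mclosure_swap_castSucc_succ]; trivial
      induction hg using Submonoid.closure_induction with
      | mem g hg =>
        obtain ⟨i, rfl⟩ := hg
        intro r
        symm
        apply inv_swap ha h1 h2 r _ (i.val+1) (by omega)
        intro j hj hji
        funext x
        have hval : ((Equiv.swap i.castSucc i.succ (r x)).val < j ↔ (r x).val < j) := by
          rw [Equiv.swap_apply_def]
          split_ifs with h h' <;> simp_all [Fin.ext_iff] <;> omega
        simp only [W, Equiv.Perm.mul_apply]
        simp only [hval]
      | one => intro r; simp
      | mul x y _ _ hx hy => intro r; rw [mul_assoc, hx, hy]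
    have := key (r' * r⁻¹) r
    simpa using this.symm

lemma inv_shift {n : ℕ} {α : Type*} {lo hi : V n} {a : Finset (V n) → α} (ha : Inv lo hi a)
    {v : V n} (k : Fin n) (h1 : lo ≤ v) (h2 : v + Pi.single k 1 + 1 ≤ hi) (r₁ r₂ : Equiv.Perm (Fin n)) :
    a (S v r₁) = a (S (v + Pi.single k 1) r₂) := by
  have hpos : (0 : V n) ≤ Pi.single k 1 := by
    intro i; by_cases h : i = k
    · subst h; simp
    · simp [Pi.single_eq_of_ne h]
  have h1' : lo ≤ v + Pi.single k 1 := h1.trans (by simpa using hpos)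
  have h2' : v + 1 ≤ hi := by
    refine le_trans (fun i => ?_) h2
    have := hpos i
    simp only [Pi.add_apply, Pi.zero_apply] at *
    omega
  have hn : 0 < n := k.pos
  set r : Equiv.Perm (Fin n) := Equiv.swap k ⟨0, hn⟩ with hr
  have hrk : (r k).val = 0 := by simp [hr]
  have hrk' : ∀ i, i ≠ k → 0 < (r i).val := by
    intro i hi
    by_contra h
    exact hi (r.injective (Fin.ext (by omega)))
  set f : Fin n → Fin n := fun i => if i = k then ⟨n-1, by omega⟩ else ⟨(r i).val - 1, by omega⟩
    with hf
  have hfinj : Function.Injective f := by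
    intro i j hij
    have hr' : ∀ i j, (r i).val = (r j).val → i = j := fun i j h => r.injective (Fin.ext h)
    have b1 := (r i).isLt
    have b2 := (r j).isLt
    simp only [hf] at hij
    by_cases hi : i = k <;> by_cases hj : j = k
    · rw [hi, hj]
    · have := hrk' j hj
      simp [hi, hj] at hij; omega
    · have := hrk' i hi
      simp [hi, hj] at hij; omega
    · have := hrk' i hi
      have := hrk' j hj
      simp [hi, hj] at hij
      exact hr' i j (by omega)
  set r' : Equiv.Perm (Fin n) := Equiv.ofBijective f ⟨hfinj, Finite.injective_iff_surjective.1 hfinj⟩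
  have hr'f : ∀ i, r' i = f i := fun i => rfl
  have hWW : ∀ j < n, W (v + Pi.single k 1) r' j = W v r (j+1) := by
    intro j hj
    funext i
    simp only [W, hr'f, hf, Pi.add_apply]
    by_cases hi : i = k
    · subst hi
      simp [hrk]; omega
    · have := hrk' i hi
      simp only [hi, if_false, Pi.single_eq_of_ne hi, add_zero]
      congr 1
      have : (r i).val - 1 < j ↔ (r i).val < j + 1 := by omega
      simp [this]
  rw [inv_perm ha h1 h2' r₁ r, inv_perm ha h1' h2 r₂ r']
  set τ := (range n).image (fun j => W v r (j+1)) with hτ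
  have e1 : S v r = insert (W v r 0) τ := by
    rw [S, range_add_one', image_insert, hτ]
    congr 1
    ext x; simp
    rfl
  have e2 : S (v + Pi.single k 1) r' = insert (W (v + Pi.single k 1) r' n) τ := by
    rw [S, range_add_one, image_insert]
    congr 1
    apply image_congr
    intro j hj
    simp at hj
    exact hWW j hj
  have hcard : τ.card ≤ n := by
    refine card_image_le.trans ?_
    simp
  have c1 := S_card v r
  have c2 := S_card (v + Pi.single k 1) r'
  have q1 := S_clq v r
  have q2 := S_clq (v + Pi.single k 1) r'
  have b1 := S_box' (hi := hi) r h1 h2'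
  have b2 := S_box' (hi := hi) r' h1' h2
  rw [e1] at c1 q1 b1
  rw [e2] at c2 q2 b2
  rw [e1, e2]
  refine ha _ _ _ ?_ ?_ ?_ q1 q2 b1 b2
  · have := card_insert_le (W v r 0) τ; omega
  · intro h; rw [insert_eq_of_mem h] at c1; omega
  · intro h; rw [insert_eq_of_mem h] at c2; omega

lemma inv_const {n : ℕ} {α : Type*} {lo hi : V n} {a : Finset (V n) → α} (ha : Inv lo hi a)
    {σ σ' : Finset (V n)} (hq : Clq σ) (hq' : Clq σ') (hc : σ.card = n + 1) (hc' : σ'.card = n + 1)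
    (hb : ∀ x ∈ σ, lo ≤ x ∧ x ≤ hi) (hb' : ∀ x ∈ σ', lo ≤ x ∧ x ≤ hi) : a σ = a σ' := by
  have key : ∀ (m : ℕ) (v : V n) (r : Equiv.Perm (Fin n)), lo ≤ v → v + 1 ≤ hi →
      sm v = sm lo + m → a (S v r) = a (S lo 1) := by
    intro m
    induction m with
    | zero =>
      intro v r h1 h2 h3
      have : lo = v := sm_eq h1 (by omega)
      subst this
      exact inv_perm ha h1 h2 _ _
    | succ m ih =>
      intro v r h1 h2 h3
      have : ∃ k, lo k < v k := by
        by_contra! hcon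
        have : sm v ≤ sm lo := sm_mono hcon
        omega
      obtain ⟨k, hk⟩ := this
      have hv : v - Pi.single k 1 + Pi.single k 1 = v := sub_add_cancel _ _
      have hsm : sm (v - Pi.single k 1) = sm v - 1 := by
        rw [sm_sub]; simp [sm]
      have hlo : lo ≤ v - Pi.single k 1 := by
        intro i
        by_cases hi : i = k
        · subst hi; simp; omega
        · simp [Pi.single_eq_of_ne hi]; exact h1 i
      have := inv_shift ha (v := v - Pi.single k 1) k hlo (by rw [hv]; exact h2) 1 r
      rw [hv] at this
      rw [← this]
      apply ih _ _ hlo _ (by rw [hsm, h3]; push_cast; ring)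
      refine le_trans (fun i => ?_) h2
      by_cases hi : i = k
      · subst hi; simp
      · simp [Pi.single_eq_of_ne hi]
  obtain ⟨v, r, rfl, hv, hv1⟩ := exists_S hq hc
  obtain ⟨v', r', rfl, hv', hv1'⟩ := exists_S hq' hc'
  have p1 := sm_mono (hb v hv).1
  have p2 := sm_mono (hb' v' hv').1
  rw [key (sm v - sm lo).toNat v r (hb v hv).1 (hb _ hv1).2 (by omega),
    key (sm v' - sm lo).toNat v' r' (hb' v' hv').1 (hb' _ hv1').2 (by omega)]

lemma rounding (n : ℕ) : ∃ rd : (Fin n → ℝ) → V n, (∀ x i, |x i - rd x i| ≤ 1) ∧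
    ∀ x y, (∀ i, |x i - y i| < 1 / (2 * ((n:ℝ) + 1))) → adj (rd x) (rd y) := by
  have hn : (0 : ℝ) < n + 1 := by positivity
  have hs : ∀ x : Fin n → ℝ, ∃ s : ℝ, 0 ≤ s ∧ s ≤ 1 ∧ ∀ i, ∀ m : ℤ,
      1 / (2 * ((n:ℝ) + 1)) ≤ |x i + s - m| := by
    intro x
    by_contra! hcon
    have h1 : ∀ j : Fin (n+1), ∃ i, ∃ m : ℤ, |x i + (j.val : ℝ) / (n+1) - m| < 1 / (2 * ((n:ℝ)+1)) := by
      intro j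
      apply hcon
      · positivity
      · rw [div_le_one hn]; have := j.isLt; exact_mod_cast this.le
    choose i m him using h1
    have hinj : Function.Injective i := by
      intro j j' hjj
      have a1 := him j
      have a2 := him j'
      rw [hjj] at a1
      have a3 : |((j.val : ℝ) / (n+1) - m j) - ((j'.val : ℝ) / (n+1) - m j')| < 1 / (n+1) := by
        have e : ((j.val : ℝ) / (n+1) - m j) - ((j'.val : ℝ) / (n+1) - m j') =
          (x (i j') + (j.val : ℝ) / (n+1) - m j) - (x (i j') + (j'.val : ℝ) / (n+1) - m j') := by ring
        rw [e]
        refine (abs_sub _ _).trans_lt ?_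
        have : (1 : ℝ) / (n+1) = 1 / (2 * ((n:ℝ)+1)) + 1 / (2 * ((n:ℝ)+1)) := by field_simp; norm_num
        linarith
      have a4 : |(((j.val : ℤ) - j'.val - (n+1) * (m j - m j') : ℤ) : ℝ)| < 1 := by
        have e : (((j.val : ℤ) - j'.val - (n+1) * (m j - m j') : ℤ) : ℝ) =
          (n+1) * (((j.val : ℝ) / (n+1) - m j) - ((j'.val : ℝ) / (n+1) - m j')) := by
          push_cast; field_simp; ring
        rw [e, abs_mul, abs_of_pos hn]
        calc _ < ((n:ℝ)+1) * (1 / (n+1)) := by gcongr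
          _ = 1 := by field_simp
      have a5 : |((j.val : ℤ) - j'.val - (n+1) * (m j - m j') : ℤ)| < 1 := by exact_mod_cast a4
      rw [Int.abs_lt_one_iff] at a5
      have b1 := j.isLt
      have b2 := j'.isLt
      ext
      have : m j - m j' = 0 := by
        by_contra h
        rcases lt_or_gt_of_ne h with h | h
        · have : ((n:ℤ)+1) * (m j - m j') ≤ (n+1) * (-1) := by
            apply mul_le_mul_of_nonneg_left _ (by positivity); omega
          omega
        · have : ((n:ℤ)+1) * 1 ≤ (n+1) * (m j - m j') := by
            apply mul_le_mul_of_nonneg_left _ (by positivity); omega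
          omega
      rw [this] at a5
      omega
    have := Fintype.card_le_of_injective i hinj
    simp at this
  choose s s0 s1 hs using hs
  refine ⟨fun x i => ⌊x i + s x⌋, ?_, ?_⟩
  · intro x i
    have h1 := Int.floor_le (x i + s x)
    have h2 := Int.lt_floor_add_one (x i + s x)
    have := s0 x
    have := s1 x
    rw [abs_le]
    constructor <;> linarith
  · have key : ∀ x y, (∀ i, |x i - y i| < 1 / (2 * ((n:ℝ) + 1))) → s x ≤ s y →
        adj (fun i => ⌊x i + s x⌋) (fun i => ⌊y i + s y⌋) := by
      intro x y hxy hsxy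
      have e : ∀ i, ⌊x i + s x⌋ = ⌊y i + s x⌋ := by
        intro i
        by_contra hne
        have hxy := abs_lt.1 (hxy i)
        rcases lt_or_gt_of_ne hne with h | h
        · have g := hs x i ⌊y i + s x⌋
          have f1 := Int.floor_lt.1 h
          have f2 := Int.floor_le (y i + s x)
          rw [abs_of_neg (by linarith)] at g
          linarith
        · have g := hs x i ⌊x i + s x⌋
          have f1 := Int.floor_lt.1 h
          have f2 := Int.floor_le (x i + s x)
          rw [abs_of_nonneg (by linarith)] at g
          linarith
      left
      constructor
      · intro i
        simp only
        rw [e]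
        apply Int.floor_le_floor
        linarith
      · intro i
        simp only [Pi.add_apply, Pi.one_apply]
        rw [e, ← Int.floor_add_one]
        apply Int.floor_le_floor
        have := s0 x
        have := s1 y
        linarith
    intro x y hxy
    rcases le_total (s x) (s y) with h | h
    · exact key x y hxy h
    · exact (key y x (fun i => by rw [abs_sub_comm]; exact hxy i) h).symm

end
end VC

namespace VC
open Finset Classical

noncomputable section

def U {n : ℕ} {R : Type*} [Zero R] (u : Fin n → R) (k : ℕ) : R :=
  if h : 1 ≤ k ∧ k ≤ n then u ⟨k - 1, by omega⟩ else 0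

def bb {n : ℕ} {R : Type*} [Ring R] (u : Fin n → R) (k : ℕ) : R := U u k - U u (k + 1)

lemma U_zero {n : ℕ} {R : Type*} [Zero R] (u : Fin n → R) : U u 0 = 0 := by simp [U]

lemma U_last {n : ℕ} {R : Type*} [Zero R] (u : Fin n → R) : U u (n + 1) = 0 := by simp [U]

lemma U_succ {n : ℕ} {R : Type*} [Zero R] (u : Fin n → R) (i : Fin n) : U u (i.val + 1) = u i := by
  simp [U]

lemma U_sub {n : ℕ} {R : Type*} [Ring R] (u v : Fin n → R) (k : ℕ) :
    U (u - v) k = U u k - U v k := by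
  simp only [U]; split_ifs <;> simp

lemma bb_sub {n : ℕ} {R : Type*} [Ring R] (u v : Fin n → R) (k : ℕ) :
    bb (u - v) k = bb u k - bb v k := by
  simp only [bb, U_sub]; abel

lemma U_smul {n : ℕ} (h : ℝ) (u : Fin n → ℝ) (k : ℕ) : U (h • u) k = h * U u k := by
  simp only [U]; split_ifs <;> simp

lemma bb_smul {n : ℕ} (h : ℝ) (u : Fin n → ℝ) (k : ℕ) : bb (h • u) k = h * bb u k := by
  simp only [bb, U_smul]; ring

lemma U_cast {n : ℕ} (u : V n) (k : ℕ) : U (fun i => (u i : ℝ)) k = ((U u k : ℤ) : ℝ) := by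
  simp only [U]; split_ifs <;> simp

lemma bb_cast {n : ℕ} (u : V n) (k : ℕ) : bb (fun i => (u i : ℝ)) k = ((bb u k : ℤ) : ℝ) := by
  simp only [bb, U_cast]; push_cast; ring

lemma bb_psum {n : ℕ} {R : Type*} [Ring R] (u : Fin n → R) (k : ℕ) :
    ∑ i ∈ range k, bb u i = - U u k := by
  have := Finset.sum_range_sub' (U u) k
  rw [U_zero, zero_sub] at this
  exact this

lemma bb_sum {n : ℕ} {R : Type*} [Ring R] (u : Fin n → R) :
    ∑ i ∈ range (n + 1), bb u i = 0 := by
  rw [bb_psum, U_last, neg_zero]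

lemma exists_ell {n : ℕ} (u : Fin n → ℝ) : ∃ i : Fin (n + 1), 0 ≤ bb u i := by
  by_contra! h
  have : ∑ i ∈ range (n + 1), bb u i < 0 := by
    apply sum_neg
    · intro i hi
      exact h ⟨i, by simpa using hi⟩
    · simp
  rw [bb_sum] at this
  exact lt_irrefl _ this

def ell {n : ℕ} (u : Fin n → ℝ) : Fin (n + 1) := (exists_ell u).choose

lemma ell_spec {n : ℕ} (u : Fin n → ℝ) : 0 ≤ bb u (ell u) := (exists_ell u).choose_spec

lemma U_abs {n : ℕ} (u : Fin n → ℝ) (k : ℕ) : |U u k| ≤ ‖u‖ := by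
  simp only [U]
  split_ifs
  · rw [← Real.norm_eq_abs]; exact norm_le_pi_norm u _
  · simp

lemma bb_abs {n : ℕ} (u : Fin n → ℝ) (k : ℕ) : |bb u k| ≤ 2 * ‖u‖ := by
  have h1 := U_abs u k
  have h2 := U_abs u (k + 1)
  have := abs_sub (U u k) (U u (k + 1))
  simp only [bb]; linarith

lemma norm_of_bb {n : ℕ} (u : Fin n → ℝ) (a : ℝ) (ha : 0 ≤ a) (h : ∀ i : Fin (n + 1), - a ≤ bb u i) :
    ‖u‖ ≤ (n + 1) * a := by
  rw [pi_norm_le_iff_of_nonneg (by positivity)]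
  intro i
  have h' : ∀ i ∈ range (n + 1), - a ≤ bb u i := fun i hi => h ⟨i, by simpa using hi⟩
  have e1 := bb_psum u (i.val + 1)
  rw [U_succ] at e1
  have hi : i.val + 1 ≤ n + 1 := by omega
  have e2 : ∑ j ∈ Ico (i.val + 1) (n + 1), bb u j = u i := by
    rw [Finset.sum_Ico_eq_sub _ hi, bb_sum, e1]; ring
  have f1 := card_nsmul_le_sum (range (i.val + 1)) (fun j => bb u j) (-a)
    (fun j hj => h' j (by simp at *; omega))
  have f2 := card_nsmul_le_sum (Ico (i.val + 1) (n + 1)) (fun j => bb u j) (-a)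
    (fun j hj => h' j (by simp at *; omega))
  simp only [nsmul_eq_mul, card_range, Nat.card_Ico] at f1 f2
  have g1 : ((i.val + 1 : ℕ) : ℝ) ≤ n + 1 := by exact_mod_cast hi
  have g2 : ((n + 1 - (i.val + 1) : ℕ) : ℝ) ≤ n + 1 := by
    have : n + 1 - (i.val + 1) ≤ n + 1 := by omega
    exact_mod_cast this
  have k1 := mul_le_mul_of_nonneg_right g1 ha
  have k2 := mul_le_mul_of_nonneg_right g2 ha
  rw [Real.norm_eq_abs, abs_le]
  constructor <;> nlinarith

variable {M : Type*} [MetricSpace M] {n : ℕ}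

def lab (e : OpenPartialHomeomorph M (Fin n → ℝ)) (c : Fin n → ℝ) (y : M) : Option (Fin (n + 1)) :=
  if y ∈ e.source ∧ ‖e y‖ ≤ 4 then some (ell (e y - c)) else none

lemma lab_some {e : OpenPartialHomeomorph M (Fin n → ℝ)} {c : Fin n → ℝ} {y : M} {i : Fin (n + 1)}
    (h : lab e c y = some i) : y ∈ e.source ∧ ‖e y‖ ≤ 4 ∧ 0 ≤ bb (e y - c) i := by
  unfold lab at h
  split_ifs at h with h1
  simp only [Option.some.injEq] at h
  exact ⟨h1.1, h1.2, h ▸ ell_spec _⟩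

lemma lemE (e : OpenPartialHomeomorph M (Fin n → ℝ)) (he : Metric.closedBall 0 4 ⊆ e.target)
    {κ : ℝ} (hκ : 0 < κ) : ∃ r > 0, ∀ c, ‖c‖ ≤ 4 → ∀ y, dist y (e.symm c) < r →
      y ∈ e.source ∧ dist (e y) c < κ := by
  have hK : IsCompact (e.symm '' Metric.closedBall 0 4) :=
    (isCompact_closedBall _ _).image_of_continuousOn (e.continuousOn_symm.mono he)
  have hsub : e.symm '' Metric.closedBall 0 4 ⊆ e.source := by
    rintro _ ⟨c, hc, rfl⟩; exact e.map_target (he hc)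
  have hu := hK.uniformContinuousAt_of_continuousAt e
    (fun a ha => e.continuousAt (hsub ha)) (Metric.dist_mem_uniformity hκ)
  obtain ⟨r1, hr1, h1⟩ := Metric.mem_uniformity_dist.1 hu
  obtain ⟨r2, hr2, h2⟩ := hK.exists_thickening_subset_open e.open_source hsub
  refine ⟨min r1 r2, lt_min hr1 hr2, ?_⟩
  intro c hc y hy
  have hc' : c ∈ Metric.closedBall (0 : Fin n → ℝ) 4 := by simpa using hc
  refine ⟨h2 ?_, ?_⟩
  · rw [Metric.mem_thickening_iff]
    exact ⟨_, ⟨c, hc', rfl⟩, hy.trans_le (min_le_right _ _)⟩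
  · have := h1 (a := e.symm c) (b := y) (by rw [dist_comm]; exact hy.trans_le (min_le_left _ _)) ⟨c, hc', rfl⟩
    simp only [Set.mem_ofPred_eq] at this
    rw [e.right_inv (he hc')] at this
    rwa [dist_comm]

lemma lemE' (e : OpenPartialHomeomorph M (Fin n → ℝ)) (he : Metric.closedBall 0 4 ⊆ e.target)
    {r : ℝ} (hr : 0 < r) : ∃ κ > 0, ∀ c, ‖c‖ ≤ 4 → ∀ u, dist u c < κ →
      u ∈ e.target ∧ dist (e.symm u) (e.symm c) < r := by
  have hK : IsCompact (Metric.closedBall (0 : Fin n → ℝ) 4) := isCompact_closedBall _ _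
  have hu := hK.uniformContinuousAt_of_continuousAt e.symm
    (fun a ha => e.continuousAt_symm (he ha)) (Metric.dist_mem_uniformity hr)
  obtain ⟨r1, hr1, h1⟩ := Metric.mem_uniformity_dist.1 hu
  obtain ⟨r2, hr2, h2⟩ := hK.exists_thickening_subset_open e.open_target he
  refine ⟨min r1 r2, lt_min hr1 hr2, ?_⟩
  intro c hc u hy
  have hc' : c ∈ Metric.closedBall (0 : Fin n → ℝ) 4 := by simpa using hc
  refine ⟨h2 ?_, ?_⟩
  · rw [Metric.mem_thickening_iff]
    exact ⟨_, hc', hy.trans_le (min_le_right _ _)⟩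
  · have := h1 (a := c) (b := u) (by rw [dist_comm]; exact hy.trans_le (min_le_left _ _)) hc'
    rw [dist_comm]
    exact this

lemma lemG (e : OpenPartialHomeomorph M (Fin n → ℝ)) (he : Metric.closedBall 0 4 ⊆ e.target)
    {r : ℝ} (hr : 0 < r) : ∃ η > 0, ∀ c, ‖c‖ ≤ 2 → ∀ S : Set M,
      (∀ x ∈ S, ∀ y ∈ S, dist x y < η) → (∀ i, ∃ y ∈ S, lab e c y = some i) →
      ∀ y ∈ S, dist y (e.symm c) < r ∧ lab e c y ≠ none := by
  obtain ⟨κ', hκ', h'⟩ := lemE' e he hr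
  set m := min κ' 1 with hm
  have hmpos : 0 < m := lt_min hκ' one_pos
  set κ := m / (4 * (n + 1)) with hκ
  have hκpos : 0 < κ := by positivity
  obtain ⟨η, hη, hE⟩ := lemE e he hκpos
  refine ⟨η, hη, ?_⟩
  intro c hc S hS hall s hs
  have key : ∀ i : Fin (n + 1), s ∈ e.source ∧ - (2 * κ) ≤ bb (e s - c) i := by
    intro i
    obtain ⟨y, hy, hl⟩ := hall i
    obtain ⟨h1, h2, h3⟩ := lab_some hl
    have := hE (e y) h2 s (by rw [e.left_inv h1]; exact hS s hs y hy)
    refine ⟨this.1, ?_⟩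
    have h4 := bb_abs (e s - e y) i
    rw [← dist_eq_norm] at h4
    have e1 : bb (e s - c) i = bb (e y - c) i + bb (e s - e y) i := by
      simp only [bb_sub]; ring
    have := abs_le.1 h4
    rw [e1]; linarith [this.1]
  have hnorm := norm_of_bb (e s - c) (2 * κ) (by positivity) (fun i => (key i).2)
  have hval : ((n : ℝ) + 1) * (2 * κ) = m / 2 := by
    rw [hκ]; field_simp; ring
  rw [hval] at hnorm
  have hss := (key 0).1
  have hm1 : m ≤ 1 := min_le_right _ _
  have hm2 : m ≤ κ' := min_le_left _ _
  have hd : dist (e s) c < κ' := by rw [dist_eq_norm]; linarith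
  have h5 := h' c (by linarith) (e s) hd
  rw [e.left_inv hss] at h5
  refine ⟨h5.2, ?_⟩
  have h6 : ‖e s‖ ≤ 4 := by
    have := norm_add_le (e s - c) c
    rw [sub_add_cancel] at this
    linarith
  simp [lab, hss, h6]

lemma lemM1 {X : Type*} (e : OpenPartialHomeomorph M (Fin n → ℝ)) {r η : ℝ} {c : Fin n → ℝ}
    (hG : ∀ S : Set M,
      (∀ x ∈ S, ∀ y ∈ S, dist x y < η) → (∀ i, ∃ y ∈ S, lab e c y = some i) →
      ∀ y ∈ S, dist y (e.symm c) < r ∧ lab e c y ≠ none)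
    (g h : X → M) (z : C X)
    (h1 : ∀ σ ∈ z.support, ∀ x ∈ g '' σ ∪ h '' σ, ∀ y ∈ g '' σ ∪ h '' σ, dist x y < η)
    (h2 : ∀ τ ∈ (bd z).support, ∀ x ∈ g '' τ ∪ h '' τ, ∀ y ∈ g '' τ ∪ h '' τ, dist x y < η)
    (h3 : ∀ τ ∈ (bd z).support, ∃ x ∈ g '' τ ∪ h '' τ, r ≤ dist x (e.symm c)) :
    om (lab e c) (push g z) = om (lab e c) (push h z) := by
  unfold om
  rw [push_push, push_push]
  have key : ∀ σ : Finset X, (∀ i : Fin (n + 1), ∃ x ∈ σ, lab e c (g x) = some i ∨ lab e c (h x) = some i) →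
      ∀ i, ∃ y ∈ g '' σ ∪ h '' σ, lab e c y = some i := by
    intro σ hσ i
    obtain ⟨x, hx, hh⟩ := hσ i
    rcases hh with hh | hh
    · exact ⟨g x, Or.inl ⟨x, hx, rfl⟩, hh⟩
    · exact ⟨h x, Or.inr ⟨x, hx, rfl⟩, hh⟩
  apply om_homotopy
  · intro σ hσ
    by_contra! hcon
    have hcon' : ∀ a, ∃ x ∈ σ, lab e c (g x) = a ∨ lab e c (h x) = a := by
      intro a
      obtain ⟨x, hx, hh⟩ := hcon a
      exact ⟨x, hx, or_iff_not_imp_left.2 hh⟩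
    have := hG _ (h1 σ hσ) (key σ fun i => hcon' (some i))
    obtain ⟨x, hx, hh⟩ := hcon' none
    rcases hh with hh | hh
    · exact (this (g x) (Or.inl ⟨x, hx, rfl⟩)).2 hh
    · exact (this (h x) (Or.inr ⟨x, hx, rfl⟩)).2 hh
  · intro τ hτ
    by_contra! hcon
    have hcon' : ∀ i, ∃ x ∈ τ, lab e c (g x) = some i ∨ lab e c (h x) = some i := by
      intro i
      obtain ⟨x, hx, hh⟩ := hcon (some i) (by rw [mem_LL]; simp)
      exact ⟨x, hx, or_iff_not_imp_left.2 hh⟩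
    have := hG _ (h2 τ hτ) (key τ hcon')
    obtain ⟨x, hx, hh⟩ := h3 τ hτ
    exact absurd (this x hx).1 (not_lt.2 hh)

/-- a rainbow simplex -/
lemma rainbow {X : Type*} {l : X → Option (Fin (n + 1))} {z : C X} (h : om l z ≠ 0) :
    ∃ σ ∈ z.support, ∀ i, ∃ y ∈ σ, l y = some i := by
  obtain ⟨σ, hσ, hh⟩ := exists_of_push_ne h
  refine ⟨σ, hσ, fun i => ?_⟩
  have : (some i : Option (Fin (n + 1))) ∈ l '' σ := by
    rw [hh.2, mem_coe, mem_LL]; simp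
  obtain ⟨y, hy, h⟩ := this
  exact ⟨y, hy, h⟩

end
end VC

namespace VC
open Finset Classical

noncomputable section

variable {n : ℕ}

def pos (h : ℝ) (w : V n) : Fin n → ℝ := h • fun i => (w i : ℝ)

def beta (n : ℕ) : Fin n → ℝ := fun i => 1 - ((i.val : ℝ) + 1) / (n + 1)

def bary (h : ℝ) (v : V n) : Fin n → ℝ := pos h v + h • beta n

lemma bb_beta (k : ℕ) (hk : k ≤ n) :
    bb (beta n) k = 1 / ((n : ℝ) + 1) - if k = 0 then 1 else 0 := by
  have hU : ∀ k, 1 ≤ k → k ≤ n + 1 → U (beta n) k = 1 - (k : ℝ) / (n + 1) := by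
    intro k h1 h2
    rcases Nat.lt_or_ge n k with h | h
    · have : k = n + 1 := by omega
      subst this
      rw [U_last]; push_cast; field_simp; ring
    · obtain ⟨j, rfl⟩ : ∃ j, k = j + 1 := ⟨k - 1, by omega⟩
      have := U_succ (beta n) ⟨j, by omega⟩
      simp only at this
      rw [this, beta]; push_cast; ring
  unfold bb
  rcases Nat.eq_zero_or_pos k with h | h
  · subst h
    rw [U_zero, hU _ (by omega) (by omega)]; simp
  · rw [hU k (by omega) (by omega), hU (k+1) (by omega) (by omega)]
    simp only [show k ≠ 0 by omega, if_false]
    push_cast; field_simp; ring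

lemma bb_pos_sub (h : ℝ) (v w : V n) (k : ℕ) (hk : k ≤ n) :
    bb (pos h w - bary h v) k =
      h * (((bb (w - v) k + if k = 0 then 1 else 0 : ℤ) : ℝ) - 1 / ((n : ℝ) + 1)) := by
  have e : pos h w - bary h v = h • ((fun i => ((w - v) i : ℝ)) - beta n) := by
    funext i; simp [pos, bary]; ring
  rw [e, bb_smul, bb_sub, bb_cast, bb_beta k hk]
  push_cast
  split_ifs <;> ring

lemma label_iff {h : ℝ} (hh : 0 < h) (hn : 1 ≤ n) (v w : V n) (k : ℕ) (hk : k ≤ n) :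
    0 ≤ bb (pos h w - bary h v) k ↔ 1 ≤ bb (w - v) k + if k = 0 then 1 else 0 := by
  rw [bb_pos_sub h v w k hk, mul_nonneg_iff_of_pos_left hh]
  generalize bb (w - v) k + (if k = 0 then 1 else 0) = a
  have h1 : (0 : ℝ) < 1 / ((n : ℝ) + 1) := by positivity
  have h2 : 1 / ((n : ℝ) + 1) ≤ 1 := by
    rw [div_le_one (by positivity)]; linarith [show (0:ℝ) ≤ n by positivity]
  constructor
  · intro h
    have : (0 : ℝ) < a := by linarith
    have : 0 < a := by exact_mod_cast this
    omega
  · intro h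
    have : (1 : ℝ) ≤ a := by exact_mod_cast h
    linarith

lemma bb_W (v : V n) (k i : ℕ) (hk : k ≤ n) (hi : i ≤ n) :
    bb (W v 1 k - v) i + (if i = 0 then 1 else 0) = if i = k then 1 else 0 := by
  have hU : ∀ j, U (W v 1 k - v) j = if 1 ≤ j ∧ j ≤ n ∧ j ≤ k then 1 else 0 := by
    intro j
    unfold U
    by_cases h : 1 ≤ j ∧ j ≤ n
    · rw [dif_pos h]
      have : j - 1 < k ↔ j ≤ k := by omega
      simp [W, h, this]
    · rw [dif_neg h, if_neg (by omega)]
  simp only [bb, hU]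
  split_ifs <;> omega

lemma bb_adj {w w' : V n} (h : adj w w') (i : ℕ) : bb w i ≤ bb w' i + 1 := by
  have key : ∀ k, U w k - U w' k = U (w - w') k := fun k => (U_sub _ _ _).symm
  have hU : (∀ k, 0 ≤ U (w - w') k ∧ U (w - w') k ≤ 1) ∨ (∀ k, -1 ≤ U (w - w') k ∧ U (w - w') k ≤ 0) := by
    rcases h with h | h
    · right
      intro k
      simp only [U]
      split_ifs with hk
      · have h1 := h.1 ⟨k - 1, by omega⟩
        have h2 := h.2 ⟨k - 1, by omega⟩
        simp only [Pi.sub_apply, Pi.add_apply, Pi.one_apply] at *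
        omega
      · omega
    · left
      intro k
      simp only [U]
      split_ifs with hk
      · have h1 := h.1 ⟨k - 1, by omega⟩
        have h2 := h.2 ⟨k - 1, by omega⟩
        simp only [Pi.sub_apply, Pi.add_apply, Pi.one_apply] at *
        omega
      · omega
  have k1 := key i
  have k2 := key (i + 1)
  simp only [bb]
  rcases hU with hU | hU
  · have h1 := hU i
    have h2 := hU (i + 1)
    omega
  · have h1 := hU i
    have h2 := hU (i + 1)
    omega

lemma eq_of_bb {u v : V n} (h : ∀ i ≤ n, bb u i = bb v i) : u = v := by
  funext i
  have e1 := bb_psum u (i.val + 1)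
  have e2 := bb_psum v (i.val + 1)
  rw [U_succ] at e1 e2
  have : ∑ j ∈ range (i.val + 1), bb u j = ∑ j ∈ range (i.val + 1), bb v j := by
    apply sum_congr rfl
    intro j hj
    simp at hj
    exact h j (by omega)
  omega

lemma rainbow_unique {σ : Finset (V n)} (hq : Clq σ) (hc : σ.card = n + 1) (v : V n)
    (h : ∀ i ≤ n, ∃ w ∈ σ, 1 ≤ bb (w - v) i + if i = 0 then 1 else 0) : σ = S v 1 := by
  apply eq_of_subset_of_card_le
  · intro s hs
    have h0 : ∀ i ∈ range (n + 1), 0 ≤ bb (s - v) i + if i = 0 then 1 else 0 := by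
      intro i hi
      simp at hi
      obtain ⟨w, hw, h1⟩ := h i (by omega)
      have := bb_adj (hq w hw s hs) i
      rw [bb_sub] at *
      omega
    have hsum : ∑ i ∈ range (n + 1), (bb (s - v) i + if i = 0 then 1 else 0) = 1 := by
      rw [sum_add_distrib, bb_sum, sum_ite_eq']; simp
    have hex : ∃ k ∈ range (n + 1), 0 < bb (s - v) k + if k = 0 then 1 else 0 := by
      by_contra! hcon
      have := sum_nonpos hcon
      omega
    obtain ⟨k, hk, hkp⟩ := hex
    have hk' : k ≤ n := by simp at hk; omega
    have hs2 : s = W v 1 k := by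
      have : s - v = W v 1 k - v := by
        apply eq_of_bb
        intro i hi
        have hi' : i ∈ range (n + 1) := by simp; omega
        have hw := bb_W v k i hk' hi
        have hi0 := h0 i hi'
        have : (bb (s - v) i + if i = 0 then 1 else 0) = if i = k then 1 else 0 := by
          by_cases hik : i = k
          · subst hik
            have := single_le_sum h0 hi'
            simp only [if_true]; omega
          · have := sum_le_sum_of_subset_of_nonneg (s := {i, k}) (t := range (n + 1))
              (f := fun i => bb (s - v) i + if i = 0 then 1 else 0)
              (by intro x hx; simp only [mem_insert, mem_singleton] at hx; rcases hx with rfl | rfl <;> assumption)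
              (fun j hj _ => h0 j hj)
            rw [sum_pair hik, hsum] at this
            rw [if_neg hik]
            omega
        omega
      simpa using this
    rw [hs2]
    exact mem_image_of_mem _ (by simp; omega)
  · rw [S_card, hc]

end
end VC

namespace VC
open Finset Classical

noncomputable section

variable {n : ℕ} {M : Type*} [MetricSpace M]

def gam (e : OpenPartialHomeomorph M (Fin n → ℝ)) (h : ℝ) (v : V n) : M := e.symm (pos h v)

lemma gam_src {e : OpenPartialHomeomorph M (Fin n → ℝ)} (he : Metric.closedBall 0 4 ⊆ e.target)
    {h : ℝ} {v : V n} (hv : ‖pos h v‖ ≤ 4) : gam e h v ∈ e.source ∧ e (gam e h v) = pos h v := by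
  have : pos h v ∈ e.target := he (by simpa using hv)
  exact ⟨e.map_target this, e.right_inv this⟩

lemma pos_inj {h : ℝ} (hh : 0 < h) {v w : V n} (hvw : pos h v = pos h w) : v = w := by
  funext i
  have := congrFun hvw i
  simp [pos, hh.ne'] at this
  exact this

lemma gam_inj {e : OpenPartialHomeomorph M (Fin n → ℝ)} (he : Metric.closedBall 0 4 ⊆ e.target)
    {h : ℝ} (hh : 0 < h) {v w : V n} (hv : ‖pos h v‖ ≤ 4) (hw : ‖pos h w‖ ≤ 4)
    (hvw : gam e h v = gam e h w) : v = w := by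
  apply pos_inj hh
  rw [← (gam_src he hv).2, ← (gam_src he hw).2, hvw]

lemma pos_adj {h : ℝ} (hh : 0 < h) {v w : V n} (a : adj v w) : ‖pos h v - pos h w‖ ≤ h := by
  rw [pi_norm_le_iff_of_nonneg hh.le]
  intro i
  have e : (pos h v - pos h w) i = h * ((v i - w i : ℤ) : ℝ) := by simp [pos]; ring
  have : |v i - w i| ≤ 1 := by
    rcases a with a | a
    · have h1 : v i ≤ w i := a.1 i
      have h2 : w i ≤ v i + 1 := a.2 i
      rw [abs_le]; omega
    · have h1 : w i ≤ v i := a.1 i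
      have h2 : v i ≤ w i + 1 := a.2 i
      rw [abs_le]; omega
  have h1 : |((v i - w i : ℤ) : ℝ)| ≤ 1 := by exact_mod_cast this
  rw [e, Real.norm_eq_abs, abs_mul, abs_of_pos hh]
  nlinarith

lemma norm_adj {h : ℝ} (hh : 0 < h) {v w : V n} (a : adj v w) : ‖pos h v‖ ≤ ‖pos h w‖ + h := by
  have := norm_add_le (pos h v - pos h w) (pos h w)
  rw [sub_add_cancel] at this
  linarith [pos_adj hh a]

/-- grid-like chain -/
def Grd (e : OpenPartialHomeomorph M (Fin n → ℝ)) (h : ℝ) (y : C M) : Prop :=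
  ∀ σ ∈ y.support, (∃ x ∈ σ, x ∈ e.source ∧ ‖e x‖ ≤ 2) →
    ∃ σV : Finset (V n), Clq σV ∧ σV.card = n + 1 ∧ (∀ v ∈ σV, ‖pos h v‖ ≤ 3) ∧
      σ = σV.image (gam e h)

lemma gam_injOn {e : OpenPartialHomeomorph M (Fin n → ℝ)} (he : Metric.closedBall 0 4 ⊆ e.target)
    {h : ℝ} (hh : 0 < h) {τ : Finset (V n)} (hτ : ∀ v ∈ τ, ‖pos h v‖ ≤ 4) :
    Set.InjOn (gam e h) τ := fun v hv w hw hvw => gam_inj he hh (hτ v hv) (hτ w hw) hvw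

lemma gam_image_subset {e : OpenPartialHomeomorph M (Fin n → ℝ)} (he : Metric.closedBall 0 4 ⊆ e.target)
    {h : ℝ} (hh : 0 < h) {τ σ : Finset (V n)} (hτ : ∀ v ∈ τ, ‖pos h v‖ ≤ 4)
    (hσ : ∀ v ∈ σ, ‖pos h v‖ ≤ 4) (hs : τ.image (gam e h) ⊆ σ.image (gam e h)) : τ ⊆ σ := by
  intro v hv
  have := hs (mem_image_of_mem _ hv)
  obtain ⟨w, hw, hwv⟩ := mem_image.1 this
  rw [← gam_inj he hh (hσ w hw) (hτ v hv) hwv]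
  exact hw

lemma bdgrid {e : OpenPartialHomeomorph M (Fin n → ℝ)} (he : Metric.closedBall 0 4 ⊆ e.target)
    (hn : 1 ≤ n) {h : ℝ} (hh : 0 < h) (hh1 : h ≤ 1) {y : C M} (hy : Grd e h y) {τ : Finset (V n)}
    (hc : τ.card = n) {u u' : V n} (hu : u ∉ τ) (hu' : u' ∉ τ) (huu : u ≠ u')
    (hq : Clq (insert u τ)) (hq' : Clq (insert u' τ)) (hτ : ∀ v ∈ τ, ‖pos h v‖ ≤ 2) :
    bd y (τ.image (gam e h)) =
      y ((insert u τ).image (gam e h)) + y ((insert u' τ).image (gam e h)) := by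
  have hτ4 : ∀ v ∈ τ, ‖pos h v‖ ≤ 4 := fun v hv => (hτ v hv).trans (by norm_num)
  obtain ⟨v0, hv0⟩ : τ.Nonempty := card_pos.1 (by omega)
  have hcl : ∀ x, Clq (insert x τ) → ∀ v ∈ insert x τ, ‖pos h v‖ ≤ 4 := by
    intro x hx v hv
    have := norm_adj hh (hx v hv v0 (mem_insert_of_mem hv0))
    linarith [hτ v0 hv0]
  have hcards : ∀ x, x ∉ τ → Clq (insert x τ) → ((insert x τ).image (gam e h)).card = n + 1 := by
    intro x hx hqx
    rw [card_image_of_injOn (gam_injOn he hh (hcl x hqx)), card_insert_of_notMem hx, hc]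
  have hcτ : (τ.image (gam e h)).card = n := by
    rw [card_image_of_injOn (gam_injOn he hh hτ4), hc]
  have hne : (insert u τ).image (gam e h) ≠ (insert u' τ).image (gam e h) := by
    intro heq
    have := gam_image_subset he hh (hcl u hq) (hcl u' hq') heq.subset (mem_insert_self u τ)
    rw [mem_insert] at this
    tauto
  rw [bd_apply]
  set f : Finset M → ZMod 2 := fun σ =>
    if τ.image (gam e h) ⊆ σ ∧ σ.card = (τ.image (gam e h)).card + 1 then y σ else 0 with hf
  have s1 : ∑ σ ∈ y.support, f σ = ∑ σ ∈ y.support ∪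
      {(insert u τ).image (gam e h), (insert u' τ).image (gam e h)}, f σ := by
    apply sum_subset subset_union_left
    intro σ _ hσ
    rw [Finsupp.notMem_support_iff] at hσ
    simp [hf, hσ]
  have s2 : ∑ σ ∈ {(insert u τ).image (gam e h), (insert u' τ).image (gam e h)}, f σ =
      ∑ σ ∈ y.support ∪ {(insert u τ).image (gam e h), (insert u' τ).image (gam e h)}, f σ := by
    apply sum_subset subset_union_right
    intro σ hσ hσ'
    simp only [hf]
    split_ifs with hP
    · by_contra hyσ
      apply hσ'
      obtain ⟨σV, q1, q2, q3, rfl⟩ := hy σ (Finsupp.mem_support_iff.2 hyσ)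
        ⟨gam e h v0, hP.1 (mem_image_of_mem _ hv0), (gam_src he (hτ4 v0 hv0)).1, by
          rw [(gam_src he (hτ4 v0 hv0)).2]; exact hτ v0 hv0⟩
      have hsub := gam_image_subset he hh hτ4 (fun v hv => (q3 v hv).trans (by norm_num)) hP.1
      obtain ⟨x, hx⟩ : (σV \ τ).Nonempty := by
        rw [← card_pos, card_sdiff_of_subset hsub]; omega
      rw [mem_sdiff] at hx
      have hins : insert x τ = σV := by
        apply eq_of_subset_of_card_le (insert_subset hx.1 hsub)
        rw [card_insert_of_notMem hx.2]; omega
      obtain ⟨w, w1, w2, w3, w4⟩ := two_completions hn hc hu hq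
      have hu'w : u' = w := by
        rcases w4 u' hu' hq' with h | h
        · exact absurd h.symm huu
        · exact h
      rcases w4 x hx.2 (hins ▸ q1) with h | h
      · rw [← hins, h]; simp
      · rw [← hins, h, ← hu'w]; simp
    · rfl
  rw [s1, ← s2, sum_pair hne]
  simp only [hf]
  rw [if_pos ⟨image_subset_image (subset_insert _ _), by rw [hcards u hu hq, hcτ]⟩,
    if_pos ⟨image_subset_image (subset_insert _ _), by rw [hcards u' hu' hq', hcτ]⟩]

/-- the rounding map -/
lemma exists_p {e : OpenPartialHomeomorph M (Fin n → ℝ)} (he : Metric.closedBall 0 4 ⊆ e.target)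
    {m h r0 : ℝ} (hh : 0 < h) (hh1 : h ≤ 1 / 16) (hmr : m ≤ r0)
    (hr0 : ∀ c, ‖c‖ ≤ 4 → ∀ y, dist y (e.symm c) < r0 → y ∈ e.source ∧ dist (e y) c < 1 / 4)
    (hm : ∀ c, ‖c‖ ≤ 4 → ∀ u, dist u c ≤ h → dist (e.symm u) (e.symm c) < m) (hm0 : 0 < m) :
    ∃ p : M → M, (∀ y, dist (p y) y < m) ∧ ∃ δ > 0, ∀ z : C M,
      (∀ σ ∈ z.support, σ.card = n + 1 ∧ ∀ x ∈ σ, ∀ y ∈ σ, dist x y < δ) → Grd e h (push p z) := by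
  obtain ⟨rd, hrd1, hrd2⟩ := rounding n
  set κ := h / (2 * ((n : ℝ) + 1)) with hκ
  have hκpos : 0 < κ := by positivity
  have hκh : κ ≤ h := by
    rw [hκ]; apply div_le_self hh.le; linarith [show (0:ℝ) ≤ n by positivity]
  obtain ⟨δ, hδ, hE⟩ := lemE e he hκpos
  set q : M → V n := fun y => rd (h⁻¹ • e y) with hq
  have hqd : ∀ y, dist (pos h (q y)) (e y) ≤ h := by
    intro y
    rw [dist_pi_le_iff hh.le]
    intro i
    have h1 := hrd1 (h⁻¹ • e y) i
    rw [dist_comm, Real.dist_eq]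
    have : e y i - pos h (q y) i = h * ((h⁻¹ • e y) i - rd (h⁻¹ • e y) i) := by
      simp [pos, hq]; field_simp
    rw [this, abs_mul, abs_of_pos hh]
    nlinarith
  refine ⟨fun y => if y ∈ e.source ∧ ‖e y‖ < 3 then gam e h (q y) else y, ?_, δ, hδ, ?_⟩
  · intro y
    dsimp only
    split_ifs with hy
    · have := hm (e y) (by linarith [hy.2]) _ (hqd y)
      rwa [e.left_inv hy.1] at this
    · simpa using hm0
  · intro z hz σ' hσ' hx
    have hpm : ∀ y, dist ((fun y => if y ∈ e.source ∧ ‖e y‖ < 3 then gam e h (q y) else y) y) y < m := by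
      intro y
      dsimp only
      split_ifs with hy
      · have := hm (e y) (by linarith [hy.2]) _ (hqd y)
        rwa [e.left_inv hy.1] at this
      · simpa using hm0
    set p : M → M := fun y => if y ∈ e.source ∧ ‖e y‖ < 3 then gam e h (q y) else y with hp
    obtain ⟨σ, hσ, hit⟩ := exists_of_push_ne (Finsupp.mem_support_iff.1 hσ')
    obtain ⟨hcard, hsm⟩ := hz σ hσ
    obtain ⟨x, hxσ, hxs, hxn⟩ := hx
    have himg : σ' = σ.image p := by
      apply coe_injective; rw [coe_image]; exact hit.2.symm
    rw [himg] at hxσ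
    obtain ⟨y, hy, rfl⟩ := mem_image.1 hxσ
    have hy1 : y ∈ e.source ∧ dist (e y) (e (p y)) < 1 / 4 := by
      apply hr0 _ (by linarith)
      rw [e.left_inv hxs, dist_comm]
      exact (hpm y).trans_le hmr
    have hyn : ‖e y‖ < 9 / 4 := by
      have := norm_add_le (e y - e (p y)) (e (p y))
      rw [sub_add_cancel, ← dist_eq_norm] at this
      linarith [hy1.2]
    have hall : ∀ y' ∈ σ, y' ∈ e.source ∧ ‖e y'‖ < 5 / 2 := by
      intro y' hy'
      have h1 := hE (e y) (by linarith) y' (by rw [e.left_inv hy1.1]; exact hsm _ hy' _ hy)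
      refine ⟨h1.1, ?_⟩
      have := norm_add_le (e y' - e y) (e y)
      rw [sub_add_cancel, ← dist_eq_norm] at this
      linarith [h1.2]
    have hpq : ∀ y' ∈ σ, p y' = gam e h (q y') := by
      intro y' hy'
      have := hall y' hy'
      simp only [hp]
      rw [if_pos ⟨this.1, by linarith [this.2]⟩]
    have hbig : σ' = (σ.image q).image (gam e h) := by
      rw [himg, image_image]
      exact image_congr (fun y' hy' => hpq y' hy')
    refine ⟨σ.image q, ?_, ?_, ?_, hbig⟩
    · intro a ha b hb
      obtain ⟨y1, hy1, rfl⟩ := mem_image.1 ha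
      obtain ⟨y2, hy2, rfl⟩ := mem_image.1 hb
      apply hrd2
      intro i
      have h2 := hE (e y2) (by linarith [(hall y2 hy2).2]) y1
        (by rw [e.left_inv (hall y2 hy2).1]; exact hsm _ hy1 _ hy2)
      have h3 := (dist_le_pi_dist (e y1) (e y2) i).trans_lt h2.2
      rw [Real.dist_eq] at h3
      have : (h⁻¹ • e y1) i - (h⁻¹ • e y2) i = h⁻¹ * (e y1 i - e y2 i) := by
        simp; ring
      rw [this, abs_mul, abs_of_pos (inv_pos.2 hh)]
      have e1 : 1 / (2 * ((n:ℝ) + 1)) = h⁻¹ * κ := by rw [hκ]; field_simp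
      rw [e1]
      exact mul_lt_mul_of_pos_left h3 (inv_pos.2 hh)
    · apply le_antisymm
      · exact card_image_le.trans hcard.le
      · have h1 : σ'.card = n + 1 := by
          rw [himg, card_image_of_injOn hit.1, hcard]
        rw [← h1, hbig]
        exact card_image_le
    · intro v hv
      obtain ⟨y1, hy1, rfl⟩ := mem_image.1 hv
      have := norm_add_le (pos h (q y1) - e y1) (e y1)
      rw [sub_add_cancel, ← dist_eq_norm] at this
      linarith [hqd y1, (hall y1 hy1).2]

end
end VC

namespace VC
open Finset Classical

noncomputable section

variable {n : ℕ} {M : Type*} [MetricSpace M]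

lemma box_const {e : OpenPartialHomeomorph M (Fin n → ℝ)} (he : Metric.closedBall 0 4 ⊆ e.target)
    (hn : 1 ≤ n) {h κ1 : ℝ} (hh : 0 < h) (hκ1 : κ1 ≤ 1 / 4) (hhκ : h < κ1) {y : C M} (hy : Grd e h y)
    {v v1 : V n} (hv : ‖pos h v‖ ≤ 3 / 2) (hv1 : ‖pos h v1 - pos h v‖ < κ1)
    (hbd : ∀ u : V n, ‖pos h u - pos h v‖ < 2 * κ1 → ∀ τ, bd y τ ≠ 0 → gam e h u ∉ τ)
    {σ σ1 : Finset (V n)} (q : Clq σ) (q1 : Clq σ1) (c : σ.card = n + 1) (c1 : σ1.card = n + 1)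
    (hvσ : v ∈ σ) (hv1σ : v1 ∈ σ1) :
    y (σ.image (gam e h)) = y (σ1.image (gam e h)) := by
  set lo : V n := fun i => min (v i) (v1 i) - 1 with hlo
  set hi : V n := fun i => max (v i) (v1 i) + 1 with hhi
  have hadj : ∀ a b : V n, adj a b → ∀ i, b i - 1 ≤ a i ∧ a i ≤ b i + 1 := by
    intro a b hab i
    rcases hab with hab | hab
    · have h1 : a i ≤ b i := hab.1 i
      have h2 : b i ≤ a i + 1 := hab.2 i
      omega
    · have h1 : b i ≤ a i := hab.1 i
      have h2 : a i ≤ b i + 1 := hab.2 i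
      omega
  have hbox : ∀ u : V n, lo ≤ u ∧ u ≤ hi → ‖pos h u - pos h v‖ < 2 * κ1 := by
    intro u hu
    have h1 : ‖pos h u - pos h v‖ ≤ ‖pos h v1 - pos h v‖ + h := by
      rw [pi_norm_le_iff_of_nonneg (by positivity)]
      intro i
      have e1 : ∀ x : V n, (pos h x - pos h v) i = h * ((x i - v i : ℤ) : ℝ) := by
        intro x; simp [pos]; ring
      have l1 : lo i ≤ u i := hu.1 i
      have l2 : u i ≤ hi i := hu.2 i
      have l3 : |u i - v i| ≤ |v1 i - v i| + 1 := by
        simp only [hlo, hhi] at l1 l2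
        rcases abs_cases (v1 i - v i) with h | h <;> rcases abs_cases (u i - v i) with h' | h' <;> omega
      have l4 : |((u i - v i : ℤ) : ℝ)| ≤ |((v1 i - v i : ℤ) : ℝ)| + 1 := by exact_mod_cast l3
      have l5 := norm_le_pi_norm (pos h v1 - pos h v) i
      rw [e1, Real.norm_eq_abs, abs_mul, abs_of_pos hh] at l5
      rw [e1, Real.norm_eq_abs, abs_mul, abs_of_pos hh]
      nlinarith
    linarith
  have hbox2 : ∀ u : V n, lo ≤ u ∧ u ≤ hi → ‖pos h u‖ ≤ 2 := by
    intro u hu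
    have := norm_add_le (pos h u - pos h v) (pos h v)
    rw [sub_add_cancel] at this
    linarith [hbox u hu]
  have hinv : Inv lo hi (fun σ => y (σ.image (gam e h))) := by
    intro τ u u' hc hu hu' hq hq' hb hb'
    by_cases huu : u = u'
    · rw [huu]
    have := bdgrid he hn hh (by linarith) hy hc hu hu' huu hq hq'
      (fun x hx => hbox2 x (hb x (mem_insert_of_mem hx)))
    obtain ⟨x, hx⟩ : τ.Nonempty := card_pos.1 (by omega)
    have h0 : bd y (τ.image (gam e h)) = 0 := by
      by_contra hne
      exact hbd x (hbox x (hb x (mem_insert_of_mem hx))) _ hne (mem_image_of_mem _ hx)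
    rw [h0] at this
    exact CharTwo.add_eq_zero.1 this.symm
  refine inv_const hinv q q1 c c1 ?_ ?_
  · intro x hx
    constructor
    · intro i
      have := hadj x v (q x hx v hvσ) i
      simp only [hlo]; omega
    · intro i
      have := hadj x v (q x hx v hvσ) i
      simp only [hhi]; omega
  · intro x hx
    constructor
    · intro i
      have := hadj x v1 (q1 x hx v1 hv1σ) i
      simp only [hlo]; omega
    · intro i
      have := hadj x v1 (q1 x hx v1 hv1σ) i
      simp only [hhi]; omega

lemma exists_fill (z : C M) (T : Finset (Finset M)) : ∃ w : C M,
    (∀ σ, w σ ≠ 0 → σ ∈ T ∧ z σ = 0) ∧ ∀ σ ∈ T, (z + w) σ = 1 := by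
  refine ⟨Finsupp.onFinset T (fun σ => if σ ∈ T ∧ z σ = 0 then 1 else 0) ?_, ?_, ?_⟩
  · intro σ h
    by_contra h'
    simp [h'] at h
  · intro σ h
    by_contra h'
    simp only [Finsupp.onFinset_apply, if_neg h'] at h
    exact h rfl
  · intro σ h
    simp only [Finsupp.add_apply, Finsupp.onFinset_apply, h, true_and]
    have : ∀ a : ZMod 2, a + (if a = 0 then 1 else 0) = 1 := by decide
    convert this (z σ)

lemma exists_T {h : ℝ} (hh : 0 < h) : ∃ T : Finset (Finset (V n)), ∀ σ, σ ∈ T ↔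
    Clq σ ∧ σ.card = n + 1 ∧ ∀ v ∈ σ, ‖pos h v‖ ≤ 3 / 2 := by
  have hfin : {v : V n | ‖pos h v‖ ≤ 3 / 2}.Finite := by
    apply (Set.finite_Icc (fun _ => - ⌈3 / 2 / h⌉ : V n) (fun _ => ⌈3 / 2 / h⌉)).subset
    intro v hv
    have hv : ‖pos h v‖ ≤ 3 / 2 := hv
    have key : ∀ i, |v i| ≤ ⌈3 / 2 / h⌉ := by
      intro i
      have h1 := (norm_le_pi_norm (pos h v) i).trans hv
      simp only [pos, Pi.smul_apply, smul_eq_mul, Real.norm_eq_abs, abs_mul, abs_of_pos hh] at h1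
      have h2 : |(v i : ℝ)| ≤ 3 / 2 / h := by rw [le_div_iff₀ hh]; linarith
      have h3 : |(v i : ℝ)| ≤ ⌈3 / 2 / h⌉ := h2.trans (Int.le_ceil _)
      exact_mod_cast h3
    exact ⟨fun i => (abs_le.1 (key i)).1, fun i => (abs_le.1 (key i)).2⟩
  refine ⟨hfin.toFinset.powerset.filter (fun σ => Clq σ ∧ σ.card = n + 1), ?_⟩
  intro σ
  simp only [mem_filter, mem_powerset]
  constructor
  · rintro ⟨h1, h2, h3⟩
    exact ⟨h2, h3, fun v hv => by simpa using h1 hv⟩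
  · rintro ⟨h2, h3, h1⟩
    exact ⟨fun v hv => by simpa using h1 v hv, h2, h3⟩

lemma bary_close {h : ℝ} (hh : 0 < h) {c : Fin n → ℝ} :
    ∃ v : V n, dist (bary h v) c ≤ h ∧ dist (pos h v) c ≤ h := by
  refine ⟨fun i => ⌊c i / h⌋, ?_⟩
  have key : ∀ i, h * ⌊c i / h⌋ ≤ c i ∧ c i ≤ h * ⌊c i / h⌋ + h := by
    intro i
    have h1 := Int.floor_le (c i / h)
    have h2 := Int.lt_floor_add_one (c i / h)
    rw [le_div_iff₀ hh] at h1
    rw [div_lt_iff₀ hh] at h2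
    constructor <;> linarith
  constructor
  · rw [dist_pi_le_iff hh.le]
    intro i
    have b0 : 0 ≤ beta n i := by
      simp only [beta, sub_nonneg]
      rw [div_le_one (by positivity)]
      have := i.isLt
      have : ((i.val : ℝ)) ≤ n := by exact_mod_cast this.le
      linarith
    have b1 : beta n i ≤ 1 := by
      simp only [beta, sub_le_self_iff]; positivity
    have := key i
    simp only [bary, pos, Pi.add_apply, Pi.smul_apply, smul_eq_mul, Real.dist_eq]
    rw [abs_le]
    constructor <;> nlinarith
  · rw [dist_pi_le_iff hh.le]
    intro i
    have := key i
    simp only [pos, Pi.smul_apply, smul_eq_mul, Real.dist_eq]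
    rw [abs_le]
    constructor <;> linarith

lemma om_new {e : OpenPartialHomeomorph M (Fin n → ℝ)} (he : Metric.closedBall 0 4 ⊆ e.target)
    (hn : 1 ≤ n) {h η r : ℝ} (hh : 0 < h) {y : C M} (hy : Grd e h y) (v : V n)
    (hb : ‖bary h v‖ ≤ 3 / 2)
    (hG : ∀ S : Set M,
      (∀ x ∈ S, ∀ y ∈ S, dist x y < η) → (∀ i, ∃ y ∈ S, lab e (bary h v) y = some i) →
      ∀ y ∈ S, dist y (e.symm (bary h v)) < r ∧ lab e (bary h v) y ≠ none)
    (hr : ∀ y, dist y (e.symm (bary h v)) < r → y ∈ e.source ∧ dist (e y) (bary h v) < 1 / 4)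
    (hsm : ∀ σ ∈ y.support, ∀ x ∈ σ, ∀ y ∈ σ, dist x y < η)
    (hS : ∀ w ∈ S v 1, ‖pos h w‖ ≤ 4) (hyS : y ((S v 1).image (gam e h)) ≠ 0) :
    om (lab e (bary h v)) y ≠ 0 := by
  have hlab : ∀ k : Fin (n + 1), lab e (bary h v) (gam e h (W v 1 k)) = some k := by
    intro k
    have hmem : W v 1 k ∈ S v 1 := mem_image_of_mem _ (by simp; omega)
    obtain ⟨s1, s2⟩ := gam_src he (hS _ hmem)
    have : lab e (bary h v) (gam e h (W v 1 k)) = some (ell (pos h (W v 1 k) - bary h v)) := by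
      unfold lab
      rw [s2, if_pos ⟨s1, hS _ hmem⟩]
    rw [this]
    have sp := ell_spec (pos h (W v 1 k) - bary h v)
    rw [label_iff hh hn v _ _ (by omega), bb_W v k _ (by omega) (by omega)] at sp
    congr 1
    ext
    by_contra hne
    rw [if_neg hne] at sp
    omega
  have hinj := gam_injOn he hh hS
  have himg : ((S v 1).image (gam e h)).image (lab e (bary h v)) = LL n := by
    rw [image_image, S, image_image]
    ext a
    simp only [mem_image, mem_range, Function.comp, LL, mem_univ, true_and]
    constructor
    · rintro ⟨k, hk, rfl⟩
      exact ⟨⟨k, hk⟩, (hlab ⟨k, hk⟩).symm⟩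
    · rintro ⟨k, rfl⟩
      exact ⟨k, k.isLt, hlab k⟩
  have hhit : Hit (lab e (bary h v)) ((S v 1).image (gam e h)) (LL n) := by
    refine ⟨?_, ?_⟩
    · rw [← card_image_iff, himg, card_LL, card_image_of_injOn hinj, S_card]
    · rw [← himg]; push_cast; rfl
  unfold om
  rw [push_apply, sum_eq_single ((S v 1).image (gam e h)), if_pos hhit]
  · exact hyS
  · intro σ hσ hne
    rw [if_neg]
    intro hit
    apply hne
    have hrb : ∀ i, ∃ x ∈ σ, lab e (bary h v) x = some i := by
      intro i
      have : (some i : Option (Fin (n + 1))) ∈ lab e (bary h v) '' σ := by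
        rw [hit.2, mem_coe, mem_LL]; simp
      obtain ⟨x, hx, h⟩ := this
      exact ⟨x, hx, h⟩
    have hall := hG (σ : Set M) (hsm σ hσ) hrb
    obtain ⟨x, hx, _⟩ := hrb 0
    have hx2 := hr x (hall x hx).1
    obtain ⟨σV, q1, q2, q3, rfl⟩ := hy σ hσ ⟨x, hx, hx2.1, by
      have := norm_add_le (e x - bary h v) (bary h v)
      rw [sub_add_cancel, ← dist_eq_norm] at this
      linarith [hx2.2]⟩
    rw [rainbow_unique q1 q2 v]
    intro i hi
    obtain ⟨x, hx, hl⟩ := hrb ⟨i, by omega⟩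
    obtain ⟨w, hw, rfl⟩ := mem_image.1 hx
    refine ⟨w, hw, ?_⟩
    have := (lab_some hl).2.2
    rw [(gam_src he ((q3 w hw).trans (by norm_num))).2] at this
    exact (label_iff hh hn v w i hi).1 this
  · intro hns
    rw [Finsupp.notMem_support_iff] at hns
    exact absurd hns hyS

lemma lemG_fin {ι : Type*} (e : ι → OpenPartialHomeomorph M (Fin n → ℝ))
    (he : ∀ i, Metric.closedBall 0 4 ⊆ (e i).target) (t : Finset ι)
    {r : ℝ} (hr : 0 < r) : ∃ η > 0, ∀ j ∈ t, ∀ c, ‖c‖ ≤ 2 → ∀ S : Set M,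
      (∀ x ∈ S, ∀ y ∈ S, dist x y < η) → (∀ i, ∃ y ∈ S, lab (e j) c y = some i) →
      ∀ y ∈ S, dist y ((e j).symm c) < r ∧ lab (e j) c y ≠ none := by
  induction t using Finset.induction_on with
  | empty => exact ⟨1, one_pos, by simp⟩
  | insert a t _ ih =>
    obtain ⟨η1, h1, g1⟩ := ih
    obtain ⟨η2, h2, g2⟩ := lemG (e a) (he a) hr
    refine ⟨min η1 η2, lt_min h1 h2, ?_⟩
    intro j hj c hc S hS
    rcases mem_insert.1 hj with rfl | hj
    · exact g2 c hc S (fun x hx y hy => (hS x hx y hy).trans_le (min_le_right _ _))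
    · exact g1 j hj c hc S (fun x hx y hy => (hS x hx y hy).trans_le (min_le_left _ _))

end
end VC

namespace VC
open Finset Classical

noncomputable section

variable {n : ℕ} {M : Type*} [MetricSpace M]

def PP {ι : Type*} (e : ι → OpenPartialHomeomorph M (Fin n → ℝ)) (s : Finset ι) : Prop :=
  ∃ ρ > 0, ∀ ε > 0, ∃ z : C M,
    (∀ σ ∈ z.support, σ.card = n + 1 ∧ ∀ x ∈ σ, ∀ y ∈ σ, dist x y < ε) ∧
    (∀ τ, bd z τ ≠ 0 → ∀ y ∈ τ, ∀ i ∈ s, ∀ c, ‖c‖ ≤ 1 → ρ ≤ dist y ((e i).symm c)) ∧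
    (∀ i ∈ s, ∀ c, ‖c‖ ≤ 1 → ∃ j ∈ s, ∃ c', ‖c'‖ ≤ 2 ∧
      dist ((e i).symm c) ((e j).symm c') < ε ∧ om (lab (e j) c') z ≠ 0)

lemma PP_empty {ι : Type*} (e : ι → OpenPartialHomeomorph M (Fin n → ℝ)) : PP e ∅ := by
  refine ⟨1, one_pos, fun ε _ => ⟨0, ?_, ?_, ?_⟩⟩ <;> simp

lemma om_push_id {X : Type*} (l : X → Option (Fin (n + 1))) (z : C X) : om l (push id z) = om l z := by
  unfold om; rw [push_push, Function.comp_id]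

lemma bd_card {X : Type*} {z : C X} {N : ℕ} (hz : ∀ σ ∈ z.support, σ.card = N + 1) {τ : Finset X}
    (hτ : bd z τ ≠ 0) : τ.card = N := by
  obtain ⟨σ, hσ, h1, h2⟩ := exists_of_bd_ne hτ
  have := hz σ hσ
  omega

lemma step {ι : Type*} (e : ι → OpenPartialHomeomorph M (Fin n → ℝ))
    (he : ∀ i, Metric.closedBall 0 4 ⊆ (e i).target) (hn : 1 ≤ n) (s : Finset ι) (k : ι)
    (hPP : PP e s) : PP e (insert k s) := by
  obtain ⟨ρ, hρ, hP⟩ := hPP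
  obtain ⟨κ2, hκ2, hE2⟩ := lemE' (e k) (he k) (show 0 < ρ / 4 by positivity)
  obtain ⟨κ1, hκ1, hκ1a, hκ1b⟩ : ∃ κ1 > 0, κ1 ≤ 1 / 4 ∧ 2 * κ1 ≤ κ2 := by
    refine ⟨min κ2 (1/2) / 2, by positivity, ?_, ?_⟩
    · linarith [min_le_right κ2 (1/2)]
    · linarith [min_le_left κ2 (1/2)]
  obtain ⟨r0, hr0, hE⟩ := lemE (e k) (he k) hκ1
  obtain ⟨ρ', hρ', hρ'a, hρ'b⟩ : ∃ ρ' > 0, ρ' ≤ ρ / 4 ∧ ρ' ≤ r0 / 4 :=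
    ⟨min (ρ / 4) (r0 / 4), by positivity, min_le_left _ _, min_le_right _ _⟩
  refine ⟨ρ', hρ', ?_⟩
  intro ε hε
  obtain ⟨η, hη, hG⟩ := lemG_fin e he (insert k s) (show 0 < ρ' / 2 by positivity)
  obtain ⟨m, hm, hmη, hmε, hmρ⟩ : ∃ m > 0, 3 * m ≤ η ∧ 3 * m ≤ ε ∧ m ≤ ρ' / 2 := by
    refine ⟨min (min (η / 3) (ε / 3)) (ρ' / 2), by positivity, ?_, ?_, min_le_right _ _⟩
    · linarith [(min_le_left (min (η / 3) (ε / 3)) (ρ' / 2)).trans (min_le_left _ _)]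
    · linarith [(min_le_left (min (η / 3) (ε / 3)) (ρ' / 2)).trans (min_le_right _ _)]
  obtain ⟨κ, hκ, hE3⟩ := lemE' (e k) (he k) hm
  obtain ⟨h, hh, hhκ, hh16, hhκ1⟩ : ∃ h > 0, h < κ ∧ h ≤ 1 / 16 ∧ h < κ1 := by
    refine ⟨min (min (κ / 2) (1 / 16)) (κ1 / 2), by positivity, ?_, ?_, ?_⟩
    · linarith [(min_le_left (min (κ / 2) (1 / 16)) (κ1 / 2)).trans (min_le_left _ _)]
    · exact (min_le_left (min (κ / 2) (1 / 16)) (κ1 / 2)).trans (min_le_right _ _)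
    · linarith [min_le_right (min (κ / 2) (1 / 16)) (κ1 / 2)]
  obtain ⟨p, hp, δ0, hδ0, hgrd⟩ := exists_p (he k) (m := m) (r0 := r0) hh hh16 (by linarith)
    (fun c hc y hy => ⟨(hE c hc y hy).1, (hE c hc y hy).2.trans_le hκ1a⟩)
    (fun c hc u hu => (hE3 c hc u (hu.trans_lt hhκ)).2) hm
  obtain ⟨δ, hδ, hδ0', hδm⟩ : ∃ δ > 0, δ ≤ δ0 ∧ δ ≤ m :=
    ⟨min δ0 m, by positivity, min_le_left _ _, min_le_right _ _⟩
  obtain ⟨z, za, zb, zc⟩ := hP δ hδ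
  set zt := push p z with hzt
  have hgr : Grd (e k) h zt := hgrd z (fun σ hσ => ⟨(za σ hσ).1, fun x hx y hy =>
    ((za σ hσ).2 x hx y hy).trans_le hδ0'⟩)
  -- basic smallness
  have hpp : ∀ x y, dist x y < δ → dist (p x) (p y) < 3 * m := by
    intro x y hxy
    have h1 := hp x
    have h2 := hp y
    have h3 := dist_triangle4 (p x) x y (p y)
    rw [dist_comm y (p y)] at h3
    linarith
  have hpx : ∀ x y, dist x y < δ → dist (p x) y < 3 * m := by
    intro x y hxy
    have h1 := hp x
    have h3 := dist_triangle (p x) x y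
    linarith
  have f1 : ∀ σ ∈ zt.support, σ.card = n + 1 ∧ ∀ x ∈ σ, ∀ y ∈ σ, dist x y < 3 * m := by
    intro σ' hσ'
    obtain ⟨σ, hσ, hit⟩ := exists_of_push_ne (Finsupp.mem_support_iff.1 hσ')
    have himg : σ' = σ.image p := by
      apply coe_injective; rw [coe_image]; exact hit.2.symm
    refine ⟨by rw [himg, card_image_of_injOn hit.1, (za σ hσ).1], ?_⟩
    intro x hx y hy
    rw [himg] at hx hy
    obtain ⟨x, hx', rfl⟩ := mem_image.1 hx
    obtain ⟨y, hy', rfl⟩ := mem_image.1 hy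
    exact hpp x y ((za σ hσ).2 x hx' y hy')
  have f2 : ∀ τ, bd zt τ ≠ 0 → ∀ y ∈ τ, ∀ i ∈ s, ∀ c, ‖c‖ ≤ 1 →
      ρ - m < dist y ((e i).symm c) := by
    intro τ' hτ' y hy i hi c hc
    rw [hzt, ← push_bd] at hτ'
    obtain ⟨τ, hτ, hit⟩ := exists_of_push_ne hτ'
    have : y ∈ p '' τ := by rw [hit.2]; exact hy
    obtain ⟨x, hx, rfl⟩ := this
    have h1 := zb τ (Finsupp.mem_support_iff.1 hτ) x hx i hi c hc
    have h2 := dist_triangle x (p x) ((e i).symm c)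
    rw [dist_comm x (p x)] at h2
    linarith [hp x]
  have f3 : ∀ i ∈ s, ∀ c, ‖c‖ ≤ 1 → ∃ j ∈ s, ∃ c', ‖c'‖ ≤ 2 ∧
      dist ((e i).symm c) ((e j).symm c') < δ ∧ om (lab (e j) c') zt ≠ 0 := by
    intro i hi c hc
    obtain ⟨j, hj, c', hc', hd, hom⟩ := zc i hi c hc
    refine ⟨j, hj, c', hc', hd, ?_⟩
    have hsmall : ∀ σ : Finset M, (∀ x ∈ σ, ∀ y ∈ σ, dist x y < δ) →
        ∀ x ∈ id '' (σ : Set M) ∪ p '' σ, ∀ y ∈ id '' (σ : Set M) ∪ p '' σ, dist x y < η := by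
      intro σ hσ x hx y hy
      rcases hx with ⟨x, hx, rfl⟩ | ⟨x, hx, rfl⟩ <;> rcases hy with ⟨y, hy, rfl⟩ | ⟨y, hy, rfl⟩
      · simp only [id]; linarith [hσ x hx y hy]
      · simp only [id]; rw [dist_comm]; linarith [hpx y x (hσ y hy x hx)]
      · simp only [id]; linarith [hpx x y (hσ x hx y hy)]
      · linarith [hpp x y (hσ x hx y hy)]
    have := lemM1 (e j) (hG j (mem_insert_of_mem hj) c' hc') id p z
      (fun σ hσ => hsmall σ (za σ hσ).2)
      (fun τ hτ => by
        obtain ⟨σ, hσ, h1, h2⟩ := exists_of_bd_ne (Finsupp.mem_support_iff.1 hτ)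
        exact hsmall τ (fun x hx y hy => (za σ hσ).2 x (h1 hx) y (h1 hy)))
      (fun τ hτ => by
        have hτ' := Finsupp.mem_support_iff.1 hτ
        have hcard := bd_card (fun σ hσ => (za σ hσ).1) hτ'
        obtain ⟨x, hx⟩ : τ.Nonempty := card_pos.1 (by omega)
        refine ⟨x, Or.inl ⟨x, hx, rfl⟩, ?_⟩
        have h1 := zb τ hτ' x hx i hi c hc
        have h2 := dist_triangle x ((e j).symm c') ((e i).symm c)
        rw [dist_comm ((e j).symm c')] at h2
        linarith)
    rw [om_push_id] at this
    rw [hzt, ← this]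
    exact hom
  obtain ⟨T, hT⟩ := exists_T (n := n) hh
  obtain ⟨w, hw1, hw2⟩ := exists_fill zt (T.image (fun σ => σ.image (gam (e k) h)))
  have hTsm : ∀ σ ∈ T, ∀ x ∈ σ.image (gam (e k) h), ∀ y ∈ σ.image (gam (e k) h), dist x y < m := by
    intro σ hσ x hx y hy
    obtain ⟨a, ha, rfl⟩ := mem_image.1 hx
    obtain ⟨b, hb, rfl⟩ := mem_image.1 hy
    obtain ⟨t1, t2, t3⟩ := (hT σ).1 hσ
    apply (hE3 (pos h b) (by linarith [t3 b hb]) (pos h a) _).2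
    rw [dist_eq_norm]
    linarith [pos_adj hh (t1 a ha b hb)]
  -- key fact
  have key : ∀ σ ∈ T, ∀ x ∈ σ.image (gam (e k) h), ∀ i ∈ s, ∀ c, ‖c‖ ≤ 1 →
      dist x ((e i).symm c) < ρ' → zt (σ.image (gam (e k) h)) ≠ 0 := by
    intro σ hσ x hx i hi c hc hd
    obtain ⟨v, hv, rfl⟩ := mem_image.1 hx
    obtain ⟨t1, t2, t3⟩ := (hT σ).1 hσ
    obtain ⟨j, hj, c', hc', hd', hom⟩ := f3 i hi c hc
    obtain ⟨σ1, hσ1, hrb⟩ := rainbow hom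
    have hnear := hG j (mem_insert_of_mem hj) c' hc' (σ1 : Set M)
      (fun x hx y hy => ((f1 σ1 hσ1).2 x hx y hy).trans_le hmη) hrb
    obtain ⟨y1, hy1, _⟩ := hrb 0
    have hy1d : dist y1 (gam (e k) h v) < r0 := by
      have h1 := (hnear y1 hy1).1
      have h2 := dist_triangle4 y1 ((e j).symm c') ((e i).symm c) (gam (e k) h v)
      rw [dist_comm ((e j).symm c'), dist_comm ((e i).symm c) (gam (e k) h v)] at h2
      linarith
    obtain ⟨g1, g2⟩ := hE (pos h v) (by linarith [t3 v hv]) y1 hy1d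
    obtain ⟨σ1V, q1, q2, q3, hσ1V⟩ := hgr σ1 hσ1 ⟨y1, hy1, g1, by
      have := norm_add_le ((e k) y1 - pos h v) (pos h v)
      rw [sub_add_cancel, ← dist_eq_norm] at this
      linarith [t3 v hv]⟩
    rw [hσ1V] at hy1
    obtain ⟨v1, hv1, rfl⟩ := mem_image.1 hy1
    rw [(gam_src (he k) ((q3 v1 hv1).trans (by norm_num))).2, dist_eq_norm] at g2
    have := box_const (he k) hn hh hκ1a hhκ1 hgr (t3 v hv) g2 (fun u hu τ hτ hmem => by
      have h1 := f2 τ hτ _ hmem i hi c hc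
      have h2 := (hE2 (pos h v) (by linarith [t3 v hv]) (pos h u) (by rw [dist_eq_norm]; linarith)).2
      have h3 := dist_triangle (gam (e k) h u) (gam (e k) h v) ((e i).symm c)
      simp only [gam] at *
      linarith) t1 q1 t2 q2 hv hv1
    rw [this, ← hσ1V]
    exact Finsupp.mem_support_iff.1 hσ1
  have hsupp : ∀ σ, (zt + w) σ ≠ 0 → zt σ ≠ 0 ∨ ∃ σV ∈ T, σ = σV.image (gam (e k) h) := by
    intro σ hσ
    by_cases hwσ : w σ = 0
    · left
      rw [Finsupp.add_apply, hwσ, add_zero] at hσ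
      exact hσ
    · right
      obtain ⟨σV, h1, h2⟩ := mem_image.1 (hw1 σ hwσ).1
      exact ⟨σV, h1, h2.symm⟩
  have hgr' : Grd (e k) h (zt + w) := by
    intro σ hσ hx
    rcases hsupp σ (Finsupp.mem_support_iff.1 hσ) with h1 | ⟨σV, h1, rfl⟩
    · exact hgr σ (Finsupp.mem_support_iff.2 h1) hx
    · obtain ⟨t1, t2, t3⟩ := (hT σV).1 h1
      exact ⟨σV, t1, t2, fun v hv => (t3 v hv).trans (by norm_num), rfl⟩
  have ha' : ∀ σ ∈ (zt + w).support, σ.card = n + 1 ∧ ∀ x ∈ σ, ∀ y ∈ σ, dist x y < 3 * m := by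
    intro σ hσ
    rcases hsupp σ (Finsupp.mem_support_iff.1 hσ) with h1 | ⟨σV, h1, rfl⟩
    · exact f1 σ (Finsupp.mem_support_iff.2 h1)
    · obtain ⟨t1, t2, t3⟩ := (hT σV).1 h1
      refine ⟨?_, fun x hx y hy => (hTsm σV h1 x hx y hy).trans (by linarith)⟩
      rw [card_image_of_injOn (gam_injOn (he k) hh (fun v hv => (t3 v hv).trans (by norm_num))), t2]
  refine ⟨zt + w, ?_, ?_, ?_⟩
  · intro σ hσ
    exact ⟨(ha' σ hσ).1, fun x hx y hy => ((ha' σ hσ).2 x hx y hy).trans_le hmε⟩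
  · intro τ hτ y hy i hi c hc
    by_contra! hd
    by_cases his : i ∈ s
    · have h0 : bd zt τ = 0 := by
        by_contra hne
        have := f2 τ hne y hy i his c hc
        linarith
      rw [map_add, Finsupp.add_apply, h0, zero_add] at hτ
      obtain ⟨σ, hσ, hsub, _⟩ := exists_of_bd_ne hτ
      obtain ⟨hσT, hσ0⟩ := hw1 σ (Finsupp.mem_support_iff.1 hσ)
      obtain ⟨σV, hσV, rfl⟩ := mem_image.1 hσT
      exact key σV hσV y (hsub hy) i his c hc hd hσ0
    · have hik : i = k := by
        rcases mem_insert.1 hi with h | h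
        · exact h
        · exact absurd h his
      subst hik
      obtain ⟨g1, g2⟩ := hE c (by linarith) y (by linarith)
      have hyn : ‖e i y‖ ≤ 5 / 4 := by
        have := norm_add_le ((e i) y - c) c
        rw [sub_add_cancel, ← dist_eq_norm] at this
        linarith
      obtain ⟨σ, hσ, hsub, hcard⟩ := exists_of_bd_ne hτ
      have hσc := (ha' σ hσ).1
      obtain ⟨σV, q1, q2, q3, rfl⟩ := hgr' σ hσ ⟨y, hsub hy, g1, by linarith⟩
      have q4 : ∀ v ∈ σV, ‖pos h v‖ ≤ 4 := fun v hv => (q3 v hv).trans (by norm_num)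
      obtain ⟨vy, hvy, rfl⟩ := mem_image.1 (hsub hy)
      rw [(gam_src (he i) (q4 vy hvy)).2] at hyn
      obtain ⟨τV, hτV, rfl⟩ := subset_image_iff.1 hsub
      have hτV' : τV ⊆ σV := by exact_mod_cast hτV
      have hvyτ : vy ∈ τV := by
        obtain ⟨v', hv', hvv⟩ := mem_image.1 hy
        rw [← gam_inj (he i) hh (q4 v' (hτV' hv')) (q4 vy hvy) hvv]
        exact hv'
      have hτc : τV.card = n := by
        rw [← card_image_of_injOn (gam_injOn (he i) hh (fun v hv => q4 v (hτV' hv)))]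
        omega
      obtain ⟨u, hu⟩ : (σV \ τV).Nonempty := by
        rw [← card_pos, card_sdiff_of_subset hτV']; omega
      rw [mem_sdiff] at hu
      have hins : insert u τV = σV := by
        apply eq_of_subset_of_card_le (insert_subset hu.1 hτV')
        rw [card_insert_of_notMem hu.2]; omega
      have hq : Clq (insert u τV) := hins ▸ q1
      obtain ⟨u', w1, w2, w3, w4⟩ := two_completions hn hτc hu.2 hq
      have hinT : ∀ x, x ∉ τV → Clq (insert x τV) → insert x τV ∈ T := by
        intro x hx hqx
        rw [hT]
        refine ⟨hqx, by rw [card_insert_of_notMem hx, hτc], ?_⟩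
        intro v hv
        have := norm_adj hh (hqx v hv vy (mem_insert_of_mem hvyτ))
        linarith
      have hb := bdgrid (he i) hn hh (by linarith) hgr' hτc hu.2 w2 w1.symm hq w3 (fun v hv => by
        have := norm_adj hh (hq v (mem_insert_of_mem hv) vy (mem_insert_of_mem hvyτ))
        linarith)
      rw [hw2 _ (mem_image_of_mem _ (hinT u hu.2 hq)), hw2 _ (mem_image_of_mem _ (hinT u' w2 w3))] at hb
      apply hτ
      rw [hb]
      decide
  · intro i hi c hc
    by_cases his : i ∈ s
    · obtain ⟨j, hj, c', hc', hd, hom⟩ := f3 i his c hc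
      refine ⟨j, mem_insert_of_mem hj, c', hc', by linarith, ?_⟩
      have h0 : om (lab (e j) c') w = 0 := by
        by_contra hne
        obtain ⟨σ, hσ, hrb⟩ := rainbow hne
        obtain ⟨hσT, hσ0⟩ := hw1 σ (Finsupp.mem_support_iff.1 hσ)
        obtain ⟨σV, hσV, rfl⟩ := mem_image.1 hσT
        have hnear := hG j (mem_insert_of_mem hj) c' hc' (σV.image (gam (e k) h) : Set M)
          (fun x hx y hy => (hTsm σV hσV x (by exact_mod_cast hx) y (by exact_mod_cast hy)).trans_le (by linarith))
          (fun i => by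
            obtain ⟨y, hy, hl⟩ := hrb i
            exact ⟨y, by exact_mod_cast hy, hl⟩)
        obtain ⟨x, hx, _⟩ := hrb 0
        refine key σV hσV x hx i his c hc ?_ hσ0
        have h1 := (hnear x (by exact_mod_cast hx)).1
        have h2 := dist_triangle x ((e j).symm c') ((e i).symm c)
        rw [dist_comm ((e j).symm c')] at h2
        linarith
      have : om (lab (e j) c') (zt + w) = om (lab (e j) c') zt + om (lab (e j) c') w := by
        unfold om; rw [map_add, Finsupp.add_apply]
      rw [this, h0, add_zero]
      exact hom
    · have hik : i = k := by
        rcases mem_insert.1 hi with h | h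
        · exact h
        · exact absurd h his
      subst hik
      obtain ⟨v, hv1, hv2⟩ := bary_close hh (c := c)
      have hbn : ‖bary h v‖ ≤ 3 / 2 := by
        have := norm_add_le (bary h v - c) c
        rw [sub_add_cancel, ← dist_eq_norm] at this
        linarith
      have hvn : ‖pos h v‖ ≤ 5 / 4 := by
        have := norm_add_le (pos h v - c) c
        rw [sub_add_cancel, ← dist_eq_norm] at this
        linarith
      have hvS : v ∈ S v 1 := by
        have : W v 1 0 = v := by funext i; simp [W]
        exact mem_image.2 ⟨0, by simp, this⟩
      have hSn : ∀ w ∈ S v 1, ‖pos h w‖ ≤ 3 / 2 := by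
        intro w hw
        have := norm_adj hh (S_clq v 1 w hw v hvS)
        linarith
      refine ⟨i, mem_insert_self i s, bary h v, by linarith, ?_, ?_⟩
      · have := (hE3 c (by linarith) (bary h v) (by linarith)).2
        rw [dist_comm]
        linarith
      · apply om_new (he i) hn hh hgr' v hbn (hG i (mem_insert_self i s) _ (by linarith))
        · intro y hy
          have := hE (bary h v) (by linarith) y (by linarith)
          exact ⟨this.1, this.2.trans_le hκ1a⟩
        · exact fun σ hσ x hx y hy => ((ha' σ hσ).2 x hx y hy).trans_le hmη
        · exact fun w hw => (hSn w hw).trans (by norm_num)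
        · rw [hw2 _ (mem_image_of_mem _ ((hT _).2 ⟨S_clq v 1, S_card v 1, hSn⟩))]
          exact one_ne_zero

lemma PP_all {ι : Type*} (e : ι → OpenPartialHomeomorph M (Fin n → ℝ))
    (he : ∀ i, Metric.closedBall 0 4 ⊆ (e i).target) (hn : 1 ≤ n) (s : Finset ι) : PP e s := by
  induction s using Finset.induction_on with
  | empty => exact PP_empty e
  | insert k s _ ih => exact step e he hn s k ih

end
end VC

namespace VC
open Finset Classical

noncomputable section

lemma exists_chart {n : ℕ} {M : Type*} [MetricSpace M] [ChartedSpace (EuclideanSpace ℝ (Fin n)) M]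
    (q : M) : ∃ e : OpenPartialHomeomorph M (Fin n → ℝ), Metric.closedBall 0 4 ⊆ e.target ∧
      q ∈ e.source ∧ e q = 0 := by
  set e0 : OpenPartialHomeomorph M (Fin n → ℝ) :=
    (chartAt (EuclideanSpace ℝ (Fin n)) q).transHomeomorph
      (EuclideanSpace.equiv (Fin n) ℝ).toHomeomorph with he0
  have hq : q ∈ e0.source := by
    simp [he0]
  set a := e0 q with ha
  have hnb : e0.target ∈ nhds a := e0.open_target.mem_nhds (e0.map_source hq)
  obtain ⟨r, hr, hball⟩ := Metric.mem_nhds_iff.1 hnb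
  have hl : (8 / r : ℝ) ≠ 0 := by positivity
  set g : (Fin n → ℝ) ≃ₜ (Fin n → ℝ) :=
    (Homeomorph.subRight a).trans (Homeomorph.smulOfNeZero (8 / r) hl) with hg
  refine ⟨e0.transHomeomorph g, ?_, ?_, ?_⟩
  · intro u hu
    have hu : ‖u‖ ≤ 4 := by simpa using hu
    have h1 : g.symm u = (8 / r)⁻¹ • u + a := by
      rw [Homeomorph.symm_apply_eq]
      simp [hg, smul_smul, hl, hr.ne']
    show g.symm u ∈ e0.target
    apply hball
    rw [h1, Metric.mem_ball, dist_eq_norm, add_sub_cancel_right, norm_smul, norm_inv,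
      Real.norm_eq_abs, abs_of_pos (by positivity), inv_div]
    have : r / 8 * ‖u‖ ≤ r / 8 * 4 := by gcongr
    linarith
  · exact hq
  · show g (e0 q) = 0
    simp [hg, ha]

lemma core {n : ℕ} (hn : 1 ≤ n) {M : Type*} [MetricSpace M] [CompactSpace M]
    [ChartedSpace (EuclideanSpace ℝ (Fin n)) M]
    (f : C(M, M)) (hf : f.Homotopic (ContinuousMap.id M)) : Function.Surjective f := by
  have hch := fun q : M => exists_chart (n := n) q
  choose e he hes he0 using hch
  obtain ⟨t, ht⟩ := CompactSpace.elim_nhds_subcover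
    (fun q => (e q).source ∩ (e q) ⁻¹' Metric.ball 0 1)
    (fun q => ((e q).isOpen_inter_preimage Metric.isOpen_ball).mem_nhds
      ⟨hes q, by simp [he0]⟩)
  have hcov : ∀ y : M, ∃ i ∈ t, ∃ c, ‖c‖ ≤ 1 ∧ (e i).symm c = y := by
    intro y
    have : y ∈ ⋃ x ∈ t, (e x).source ∩ (e x) ⁻¹' Metric.ball 0 1 := by rw [ht]; trivial
    simp only [Set.mem_iUnion] at this
    obtain ⟨i, hi, h1, h2⟩ := this
    refine ⟨i, hi, e i y, ?_, (e i).left_inv h1⟩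
    have : ‖e i y‖ < 1 := by simpa using h2
    exact this.le
  obtain ⟨ρ, hρ, hP⟩ := PP_all e he hn t
  by_contra hsurj
  obtain ⟨q, hq⟩ : ∃ q, ∀ x, f x ≠ q := by
    unfold Function.Surjective at hsurj
    push Not at hsurj
    exact hsurj
  have hcl : IsClosed (Set.range f) := (isCompact_range f.continuous).isClosed
  obtain ⟨r0, hr0, hball⟩ := Metric.mem_nhds_iff.1
    (hcl.isOpen_compl.mem_nhds (show q ∈ (Set.range f)ᶜ by rintro ⟨x, hx⟩; exact hq x hx))
  obtain ⟨η, hη, hG⟩ := lemG_fin e he t (show 0 < r0 / 2 by positivity)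
  obtain ⟨H⟩ := hf
  have huc : UniformContinuous (fun x : unitInterval × M => H x) :=
    CompactSpace.uniformContinuous_of_continuous H.continuous
  obtain ⟨δ, hδ, hH⟩ := Metric.uniformContinuous_iff.1 huc η hη
  obtain ⟨z, za, zb, zc⟩ := hP (min δ (r0 / 2)) (by positivity)
  have hbd : ∀ τ, bd z τ = 0 := by
    intro τ
    by_contra hne
    have hcard := bd_card (fun σ hσ => (za σ hσ).1) hne
    obtain ⟨x, hx⟩ : τ.Nonempty := card_pos.1 (by omega)
    obtain ⟨i, hi, c, hc, hcx⟩ := hcov x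
    have := zb τ hne x hx i hi c hc
    rw [hcx, dist_self] at this
    linarith
  obtain ⟨i, hi, c, hc, hcq⟩ := hcov q
  obtain ⟨j, hj, c', hc', hd, hom⟩ := zc i hi c hc
  rw [hcq] at hd
  have hsm : ∀ σ ∈ z.support, ∀ s s' : unitInterval, dist s s' < δ → ∀ x ∈ σ, ∀ y ∈ σ,
      dist (H (s, x)) (H (s', y)) < η := by
    intro σ hσ s s' hs x hx y hy
    apply hH
    rw [Prod.dist_eq]
    exact max_lt hs (((za σ hσ).2 x hx y hy).trans_le (min_le_left _ _))
  have hlc : IsLocallyConstant (fun s : unitInterval =>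
      om (lab (e j) c') (push (fun x => H (s, x)) z)) := by
    rw [IsLocallyConstant.iff_eventually_eq]
    intro s
    filter_upwards [Metric.ball_mem_nhds s hδ] with s' hs'
    have hs' : dist s' s < δ := hs'
    apply lemM1 (e j) (hG j hj c' hc')
    · intro σ hσ x hx y hy
      rcases hx with ⟨x, hx, rfl⟩ | ⟨x, hx, rfl⟩ <;> rcases hy with ⟨y, hy, rfl⟩ | ⟨y, hy, rfl⟩
      · exact hsm σ hσ _ _ (by simpa using hδ) x hx y hy
      · exact hsm σ hσ _ _ hs' x hx y hy
      · exact hsm σ hσ _ _ (by rwa [dist_comm]) x hx y hy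
      · exact hsm σ hσ _ _ (by simpa using hδ) x hx y hy
    · intro τ hτ
      exact absurd (hbd τ) (Finsupp.mem_support_iff.1 hτ)
    · intro τ hτ
      exact absurd (hbd τ) (Finsupp.mem_support_iff.1 hτ)
  have heq := hlc.apply_eq_of_preconnectedSpace 0 1
  have h0 : (fun x => H ((0 : unitInterval), x)) = f := by funext x; simp
  have h1 : (fun x => H ((1 : unitInterval), x)) = id := by funext x; simp
  simp only [h0, h1] at heq
  rw [om_push_id] at heq
  rw [← heq] at hom
  obtain ⟨σ', hσ', hrb⟩ := rainbow hom
  obtain ⟨σ, hσ, hit⟩ := exists_of_push_ne (Finsupp.mem_support_iff.1 hσ')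
  have hnear := hG j hj c' hc' (σ' : Set M) (by
    rw [← hit.2]
    rintro _ ⟨x, hx, rfl⟩ _ ⟨y, hy, rfl⟩
    have := hsm σ hσ 0 0 (by simpa using hδ) x hx y hy
    simpa using this) hrb
  obtain ⟨y, hy, _⟩ := hrb 0
  have hy' : y ∈ f '' σ := by rw [hit.2]; exact hy
  obtain ⟨x, hx, rfl⟩ := hy'
  have hd1 := (hnear _ hy).1
  have hmem : f x ∈ Metric.ball q r0 := by
    rw [Metric.mem_ball]
    have h2 := dist_triangle (f x) ((e j).symm c') q
    rw [dist_comm ((e j).symm c')] at h2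
    have := min_le_right δ (r0 / 2)
    linarith
  exact hball hmem ⟨x, rfl⟩

lemma zero_case {M : Type*} [TopologicalSpace M] [ChartedSpace (EuclideanSpace ℝ (Fin 0)) M]
    [ConnectedSpace M] : Subsingleton M := by
  have : DiscreteTopology M := by
    rw [discreteTopology_iff_isOpen_singleton]
    intro x
    have : (chartAt (EuclideanSpace ℝ (Fin 0)) x).source = {x} := by
      ext y
      constructor
      · intro hy
        exact (chartAt (EuclideanSpace ℝ (Fin 0)) x).injOn hy (mem_chart_source _ x)
          (Subsingleton.elim _ _)
      · rintro rfl
        exact mem_chart_source _ _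
    rw [← this]
    exact (chartAt (EuclideanSpace ℝ (Fin 0)) x).open_source
  exact PreconnectedSpace.trivial_of_discrete

end
end VC

/-- Let `M` be a connected compact topological `n`-manifold without
boundary and `f : M → M` a continuous map. If `f` is homotopic to the identity map,
then `f` is surjective. -/
theorem statement0 (n : ℕ) (M : Type*) [TopologicalSpace M] [T2Space M]
    [SecondCountableTopology M] [ChartedSpace (EuclideanSpace ℝ (Fin n)) M]
    [CompactSpace M] [ConnectedSpace M]
    (f : C(M, M)) (hf : f.Homotopic (ContinuousMap.id M)) :
    Function.Surjective f := by
  rcases Nat.eq_zero_or_pos n with h0 | hn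
  · subst h0
    have := VC.zero_case (M := M)
    exact fun y => ⟨y, Subsingleton.elim _ _⟩
  · letI : MetricSpace M := TopologicalSpace.metrizableSpaceMetric M
    exact VC.core hn f hf
end

section
/- Let K be a finite simplicial complex of dimension r with H_r(|K|; ℤ/2) ≠ 0, and let σ = Σᵢ σᵢ be a nonzero r-cycle in the simplicial chain group C_r(K; ℤ/2) (so ∂_r σ = 0, σ ≠ 0). If f : |K| → |K| is continuous and homotopic to the identity, then the support ⋃ᵢ σᵢ(Δ_r) of σ is contained in f(|K|). -/
open Geometry

set_option linter.unusedSectionVars false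

abbrev Ch (A : Type*) := Finset A →₀ ZMod 2

namespace Ch

noncomputable section

variable {A B W : Type*} [DecidableEq A] [DecidableEq B] [DecidableEq W]

/-- the basis element of a finset -/
def of (s : Finset A) : Ch A := Finsupp.single s 1

/-- linear extension -/
def ext (g : Finset A → Ch B) : Ch A →ₗ[ZMod 2] Ch B := Finsupp.linearCombination (ZMod 2) g

@[simp] lemma ext_of (g : Finset A → Ch B) (s : Finset A) : ext g (of s) = g s := by
  simp [ext, of]

lemma hom_ext {M : Type*} [AddCommGroup M] [Module (ZMod 2) M] {f g : Ch A →ₗ[ZMod 2] M}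
    (h : ∀ s, f (of s) = g (of s)) (x : Ch A) : f x = g x := by
  have : f = g := by
    apply Finsupp.lhom_ext'
    intro s
    ext
    exact h s
  rw [this]

lemma add_self (x : Ch A) : x + x = 0 := by
  ext s
  exact CharTwo.add_self_eq_zero _

/-- boundary -/
def bd : Ch A →ₗ[ZMod 2] Ch A := ext fun s => ∑ v ∈ s, of (s.erase v)

@[simp] lemma bd_of (s : Finset A) : bd (of s) = ∑ v ∈ s, of (s.erase v) := by simp [bd]

/-- cone -/
def cone (b : A) : Ch A →ₗ[ZMod 2] Ch A := ext fun s => if b ∈ s then 0 else of (insert b s)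

@[simp] lemma cone_of (b : A) (s : Finset A) :
    cone b (of s) = if b ∈ s then 0 else of (insert b s) := by simp [cone]

lemma cone_of_not {b : A} {s : Finset A} (h : b ∉ s) : of (insert b s) = cone b (of s) := by
  simp [h]

lemma bd_cone (b : A) (x : Ch A) : bd (cone b x) = x + cone b (bd x) := by
  refine hom_ext (f := bd ∘ₗ cone b) (g := LinearMap.id + cone b ∘ₗ bd) ?_ x
  intro s
  simp only [LinearMap.comp_apply, LinearMap.add_apply, LinearMap.id_apply, cone_of, bd_of, map_sum]
  by_cases hb : b ∈ s
  · rw [if_pos hb, map_zero, ← Finset.add_sum_erase _ _ hb]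
    rw [Finset.sum_eq_zero]
    · simp [Finset.insert_erase hb, add_self]
    · intro v hv
      rw [if_pos]
      rw [Finset.mem_erase] at hv ⊢
      exact ⟨hv.1.symm, hb⟩
  · rw [if_neg hb, bd_of, Finset.sum_insert hb, Finset.erase_insert hb]
    congr 1
    apply Finset.sum_congr rfl
    intro v hv
    have hne : v ≠ b := by rintro rfl; exact hb hv
    rw [if_neg (by simp [hb]), Finset.erase_insert_of_ne hne.symm]

lemma bd_bd_of (s : Finset A) : bd (bd (of s)) = 0 := by
  induction s using Finset.induction_on with
  | empty => simp
  | insert b s hb ih =>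
    rw [cone_of_not hb]
    rw [bd_cone, map_add, bd_cone, ih, map_zero, add_zero, add_self]

lemma bd_bd (x : Ch A) : bd (bd x) = 0 := by
  induction x using Finsupp.induction_linear with
  | zero => rw [map_zero, map_zero]
  | add f g hf hg => rw [map_add, map_add, hf, hg, add_zero]
  | single s a =>
    have : (Finsupp.single s a : Ch A) = a • of s := by simp [of]
    rw [this, map_smul, map_smul, bd_bd_of, smul_zero]

open Classical in
/-- push forward -/
def push (l : A → B) : Ch A →ₗ[ZMod 2] Ch B :=
  ext fun s => if Set.InjOn l s then of (s.image l) else 0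

open Classical in
lemma push_of (l : A → B) (s : Finset A) :
    push l (of s) = if Set.InjOn l s then of (s.image l) else 0 := by simp [push]

lemma push_cone (l : A → B) (b : A) (x : Ch A) : push l (cone b x) = cone (l b) (push l x) := by
  classical
  refine hom_ext (f := push l ∘ₗ cone b) (g := cone (l b) ∘ₗ push l) ?_ x
  intro s
  simp only [LinearMap.comp_apply, cone_of, push_of]
  by_cases hb : b ∈ s
  · rw [if_pos hb, map_zero]
    split_ifs
    · rw [cone_of, if_pos (Finset.mem_image_of_mem _ hb)]
    · simp
  · rw [if_neg hb, push_of]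
    have : Set.InjOn l (insert b s : Finset A) ↔ Set.InjOn l s ∧ l b ∉ s.image l := by
      rw [Finset.coe_insert, Set.injOn_insert (by simpa using hb)]
      simp
    by_cases h1 : Set.InjOn l s
    · by_cases h2 : l b ∈ s.image l
      · rw [if_neg (by tauto), if_pos h1, cone_of, if_pos h2]
      · rw [if_pos (by tauto), if_pos h1, cone_of, if_neg h2, Finset.image_insert]
    · rw [if_neg (by tauto), if_neg h1, map_zero]

lemma bd_push (l : A → B) (x : Ch A) : bd (push l x) = push l (bd x) := by
  refine hom_ext (f := bd ∘ₗ push l) (g := push l ∘ₗ bd) ?_ x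
  intro s
  induction s using Finset.induction_on with
  | empty => simp [push_of]
  | insert b s hb ih =>
    rw [cone_of_not hb]
    simp only [LinearMap.comp_apply] at ih ⊢
    rw [push_cone, bd_cone, ih, bd_cone, map_add, push_cone]

/-- recursive cone construction -/
def rc (a : Finset A → W) (g : Finset A → Ch W) (z : Ch W) (s : Finset A) : Ch W :=
  if s = ∅ then z else cone (a s) (g s + ∑ v ∈ s.attach, rc a g z (s.erase v))
termination_by s.card
decreasing_by exact Finset.card_erase_lt_of_mem v.2

lemma rc_empty (a : Finset A → W) (g : Finset A → Ch W) (z : Ch W) : rc a g z ∅ = z := by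
  rw [rc]; simp

lemma rc_ne (a : Finset A → W) (g : Finset A → Ch W) (z : Ch W) {s : Finset A} (hs : s ≠ ∅) :
    rc a g z s = cone (a s) (g s + ∑ v ∈ s, rc a g z (s.erase v)) := by
  rw [rc, if_neg hs, Finset.sum_attach s (fun v => rc a g z (s.erase v))]

lemma bd_rc (a : Finset A → W) (g : Ch A →ₗ[ZMod 2] Ch W) (z : Ch W)
    (hz : bd z = g (of ∅)) (hg : ∀ x, bd (g x) = g (bd x)) (x : Ch A) :
    bd (ext (rc a (fun s => g (of s)) z) x) = g x + ext (rc a (fun s => g (of s)) z) (bd x) := by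
  set R := ext (rc a (fun s => g (of s)) z) with hR
  refine hom_ext (f := bd ∘ₗ R) (g := g + R ∘ₗ bd) ?_ x
  intro s
  simp only [LinearMap.comp_apply, LinearMap.add_apply]
  induction h : s.card using Nat.strong_induction_on generalizing s with
  | _ n ih =>
    by_cases hs : s = ∅
    · subst hs
      simp [hR, rc_empty, hz]
    · have h1 : R (of s) = cone (a s) (g (of s) + R (bd (of s))) := by
        rw [hR, ext_of, rc_ne _ _ _ hs]
        simp [map_sum]
      have h2 : bd (R (bd (of s))) = g (bd (of s)) := by
        have : bd (R (bd (of s))) = g (bd (of s)) + R (bd (bd (of s))) := by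
          rw [bd_of]
          simp only [map_sum]
          rw [← Finset.sum_add_distrib]
          apply Finset.sum_congr rfl
          intro v hv
          exact ih _ (h ▸ Finset.card_erase_lt_of_mem hv) _ rfl
        rw [this, bd_bd, map_zero, add_zero]
      rw [h1, bd_cone, map_add, h2, hg, add_self, map_zero, add_zero]

/-- chains supported on a set of simplices -/
def sup (S : Set (Finset A)) : Submodule (ZMod 2) (Ch A) := Finsupp.supported _ _ S

lemma of_mem {S : Set (Finset A)} {s : Finset A} (h : s ∈ S) : of s ∈ sup S :=
  Finsupp.single_mem_supported _ _ h

lemma map_mem {S : Set (Finset A)} {M : Submodule (ZMod 2) (Ch B)} (f : Ch A →ₗ[ZMod 2] Ch B)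
    (h : ∀ s ∈ S, f (of s) ∈ M) {x : Ch A} (hx : x ∈ sup S) : f x ∈ M := by
  have : sup S ≤ M.comap f := by
    rw [sup, Finsupp.supported_eq_span_single, Submodule.span_le]
    rintro _ ⟨s, hs, rfl⟩
    exact h s hs
  exact this hx

lemma sup_mono {S T : Set (Finset A)} (h : S ⊆ T) {x : Ch A} (hx : x ∈ sup S) : x ∈ sup T :=
  Finsupp.supported_mono h hx

lemma apply_eq_zero {S : Set (Finset A)} {x : Ch A} (hx : x ∈ sup S) {s : Finset A} (hs : s ∉ S) :
    x s = 0 := (Finsupp.mem_supported' _ _).1 hx s hs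

lemma rc_mem (a : Finset A → W) (g : Finset A → Ch W) (z : Ch W) (Q : Finset A → Set (Finset W))
    (T : Finset A → Set (Finset W)) (F : Finset A → Prop) (hF : ∀ s, F s → ∀ v, F (s.erase v))
    (hz : z ∈ sup (Q ∅)) (hg : ∀ s, F s → s ≠ ∅ → g s ∈ sup (T s))
    (h1 : ∀ s, F s → s ≠ ∅ → ∀ t ∈ T s, insert (a s) t ∈ Q s ∨ a s ∈ t)
    (h2 : ∀ s, F s → s ≠ ∅ → ∀ v ∈ s, ∀ t ∈ Q (s.erase v), insert (a s) t ∈ Q s ∨ a s ∈ t)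
    (s : Finset A) (hs : F s) : rc a g z s ∈ sup (Q s) := by
  induction h : s.card using Nat.strong_induction_on generalizing s with
  | _ n ih =>
    have key : ∀ t, (insert (a s) t ∈ Q s ∨ a s ∈ t) → cone (a s) (of t) ∈ sup (Q s) := by
      intro t ht
      rw [cone_of]
      split_ifs with h
      · exact zero_mem _
      · exact of_mem (ht.resolve_right h)
    by_cases hs0 : s = ∅
    · subst hs0
      rwa [rc_empty]
    · rw [rc_ne _ _ _ hs0, map_add, map_sum]
      refine add_mem (map_mem _ (fun t ht => key t (h1 s hs hs0 t ht)) (hg s hs hs0))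
        (sum_mem fun v hv => ?_)
      exact map_mem _ (fun t ht => key t (h2 s hs hs0 v hv t ht))
        (ih _ (h ▸ Finset.card_erase_lt_of_mem hv) _ (hF s hs v) rfl)

end

end Ch
namespace Ch

noncomputable section

variable {A B W : Type*} [DecidableEq A] [DecidableEq B] [DecidableEq W]
variable [NormedAddCommGroup W] [NormedSpace ℝ W]

/-- barycenter -/
def bary (s : Finset W) : W := (s.card : ℝ)⁻¹ • ∑ v ∈ s, v

lemma bary_mem {s : Finset W} (hs : s ≠ ∅) : bary s ∈ convexHull ℝ (s : Set W) := by
  have hc : (s.card : ℝ) ≠ 0 := by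
    simpa using hs
  rw [Finset.mem_convexHull']
  refine ⟨fun _ => (s.card : ℝ)⁻¹, fun _ _ => by positivity, ?_, ?_⟩
  · simp [hc]
  · simp [bary, Finset.smul_sum]

lemma dist_bary {s : Finset W} {N : ℕ} (hN : s.card ≤ N) {d : ℝ} (hd : 0 ≤ d)
    (h : ∀ x ∈ s, ∀ y ∈ s, dist x y ≤ d) {p : W} (hp : p ∈ convexHull ℝ (s : Set W)) :
    dist (bary s) p ≤ (1 - 1 / (N : ℝ)) * d := by
  have hs : s.Nonempty := by
    rcases s.eq_empty_or_nonempty with rfl | h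
    · simp at hp
    · exact h
  have hc : (0 : ℝ) < s.card := by exact_mod_cast hs.card_pos
  have key : (s : Set W) ⊆ Metric.closedBall (bary s) ((1 - 1 / (N : ℝ)) * d) := by
    intro v hv
    have hv : v ∈ s := hv
    rw [Metric.mem_closedBall, dist_comm, dist_eq_norm]
    have e : bary s - v = (s.card : ℝ)⁻¹ • ∑ w ∈ s.erase v, (w - v) := by
      have : ∑ w ∈ s.erase v, (w - v) = ∑ w ∈ s, (w - v) := by
        rw [← Finset.add_sum_erase _ _ hv]; simp
      rw [this, Finset.sum_sub_distrib, smul_sub, bary]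
      simp only [Finset.sum_const]
      rw [← Nat.cast_smul_eq_nsmul ℝ, smul_smul, inv_mul_cancel₀ hc.ne', one_smul]
    rw [e, norm_smul]
    have h1 : ‖∑ w ∈ s.erase v, (w - v)‖ ≤ (s.card - 1 : ℝ) * d := by
      refine (norm_sum_le_of_le (f := fun w => w - v) (n := fun _ => d) _ ?_).trans ?_
      · intro w hw
        rw [← dist_eq_norm]
        exact h _ (Finset.mem_of_mem_erase hw) _ hv
      · rw [Finset.sum_const, Finset.card_erase_of_mem hv, nsmul_eq_mul,
          Nat.cast_sub hs.card_pos]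
        simp
    have h2 : ‖((s.card : ℝ)⁻¹)‖ = (s.card : ℝ)⁻¹ := by simp
    rw [h2]
    calc (s.card : ℝ)⁻¹ * ‖∑ w ∈ s.erase v, (w - v)‖
        ≤ (s.card : ℝ)⁻¹ * ((s.card - 1 : ℝ) * d) := by gcongr
      _ = (1 - 1 / (s.card : ℝ)) * d := by field_simp
      _ ≤ (1 - 1 / (N : ℝ)) * d := by gcongr
  have := convexHull_min key (convex_closedBall _ _) hp
  rwa [Metric.mem_closedBall, dist_comm] at this

/-- subdivision -/
def sd : Ch W →ₗ[ZMod 2] Ch W :=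
  ext (rc bary (fun s => (0 : Ch W →ₗ[ZMod 2] Ch W) (of s)) (of ∅))

lemma bd_sd (x : Ch W) : bd (sd x) = sd (bd x) := by
  have := bd_rc (W := W) bary (0 : Ch W →ₗ[ZMod 2] Ch W) (of ∅) (by rw [bd_of]; rfl)
    (fun x => by rw [LinearMap.zero_apply, LinearMap.zero_apply, map_zero]) x
  rw [LinearMap.zero_apply, zero_add] at this
  exact this

/-- good simplices -/
def Gd (s : Finset W) (d : ℝ) : Set (Finset W) :=
  {t | t.card = s.card ∧ (t : Set W) ⊆ convexHull ℝ (s : Set W) ∧ ∀ x ∈ t, ∀ y ∈ t, dist x y ≤ d}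

lemma sd_mem {N : ℕ} (hN : 1 ≤ N) {d : ℝ} (hd : 0 ≤ d) (s : Finset W) (hs : s.card ≤ N)
    (h : ∀ x ∈ s, ∀ y ∈ s, dist x y ≤ d) : sd (of s) ∈ sup (Gd s ((1 - 1 / (N : ℝ)) * d)) := by
  rw [sd, ext_of]
  refine rc_mem _ _ _ (fun s => Gd s ((1 - 1 / (N : ℝ)) * d)) (fun _ => ∅)
    (fun s => s.card ≤ N ∧ ∀ x ∈ s, ∀ y ∈ s, dist x y ≤ d) ?_ ?_ ?_ ?_ ?_ s ⟨hs, h⟩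
  · intro s hs v
    exact ⟨(Finset.card_erase_le).trans hs.1, fun x hx y hy => hs.2 x (Finset.mem_of_mem_erase hx)
      y (Finset.mem_of_mem_erase hy)⟩
  · exact of_mem (by simp [Gd])
  · intro s _ _
    rw [LinearMap.zero_apply]
    exact zero_mem _
  · intro s _ _ t ht
    exact ht.elim
  · intro s hs hs0 v hv t ht
    by_cases hb : bary s ∈ t
    · exact Or.inr hb
    left
    obtain ⟨h1, h2, h3⟩ := ht
    have h2' : (t : Set W) ⊆ convexHull ℝ (s : Set W) :=
      h2.trans (convexHull_mono (by simp))
    have hκ : 0 ≤ (1 - 1 / (N : ℝ)) * d := by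
      apply mul_nonneg _ hd
      have : (1 : ℝ) ≤ N := by exact_mod_cast hN
      rw [sub_nonneg, div_le_one (by linarith)]
      exact this
    refine ⟨?_, ?_, ?_⟩
    · rw [Finset.card_insert_of_notMem hb, h1, Finset.card_erase_add_one hv]
    · rw [Finset.coe_insert]
      exact Set.insert_subset (bary_mem hs0) h2'
    · intro x hx y hy
      rw [Finset.mem_insert] at hx hy
      rcases hx with rfl | hx <;> rcases hy with rfl | hy
      · simpa using hκ
      · exact dist_bary hs.1 hd hs.2 (h2' hy)
      · rw [dist_comm]; exact dist_bary hs.1 hd hs.2 (h2' hx)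
      · exact h3 x hx y hy

/-- iterated subdivision -/
def sdm : ℕ → Ch W →ₗ[ZMod 2] Ch W
  | 0 => LinearMap.id
  | m + 1 => sd ∘ₗ sdm m

lemma bd_sdm (m : ℕ) (x : Ch W) : bd (sdm m x) = sdm m (bd x) := by
  induction m with
  | zero => rfl
  | succ m ih => simp only [sdm, LinearMap.comp_apply, bd_sd, ih]

lemma sdm_mem {N : ℕ} (hN : 1 ≤ N) {d : ℝ} (hd : 0 ≤ d) (s : Finset W) (hs : s.card ≤ N)
    (h : ∀ x ∈ s, ∀ y ∈ s, dist x y ≤ d) (m : ℕ) :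
    sdm m (of s) ∈ sup (Gd s ((1 - 1 / (N : ℝ)) ^ m * d)) := by
  have hκ : 0 ≤ (1 - 1 / (N : ℝ)) := by
    have : (1 : ℝ) ≤ N := by exact_mod_cast hN
    rw [sub_nonneg, div_le_one (by linarith)]
    exact this
  induction m with
  | zero =>
    refine of_mem ⟨rfl, subset_convexHull _ _, ?_⟩
    simpa using h
  | succ m ih =>
    rw [sdm, LinearMap.comp_apply]
    refine map_mem _ ?_ ih
    rintro t ⟨h1, h2, h3⟩
    refine sup_mono ?_ (sd_mem hN (mul_nonneg (pow_nonneg hκ m) hd) t (h1 ▸ hs) h3)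
    rintro u ⟨k1, k2, k3⟩
    refine ⟨k1.trans h1, k2.trans (convexHull_min h2 (convex_convexHull _ _)), ?_⟩
    intro x hx y hy
    refine (k3 x hx y hy).trans (le_of_eq ?_)
    ring

lemma exists_sdm {N : ℕ} (hN : 1 ≤ N) {d δ : ℝ} (hd : 0 ≤ d) (hδ : 0 < δ) :
    ∃ m : ℕ, ∀ s : Finset W, s.card ≤ N → (∀ x ∈ s, ∀ y ∈ s, dist x y ≤ d) →
      sdm m (of s) ∈ sup (Gd s δ) := by
  have h1 : (1 : ℝ) ≤ N := by exact_mod_cast hN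
  have hκ : 0 ≤ (1 - 1 / (N : ℝ)) := by
    rw [sub_nonneg, div_le_one (by linarith)]
    exact h1
  have hκ1 : (1 - 1 / (N : ℝ)) < 1 := by
    have : 0 < 1 / (N : ℝ) := by positivity
    linarith
  obtain ⟨m, hm⟩ := exists_pow_lt_of_lt_one (show 0 < δ / (d + 1) by positivity) hκ1
  refine ⟨m, fun s hs h => sup_mono ?_ (sdm_mem hN hd s hs h m)⟩
  rintro t ⟨k1, k2, k3⟩
  refine ⟨k1, k2, fun x hx y hy => (k3 x hx y hy).trans ?_⟩
  have h2 := mul_le_mul_of_nonneg_right hm.le hd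
  refine h2.trans ?_
  rw [div_mul_eq_mul_div, div_le_iff₀ (by positivity)]
  nlinarith

variable {E : Type*} [DecidableEq E] [NormedAddCommGroup E] [NormedSpace ℝ E]

/-- level inclusion -/
def lv (j : ℝ) (v : E) : ℝ × E := (j, v)

lemma lv_inj (j : ℝ) : Function.Injective (lv (E := E) j) := fun x y h => (Prod.ext_iff.1 h).2

lemma push_lv (j : ℝ) (s : Finset E) : push (lv j) (of s) = of (s.image (lv j)) := by
  rw [push_of, if_pos (lv_inj j).injOn]

/-- the ends of the prism -/
def ends : Ch E →ₗ[ZMod 2] Ch (ℝ × E) := push (lv 1) + push (lv 0)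

open Classical in
/-- prism apex -/
def apex (s : Finset E) : ℝ × E := if h : s.Nonempty then (0, h.choose) else 0

/-- prism -/
def prism : Ch E →ₗ[ZMod 2] Ch (ℝ × E) := ext (rc apex (fun s => ends (of s)) 0)

lemma bd_prism (x : Ch E) : bd (prism x) = ends x + prism (bd x) := by
  refine bd_rc _ ends 0 ?_ ?_ x
  · rw [map_zero, ends, LinearMap.add_apply, push_lv, push_lv, Finset.image_empty,
      Finset.image_empty, add_self]
  · intro x
    simp only [ends, LinearMap.add_apply, map_add, bd_push]

/-- prism carriers -/
def PQ (k : ℕ) (s : Finset E) : Set (Finset (ℝ × E)) :=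
  {t | t.card = s.card + k ∧ (t : Set (ℝ × E)) ⊆ Set.Icc (0 : ℝ) 1 ×ˢ convexHull ℝ (s : Set E)}

lemma apex_mem (s : Finset E) (hs : s ≠ ∅) :
    apex s ∈ Set.Icc (0 : ℝ) 1 ×ˢ convexHull ℝ (s : Set E) := by
  have h : s.Nonempty := Finset.nonempty_iff_ne_empty.2 hs
  rw [apex, dif_pos h]
  exact ⟨by simp, subset_convexHull _ _ h.choose_spec⟩

lemma lv_mem (s : Finset E) (j : ℝ) (hj : j ∈ Set.Icc (0 : ℝ) 1) : s.image (lv j) ∈ PQ 0 s := by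
  refine ⟨Finset.card_image_of_injective _ (lv_inj _), ?_⟩
  intro p hp
  simp only [Finset.coe_image, Set.mem_image] at hp
  obtain ⟨v, hv, rfl⟩ := hp
  exact ⟨hj, subset_convexHull _ _ hv⟩

lemma ends_mem (s : Finset E) : ends (of s) ∈ sup (PQ 0 s) := by
  rw [ends, LinearMap.add_apply, push_lv, push_lv]
  exact add_mem (of_mem (lv_mem s 1 (by simp))) (of_mem (lv_mem s 0 (by simp)))

lemma prism_step1 (s : Finset E) (hs : s ≠ ∅) (t : Finset (ℝ × E)) (ht : t ∈ PQ 0 s) :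
    insert (apex s) t ∈ PQ 1 s ∨ apex s ∈ t := by
  obtain ⟨h1, h2⟩ := ht
  by_cases hb : apex s ∈ t
  · exact Or.inr hb
  left
  refine ⟨by rw [Finset.card_insert_of_notMem hb, h1], ?_⟩
  rw [Finset.coe_insert]
  exact Set.insert_subset (apex_mem s hs) h2

lemma prism_step2 (s : Finset E) (hs : s ≠ ∅) (v : E) (hv : v ∈ s) (t : Finset (ℝ × E))
    (ht : t ∈ PQ 1 (s.erase v)) : insert (apex s) t ∈ PQ 1 s ∨ apex s ∈ t := by
  obtain ⟨h1, h2⟩ := ht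
  by_cases hb : apex s ∈ t
  · exact Or.inr hb
  left
  refine ⟨by rw [Finset.card_insert_of_notMem hb, h1, Finset.card_erase_add_one hv], ?_⟩
  rw [Finset.coe_insert]
  exact Set.insert_subset (apex_mem s hs)
    (h2.trans (Set.prod_mono le_rfl (convexHull_mono (by simp))))

lemma prism_mem (s : Finset E) : prism (of s) ∈ sup (PQ 1 s) := by
  rw [prism, ext_of]
  exact rc_mem apex _ 0 (PQ 1) (PQ 0) (fun _ => True) (fun _ _ _ => trivial)
    (Submodule.zero_mem _) (fun s _ _ => ends_mem s) (fun s _ hs t ht => prism_step1 s hs t ht)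
    (fun s _ hs v hv t ht => prism_step2 s hs v hv t ht) s trivial

lemma hull_lv (j : ℝ) (s : Finset E) :
    convexHull ℝ ((s.image (lv j) : Finset (ℝ × E)) : Set (ℝ × E)) ⊆
      {j} ×ˢ convexHull ℝ (s : Set E) := by
  apply convexHull_min
  · intro p hp
    simp only [Finset.coe_image, Set.mem_image] at hp
    obtain ⟨v, hv, rfl⟩ := hp
    exact ⟨rfl, subset_convexHull _ _ hv⟩
  · exact (convex_singleton j).prod (convex_convexHull _ _)

theorem core (F : Set (Finset E)) (hF0 : ∅ ∈ F) (hF : ∀ s ∈ F, ∀ v, s.erase v ∈ F) (r : ℕ)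
    (hr : ∀ s ∈ F, s.card ≤ r + 1) (c : Ch E) (hc : c ∈ sup {s | s ∈ F ∧ s.card = r + 1})
    (hbd : bd c = 0) (δ d : ℝ) (hδ : 0 < δ) (hd0 : 0 ≤ d)
    (hd : ∀ s ∈ F, ∀ p ∈ Set.Icc (0 : ℝ) 1 ×ˢ convexHull ℝ (s : Set E),
      ∀ q ∈ Set.Icc (0 : ℝ) 1 ×ˢ convexHull ℝ (s : Set E), dist p q ≤ d)
    (l : ℝ × E → E)
    (hsmall : ∀ s ∈ F, ∀ t : Finset (ℝ × E),
      (t : Set (ℝ × E)) ⊆ Set.Icc (0 : ℝ) 1 ×ˢ convexHull ℝ (s : Set E) →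
      (∀ x ∈ t, ∀ y ∈ t, dist x y ≤ δ) → t.image l ∈ F)
    (hone : ∀ s ∈ F, ∀ y ∈ convexHull ℝ (s : Set E), l (1, y) ∈ s)
    (s₀ : Finset E)
    (hzero : ∀ s ∈ F, ∀ t : Finset (ℝ × E),
      (t : Set (ℝ × E)) ⊆ {0} ×ˢ convexHull ℝ (s : Set E) →
      (∀ x ∈ t, ∀ y ∈ t, dist x y ≤ δ) → t.image l ≠ s₀) : c s₀ = 0 := by
  classical
  obtain ⟨m, hm⟩ := exists_sdm (W := ℝ × E) (N := r + 2) (by omega) hd0 hδ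
  have hlev : ∀ j ∈ Set.Icc (0 : ℝ) 1, ∀ s ∈ F, sdm m (push (lv j) (of s)) ∈
      sup {t : Finset (ℝ × E) | t.card = s.card ∧
        (t : Set (ℝ × E)) ⊆ {j} ×ˢ convexHull ℝ (s : Set E) ∧
        ∀ x ∈ t, ∀ y ∈ t, dist x y ≤ δ} := by
    intro j hj s hs
    have hcard : (s.image (lv j)).card = s.card := Finset.card_image_of_injective _ (lv_inj _)
    have hsub : ((s.image (lv j) : Finset (ℝ × E)) : Set (ℝ × E)) ⊆
        Set.Icc (0 : ℝ) 1 ×ˢ convexHull ℝ (s : Set E) :=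
      (subset_convexHull ℝ _).trans ((hull_lv j s).trans
        (Set.prod_mono (by simpa using hj) le_rfl))
    rw [push_lv]
    refine sup_mono ?_ (hm (s.image (lv j)) ?_ ?_)
    · rintro t ⟨h1, h2, h3⟩
      exact ⟨h1.trans hcard, h2.trans (hull_lv j s), h3⟩
    · rw [hcard]; exact (hr s hs).trans (by omega)
    · intro x hx y hy
      exact hd s hs x (hsub hx) y (hsub hy)
  -- the prism part vanishes
  have hD : push l (sdm m (prism c)) = 0 := by
    have : push l (sdm m (prism c)) ∈ (⊥ : Submodule (ZMod 2) (Ch E)) := by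
      refine map_mem (S := {s | s ∈ F ∧ s.card = r + 1}) (push l ∘ₗ sdm m ∘ₗ prism) ?_ hc
      rintro s ⟨hs, hsr⟩
      simp only [LinearMap.comp_apply]
      refine map_mem (push l ∘ₗ sdm m) ?_ (prism_mem s)
      rintro t ⟨ht1, ht2⟩
      simp only [LinearMap.comp_apply]
      refine map_mem _ ?_ (hm t (by omega) (fun x hx y hy => hd s hs x (ht2 hx) y (ht2 hy)))
      rintro u ⟨hu1, hu2, hu3⟩
      have huF : u.image l ∈ F := hsmall s hs u (hu2.trans (convexHull_min ht2
        ((convex_Icc _ _).prod (convex_convexHull _ _)))) hu3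
      rw [push_of, if_neg]
      · exact zero_mem _
      · intro hinj
        have h1 := hr _ huF
        rw [Finset.card_image_of_injOn hinj] at h1
        omega
    simpa using this
  have hE : push l (sdm m (push (lv 1) c)) + push l (sdm m (push (lv 0) c)) = 0 := by
    have h := congrArg bd hD
    rw [bd_push, bd_sdm, bd_prism, hbd, map_zero, map_zero, add_zero, ends, LinearMap.add_apply,
      map_add, map_add] at h
    exact h
  -- level one : Sperner
  have h1 : ∀ s ∈ F, push l (sdm m (push (lv 1) (of s))) = of s := by
    intro s
    induction h : s.card using Nat.strong_induction_on generalizing s with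
    | _ n ih =>
      intro hs
      have hcar : push l (sdm m (push (lv 1) (of s))) ∈ sup {s} := by
        refine map_mem _ ?_ (hlev 1 (by simp) s hs)
        rintro t ⟨ht1, ht2, ht3⟩
        rw [push_of]
        split_ifs with hinj
        · refine of_mem ?_
          apply Finset.eq_of_subset_of_card_le
          · intro w hw
            obtain ⟨⟨j, y⟩, hp, rfl⟩ := Finset.mem_image.1 hw
            have := ht2 hp
            obtain ⟨hj, hy⟩ := this
            have hj : j = 1 := hj
            subst hj
            exact hone s hs y hy
          · rw [Finset.card_image_of_injOn hinj, ht1]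
        · exact zero_mem _
      set z := push l (sdm m (push (lv 1) (of s))) with hz
      have hz1 : z = (z s) • of s := by
        ext t
        by_cases hts : t = s
        · subst hts; simp [of]
        · rw [apply_eq_zero hcar (by simpa using hts)]
          simp [of, Ne.symm hts]
      by_cases hs0 : s = ∅
      · subst hs0
        have hp : push (lv 1) (of (∅ : Finset E)) = of ∅ := by simp [push_lv]
        have hsd : ∀ k, sdm k (of (∅ : Finset (ℝ × E))) = of ∅ := by
          intro k
          induction k with
          | zero => rfl
          | succ k ihk => rw [sdm, LinearMap.comp_apply, ihk, sd, ext_of, rc_empty]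
        rw [hz, hp, hsd, push_of]
        simp
      · have hb : bd z = bd (of s) := by
          rw [hz, bd_push, bd_sdm, bd_push, bd_of]
          simp only [map_sum]
          apply Finset.sum_congr rfl
          intro v hv
          exact ih _ (h ▸ Finset.card_erase_lt_of_mem hv) _ rfl (hF s hs v)
        have h01 : ∀ a : ZMod 2, a = 0 ∨ a = 1 := by decide
        rcases h01 (z s) with h0 | h0
        · exfalso
          rw [h0, zero_smul] at hz1
          rw [hz1, map_zero] at hb
          obtain ⟨v, hv⟩ := Finset.nonempty_iff_ne_empty.2 hs0
          have hbv := DFunLike.congr_fun hb (s.erase v)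
          rw [bd_of, Finsupp.finsetSum_apply, Finset.sum_eq_single v] at hbv
          · simp [of] at hbv
          · intro w hw hwv
            rw [of, Finsupp.single_apply, if_neg]
            intro he
            have : v ∈ s.erase w := Finset.mem_erase.2 ⟨hwv.symm, hv⟩
            rw [he] at this
            simp at this
          · exact fun hn => (hn hv).elim
        · rw [h0, one_smul] at hz1
          exact hz1
  have h1c : push l (sdm m (push (lv 1) c)) = c := by
    have : (push l ∘ₗ sdm m ∘ₗ push (lv 1) - LinearMap.id : Ch E →ₗ[ZMod 2] Ch E) c ∈
        (⊥ : Submodule (ZMod 2) (Ch E)) := by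
      refine map_mem _ ?_ hc
      rintro s ⟨hs, -⟩
      simp only [LinearMap.sub_apply, LinearMap.comp_apply, LinearMap.id_apply, h1 s hs, sub_self]
      exact zero_mem _
    rw [Submodule.mem_bot, LinearMap.sub_apply, sub_eq_zero] at this
    exact this
  have h0c : push l (sdm m (push (lv 0) c)) ∈ sup {s₀}ᶜ := by
    refine map_mem (push l ∘ₗ sdm m ∘ₗ push (lv 0)) ?_ hc
    rintro s ⟨hs, -⟩
    simp only [LinearMap.comp_apply]
    refine map_mem _ ?_ (hlev 0 (by simp) s hs)
    rintro t ⟨ht1, ht2, ht3⟩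
    rw [push_of]
    split_ifs
    · exact of_mem (hzero s hs t ht2 ht3)
    · exact zero_mem _
  have h := DFunLike.congr_fun hE s₀
  rw [h1c, Finsupp.add_apply, apply_eq_zero h0c (by simp), add_zero] at h
  exact h

end

end Ch
namespace Ch

noncomputable section

variable {E : Type*} [NormedAddCommGroup E] [NormedSpace ℝ E]

/-- barycentric weights -/
structure IsW (K : Geometry.SimplicialComplex ℝ E) (s : Finset E) (y : E) (w : E → ℝ) : Prop where
  face : s ∈ K.faces
  nonneg : ∀ v, 0 ≤ w v
  out : ∀ v, v ∉ s → w v = 0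
  sum : ∑ v ∈ s, w v = 1
  comb : ∑ v ∈ s, w v • v = y

variable {K : Geometry.SimplicialComplex ℝ E}

lemma IsW.mem {s : Finset E} {y : E} {w : E → ℝ} (h : IsW K s y w) :
    y ∈ convexHull ℝ (s : Set E) := by
  rw [Finset.mem_convexHull']
  exact ⟨w, fun v _ => h.nonneg v, h.sum, h.comb⟩

lemma exists_isW {s : Finset E} (hs : s ∈ K.faces) {y : E} (hy : y ∈ convexHull ℝ (s : Set E)) :
    ∃ w, IsW K s y w := by
  classical
  rw [Finset.mem_convexHull'] at hy
  obtain ⟨w, h1, h2, h3⟩ := hy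
  refine ⟨fun v => if v ∈ s then w v else 0, hs, ?_, ?_, ?_, ?_⟩
  · intro v
    by_cases hv : v ∈ s
    · simpa [hv] using h1 v hv
    · simp [hv]
  · intro v hv; simp [hv]
  · rw [← h2]; exact Finset.sum_congr rfl fun v hv => by simp [hv]
  · rw [← h3]; exact Finset.sum_congr rfl fun v hv => by simp [hv]

lemma aff_unique {s : Finset E} (hs : s ∈ K.faces) {w w' : E → ℝ}
    (h1 : ∑ v ∈ s, w v = ∑ v ∈ s, w' v) (h2 : ∑ v ∈ s, w v • v = ∑ v ∈ s, w' v • v) :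
    ∀ v ∈ s, w v = w' v := by
  intro v hv
  have h := (affineIndependent_iff.1 (K.indep hs)) Finset.univ (fun i => w i - w' i) ?_ ?_ ⟨v, hv⟩
    (Finset.mem_univ _)
  · exact sub_eq_zero.1 h
  · rw [Finset.sum_coe_sort s (fun i => w i - w' i), Finset.sum_sub_distrib, h1, sub_self]
  · rw [Finset.sum_coe_sort s (fun i => (w i - w' i) • i)]
    simp only [sub_smul]
    rw [Finset.sum_sub_distrib, h2, sub_self]

lemma IsW.unique {s t : Finset E} {y : E} {w w' : E → ℝ} (h : IsW K s y w) (h' : IsW K t y w') :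
    w = w' := by
  classical
  have hy := K.inter_subset_convexHull h.face h'.face ⟨h.mem, h'.mem⟩
  rw [← Finset.coe_inter, Finset.mem_convexHull'] at hy
  obtain ⟨u, -, h2, h3⟩ := hy
  have key : ∀ {s : Finset E} {w : E → ℝ} (q : Finset E), q ⊆ s → IsW K s y w →
      ∑ v ∈ q, u v = 1 → ∑ v ∈ q, u v • v = y → w = fun v => if v ∈ q then u v else 0 := by
    intro s w q hq h h2 h3
    have e1 : ∑ v ∈ s, (if v ∈ q then u v else 0) = 1 := by
      rw [← h2, ← Finset.sum_filter]
      congr 1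
      ext v
      simp only [Finset.mem_filter]
      exact ⟨fun h => h.2, fun h => ⟨hq h, h⟩⟩
    have e2 : ∑ v ∈ s, (if v ∈ q then u v else 0) • v = y := by
      rw [← h3]
      simp only [ite_smul, zero_smul]
      rw [← Finset.sum_filter]
      congr 1
      ext v
      simp only [Finset.mem_filter]
      exact ⟨fun h => h.2, fun h => ⟨hq h, h⟩⟩
    funext v
    by_cases hv : v ∈ s
    · exact aff_unique h.face (h.sum.trans e1.symm) (h.comb.trans e2.symm) v hv
    · rw [h.out v hv, if_neg (fun h => hv (hq h))]
  rw [key _ Finset.inter_subset_left h h2 h3, key _ Finset.inter_subset_right h' h2 h3]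

open Classical in
/-- barycentric coordinates -/
def bc (K : Geometry.SimplicialComplex ℝ E) (y : E) : E → ℝ :=
  if h : ∃ w s, IsW K s y w then h.choose else 0

lemma IsW.bc_eq {s : Finset E} {y : E} {w : E → ℝ} (h : IsW K s y w) : bc K y = w := by
  have hex : ∃ w s, IsW K s y w := ⟨w, s, h⟩
  rw [bc, dif_pos hex]
  obtain ⟨t, ht⟩ := hex.choose_spec
  exact ht.unique h

lemma isW_bc {s : Finset E} (hs : s ∈ K.faces) {y : E} (hy : y ∈ convexHull ℝ (s : Set E)) :
    IsW K s y (bc K y) := by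
  obtain ⟨w, hw⟩ := exists_isW hs hy
  rw [hw.bc_eq]; exact hw

lemma continuousOn_bc_hull {s : Finset E} (hs : s ∈ K.faces) (v : E) :
    ContinuousOn (fun y => bc K y v) (convexHull ℝ (s : Set E)) := by
  classical
  let e : stdSimplex ℝ s → E := fun w => ∑ i : s, w.1 i • (i : E)
  have hW : ∀ w : stdSimplex ℝ s,
      IsW K s (e w) (fun u => if h : u ∈ s then w.1 ⟨u, h⟩ else 0) := by
    intro w
    refine ⟨hs, ?_, ?_, ?_, ?_⟩
    · intro u
      split_ifs with h
      · exact w.2.1 _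
      · exact le_rfl
    · intro u hu; simp [hu]
    · rw [← w.2.2, ← Finset.sum_coe_sort s]
      exact Finset.sum_congr rfl fun i _ => by rw [dif_pos i.2]
    · rw [← Finset.sum_coe_sort s]
      exact Finset.sum_congr rfl fun i _ => by rw [dif_pos i.2]
  have hcont : Continuous e := by
    apply continuous_finsetSum
    intro i _
    exact ((continuous_apply i).comp continuous_subtype_val).smul continuous_const
  have hinj : Function.Injective e := by
    intro w w' h
    have h1 := (hW w).bc_eq
    rw [h, (hW w').bc_eq] at h1
    apply Subtype.ext
    funext i
    have := congrFun h1 i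
    rw [dif_pos i.2, dif_pos i.2] at this
    exact this.symm
  have hemb : Topology.IsClosedEmbedding e := hcont.isClosedEmbedding hinj
  have hrange : convexHull ℝ (s : Set E) ⊆ Set.range e := by
    intro y hy
    have h := isW_bc hs hy
    refine ⟨⟨fun i => bc K y i, fun i => h.nonneg _, ?_⟩, ?_⟩
    · rw [Finset.sum_coe_sort s (fun i => bc K y i)]; exact h.sum
    · refine Eq.trans ?_ h.comb
      exact Finset.sum_coe_sort s (fun i => bc K y i • i)
  refine ContinuousOn.mono ?_ hrange
  rw [← Set.image_univ, hemb.isInducing.continuousOn_image_iff, continuousOn_univ]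
  have : (fun y => bc K y v) ∘ e = fun w : stdSimplex ℝ s => if h : v ∈ s then w.1 ⟨v, h⟩ else 0 := by
    funext w
    simp only [Function.comp_apply, (hW w).bc_eq]
  rw [this]
  by_cases h : v ∈ s
  · simp only [h, dif_pos]
    exact (continuous_apply _).comp continuous_subtype_val
  · simp only [h, dif_neg, not_false_eq_true]
    exact continuous_const

lemma continuousOn_bc (hK : K.faces.Finite) (v : E) :
    ContinuousOn (fun y => bc K y v) K.space := by
  have : Finite K.faces := hK
  have h : K.space = ⋃ s : K.faces, convexHull ℝ ((s : Finset E) : Set E) := by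
    rw [Geometry.SimplicialComplex.space, Set.biUnion_eq_iUnion]
  rw [h]
  refine LocallyFinite.continuousOn_iUnion (locallyFinite_of_finite _) ?_ ?_
  · intro s
    exact (s : Finset E).finite_toSet.isClosed_convexHull ℝ
  · intro s
    exact continuousOn_bc_hull s.2 v

lemma isCompact_space (hK : K.faces.Finite) : IsCompact K.space :=
  hK.isCompact_biUnion fun s _ => s.finite_toSet.isCompact_convexHull ℝ

/-- top-dimensional simplices -/
lemma top_eq {r : ℕ} (hdim : ∀ s ∈ K.faces, s.card ≤ r + 1) {s : Finset E}
    (hsr : s.card = r + 1) {y : E} (hy : y ∈ K.space) (h : ∀ v ∈ s, bc K y v ≠ 0) :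
    y ∈ convexHull ℝ (s : Set E) := by
  obtain ⟨t, ht, hyt⟩ := Geometry.SimplicialComplex.mem_space_iff.1 hy
  have hw := isW_bc ht hyt
  have hst : s ⊆ t := fun v hv => by
    by_contra hvt
    exact h v hv (hw.out v hvt)
  have : s = t := Finset.eq_of_subset_of_card_le hst (by rw [hsr]; exact hdim t ht)
  rw [this]; exact hyt

end

end Ch
namespace Ch

noncomputable section

variable {E : Type*} [NormedAddCommGroup E] [NormedSpace ℝ E]
variable {K : Geometry.SimplicialComplex ℝ E}

lemma push_off (hK : K.faces.Finite) {r : ℕ} (hdim : ∀ s ∈ K.faces, s.card ≤ r + 1)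
    {s : Finset E} (hs : s ∈ K.faces) (hsr : s.card = r + 1) {x : E}
    (hx : x ∈ convexHull ℝ (s : Set E)) (hpos : ∀ v ∈ s, 0 < bc K x v)
    (f : C(↥K.space, ↥K.space)) (hf : ∀ z, (f z : E) ≠ x) :
    ∃ f' : C(↥K.space, ↥K.space), f'.Homotopic f ∧ ∀ z, ∃ v ∈ s, bc K (f' z) v = 0 := by
  have hne : s.Nonempty := Geometry.SimplicialComplex.nonempty_of_mem_faces hs
  let m : E → ℝ := fun y => s.inf' hne (fun v => bc K y v / bc K x v)
  have hWx := isW_bc hs hx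
  have hm_le : ∀ y, ∀ v ∈ s, m y * bc K x v ≤ bc K y v := by
    intro y v hv
    rw [← le_div_iff₀ (hpos v hv)]
    exact Finset.inf'_le _ hv
  have hm_eq : ∀ y, ∃ v ∈ s, m y * bc K x v = bc K y v := by
    intro y
    obtain ⟨v, hv, h⟩ := Finset.exists_mem_eq_inf' hne (fun v => bc K y v / bc K x v)
    refine ⟨v, hv, ?_⟩
    rw [show m y = _ from h, div_mul_cancel₀ _ (hpos v hv).ne']
  have hbc0 : ∀ y ∈ K.space, ∀ v, 0 ≤ bc K y v := by
    intro y hy v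
    obtain ⟨t, ht, hyt⟩ := Geometry.SimplicialComplex.mem_space_iff.1 hy
    exact (isW_bc ht hyt).nonneg v
  have hm0 : ∀ y ∈ K.space, 0 ≤ m y := by
    intro y hy
    refine Finset.le_inf' hne _ fun v hv => div_nonneg (hbc0 y hy v) (hpos v hv).le
  have hm_hull : ∀ y ∈ K.space, 0 < m y → y ∈ convexHull ℝ (s : Set E) := by
    intro y hy hmy
    refine top_eq hdim hsr hy fun v hv => ?_
    exact ((mul_pos hmy (hpos v hv)).trans_le (hm_le y v hv)).ne'
  have hm1 : ∀ y ∈ K.space, y ≠ x → m y < 1 := by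
    intro y hy hyx
    by_contra! hmy
    apply hyx
    have hWy := isW_bc hs (hm_hull y hy (by linarith))
    have hle : ∀ v ∈ s, bc K x v ≤ bc K y v := fun v hv => by
      have h1 := hm_le y v hv
      nlinarith [hpos v hv]
    have heq := (Finset.sum_eq_sum_iff_of_le hle).1 (hWx.sum.trans hWy.sum.symm)
    rw [← hWy.comb, ← hWx.comb]
    exact Finset.sum_congr rfl fun v hv => by rw [heq v hv]
  let G : ℝ → E → E := fun t y => (1 - t * m y)⁻¹ • (y - (t * m y) • x)
  have htm : ∀ t ∈ Set.Icc (0 : ℝ) 1, ∀ y ∈ K.space, y ≠ x → 0 < 1 - t * m y := by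
    intro t ht y hy hyx
    have h1 := hm1 y hy hyx
    have h0 := hm0 y hy
    nlinarith [ht.1, ht.2]
  have hGW : ∀ t ∈ Set.Icc (0 : ℝ) 1, ∀ y ∈ K.space, y ≠ x → 0 < m y →
      IsW K s (G t y) (fun v => (1 - t * m y)⁻¹ * (bc K y v - t * m y * bc K x v)) := by
    intro t ht y hy hyx hmy
    have hp := htm t ht y hy hyx
    have hWy := isW_bc hs (hm_hull y hy hmy)
    refine ⟨hs, ?_, ?_, ?_, ?_⟩
    · intro v
      apply mul_nonneg (inv_nonneg.2 hp.le)
      by_cases hv : v ∈ s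
      · have h1 := hm_le y v hv
        have h2 : t * m y * bc K x v ≤ 1 * (m y * bc K x v) := by
          rw [mul_assoc]
          exact mul_le_mul_of_nonneg_right ht.2 (mul_nonneg hmy.le (hpos v hv).le)
        linarith
      · rw [hWy.out v hv, hWx.out v hv]; simp
    · intro v hv
      rw [hWy.out v hv, hWx.out v hv]; simp
    · rw [← Finset.mul_sum, Finset.sum_sub_distrib, ← Finset.mul_sum, hWy.sum, hWx.sum, mul_one,
        inv_mul_cancel₀ hp.ne']
    · simp only [mul_smul, sub_smul, G]
      rw [← Finset.smul_sum, Finset.sum_sub_distrib]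
      congr 2
      · exact hWy.comb
      · rw [← Finset.smul_sum, ← Finset.smul_sum, hWx.comb]
  have hG0 : ∀ t y, m y = 0 → G t y = y := by
    intro t y h
    simp [G, h]
  have hGs : ∀ t ∈ Set.Icc (0 : ℝ) 1, ∀ y ∈ K.space, y ≠ x → G t y ∈ K.space := by
    intro t ht y hy hyx
    rcases (hm0 y hy).eq_or_lt with h | h
    · rw [hG0 t y h.symm]; exact hy
    · exact Geometry.SimplicialComplex.convexHull_subset_space hs (hGW t ht y hy hyx h).mem
  have hmc : Continuous fun y : K.space => m y := by
    apply Continuous.finset_inf'_apply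
    intro v hv
    exact (continuousOn_iff_continuous_restrict.1 (continuousOn_bc hK v)).div_const _
  have hgc : Continuous fun p : unitInterval × K.space => G p.1 (f p.2) := by
    have h1 : Continuous fun p : unitInterval × K.space => (p.1 : ℝ) * m (f p.2) :=
      (continuous_subtype_val.comp continuous_fst).mul
        (hmc.comp (f.continuous.comp continuous_snd))
    refine Continuous.smul (Continuous.inv₀ (continuous_const.sub h1) ?_) ?_
    · intro p
      exact (htm _ p.1.2 _ (f p.2).2 (hf _)).ne'
    · exact (continuous_subtype_val.comp (f.continuous.comp continuous_snd)).sub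
        (h1.smul continuous_const)
  let Φ : C(unitInterval × K.space, K.space) :=
    ⟨fun p => ⟨G p.1 (f p.2), hGs _ p.1.2 _ (f p.2).2 (hf _)⟩, hgc.subtype_mk _⟩
  let f' : C(K.space, K.space) :=
    ⟨fun z => Φ (1, z), Φ.continuous.comp (by fun_prop)⟩
  refine ⟨f', ContinuousMap.Homotopic.symm ⟨⟨Φ, ?_, ?_⟩⟩, ?_⟩
  · intro z
    apply Subtype.ext
    simp [Φ, G]
  · intro z
    rfl
  · intro z
    have hval : (f' z : E) = G 1 (f z) := rfl
    obtain ⟨v, hv, hveq⟩ := hm_eq (f z)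
    refine ⟨v, hv, ?_⟩
    rw [hval]
    rcases (hm0 _ (f z).2).eq_or_lt with h | h
    · rw [hG0 1 _ h.symm, ← hveq, ← h, zero_mul]
    · rw [(hGW 1 (by simp) _ (f z).2 (hf z) h).bc_eq]
      simp only
      rw [one_mul, hveq, sub_self, mul_zero]

theorem main_aux [DecidableEq E] (hK : K.faces.Finite) {r : ℕ}
    (hdim : ∀ s ∈ K.faces, s.card ≤ r + 1)
    (c : Ch E) (hc : c ∈ sup {s | s ∈ K.faces ∧ s.card = r + 1}) (hbd : bd c = 0)
    {s₀ : Finset E} (hs₀ : s₀ ∈ K.faces)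
    (f : C(↥K.space, ↥K.space)) (hf : f.Homotopic (ContinuousMap.id ↥K.space))
    (h0 : ∀ z, ∃ v ∈ s₀, bc K (f z) v = 0) : c s₀ = 0 := by
  classical
  obtain ⟨H⟩ := hf
  have : CompactSpace K.space := isCompact_iff_compactSpace.1 (isCompact_space hK)
  let V : Finset E := hK.toFinset.biUnion id
  let g : unitInterval × K.space → (V → ℝ) := fun p v => bc K (H p) v
  have hg : Continuous g := by
    apply continuous_pi
    intro v
    exact (continuousOn_iff_continuous_restrict.1 (continuousOn_bc hK v)).comp H.continuous
  have hgu := CompactSpace.uniformContinuous_of_continuous hg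
  rw [Metric.uniformContinuous_iff] at hgu
  have hrpos : (0 : ℝ) < 1 / (r + 1) := by positivity
  obtain ⟨δ, hδ, hδg⟩ := hgu (1 / (r + 1)) hrpos
  have hex : ∀ y ∈ K.space, ∃ v ∈ V, 1 / (r + 1 : ℝ) ≤ bc K y v := by
    intro y hy
    obtain ⟨t, ht, hyt⟩ := Geometry.SimplicialComplex.mem_space_iff.1 hy
    have hW := isW_bc ht hyt
    by_contra! hcon
    have htV : t ⊆ V := fun v hv => Finset.mem_biUnion.2 ⟨t, by simpa using ht, hv⟩
    have hne := Geometry.SimplicialComplex.nonempty_of_mem_faces ht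
    have h1 : ∑ v ∈ t, bc K y v < ∑ v ∈ t, 1 / (r + 1 : ℝ) :=
      Finset.sum_lt_sum_of_nonempty hne fun v hv => hcon v (htV hv)
    rw [hW.sum, Finset.sum_const, nsmul_eq_mul, mul_one_div, lt_div_iff₀ (by positivity),
      one_mul] at h1
    have h2 : (t.card : ℝ) ≤ r + 1 := by exact_mod_cast hdim t ht
    linarith
  have hl : ∃ l : ℝ × E → E, ∀ (t : unitInterval) (y : K.space),
      l (t, y) ∈ V ∧ 1 / (r + 1 : ℝ) ≤ bc K (H (t, y)) (l (t, y)) := by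
    refine ⟨fun p => if h : p.1 ∈ Set.Icc (0 : ℝ) 1 ∧ p.2 ∈ K.space then
      (hex (H (⟨p.1, h.1⟩, ⟨p.2, h.2⟩)) (Subtype.prop _)).choose else p.2, ?_⟩
    intro t y
    have h : ((t : ℝ), (y : E)).1 ∈ Set.Icc (0 : ℝ) 1 ∧ ((t : ℝ), (y : E)).2 ∈ K.space :=
      ⟨t.2, y.2⟩
    simp only [dif_pos h]
    exact (hex (H (t, y)) (Subtype.prop _)).choose_spec
  obtain ⟨l, hl⟩ := hl
  have key : ∀ (p q : unitInterval × K.space),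
      dist ((p.1 : ℝ), (p.2 : E)) ((q.1 : ℝ), (q.2 : E)) ≤ δ / 2 →
      bc K (H q) (l (p.1, p.2)) ≠ 0 := by
    intro p q hpq h
    have hd : dist p q < δ := lt_of_le_of_lt hpq (by linarith)
    have h1 := hδg hd
    obtain ⟨hV, hle⟩ := hl p.1 p.2
    have h2 := (dist_le_pi_dist (g p) (g q) ⟨l (p.1, p.2), hV⟩).trans_lt h1
    simp only [g] at h2
    rw [h, Real.dist_eq, sub_zero] at h2
    exact absurd (lt_of_le_of_lt (le_abs_self _) h2) (not_lt.2 hle)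
  have hlift : ∀ s : Finset E, (s = ∅ ∨ s ∈ K.faces) → ∀ p : ℝ × E,
      p ∈ Set.Icc (0 : ℝ) 1 ×ˢ convexHull ℝ (s : Set E) → s ∈ K.faces ∧
        p.1 ∈ Set.Icc (0 : ℝ) 1 ∧ p.2 ∈ K.space := by
    rintro s hs p ⟨hp1, hp2⟩
    have hs' : s ∈ K.faces := by
      rcases hs with rfl | hs
      · simp at hp2
      · exact hs
    exact ⟨hs', hp1, Geometry.SimplicialComplex.convexHull_subset_space hs' hp2⟩
  have key2 : ∀ s : Finset E, (s = ∅ ∨ s ∈ K.faces) → ∀ t : Finset (ℝ × E),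
      (t : Set (ℝ × E)) ⊆ Set.Icc (0 : ℝ) 1 ×ˢ convexHull ℝ (s : Set E) →
      (∀ x ∈ t, ∀ y ∈ t, dist x y ≤ δ / 2) → ∀ q : unitInterval × K.space,
      ((q.1 : ℝ), (q.2 : E)) ∈ t → ∀ v ∈ t.image l, bc K (H q) v ≠ 0 := by
    intro s hs t ht htd q hq v hv
    obtain ⟨p, hp, rfl⟩ := Finset.mem_image.1 hv
    obtain ⟨-, hp1, hp2⟩ := hlift s hs p (ht hp)
    exact key (⟨p.1, hp1⟩, ⟨p.2, hp2⟩) q (htd p hp _ hq)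
  have hbdd : Bornology.IsBounded (Set.Icc (0 : ℝ) 1 ×ˢ K.space) :=
    (isCompact_Icc.prod (isCompact_space hK)).isBounded
  refine core {s | s = ∅ ∨ s ∈ K.faces} (Or.inl rfl) ?_ r ?_ c (sup_mono ?_ hc) hbd (δ / 2)
    (Metric.diam (Set.Icc (0 : ℝ) 1 ×ˢ K.space)) (by positivity) Metric.diam_nonneg ?_ l ?_ ?_ s₀ ?_
  · intro s hs v
    by_cases he : s.erase v = ∅
    · exact Or.inl he
    · right
      rcases hs with rfl | hs
      · simp at he
      · exact K.down_closed hs (Finset.erase_subset _ _) (Finset.nonempty_iff_ne_empty.2 he)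
  · rintro s (rfl | hs)
    · simp
    · exact hdim s hs
  · rintro s ⟨h1, h2⟩
    exact ⟨Or.inr h1, h2⟩
  · intro s hs p hp q hq
    exact Metric.dist_le_diam_of_mem hbdd (hlift s hs p hp).2 (hlift s hs q hq).2
  · intro s hs t ht htd
    rcases t.eq_empty_or_nonempty with rfl | ⟨q, hq⟩
    · left; simp
    · right
      obtain ⟨-, hq1, hq2⟩ := hlift s hs q (ht hq)
      have h := key2 s hs t ht htd (⟨q.1, hq1⟩, ⟨q.2, hq2⟩) hq
      obtain ⟨u, hu, hyu⟩ := Geometry.SimplicialComplex.mem_space_iff.1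
        (H (⟨q.1, hq1⟩, ⟨q.2, hq2⟩)).2
      refine K.down_closed hu ?_ ⟨_, Finset.mem_image_of_mem l hq⟩
      intro v hv
      by_contra hvu
      exact h v hv ((isW_bc hu hyu).out v hvu)
  · intro s hs y hy
    obtain ⟨hs', -, hy2⟩ := hlift s hs (1, y) ⟨by simp, hy⟩
    have h := (hl 1 ⟨y, hy2⟩).2
    rw [H.apply_one] at h
    by_contra hcon
    have h3 := (isW_bc hs' hy).out _ hcon
    simp only [ContinuousMap.id_apply, Set.Icc.coe_one] at h
    rw [h3] at h
    linarith
  · intro s hs t ht htd heq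
    obtain ⟨w, hw⟩ := Geometry.SimplicialComplex.nonempty_of_mem_faces hs₀
    rw [← heq] at hw
    obtain ⟨q, hq, -⟩ := Finset.mem_image.1 hw
    have ht' : (t : Set (ℝ × E)) ⊆ Set.Icc (0 : ℝ) 1 ×ˢ convexHull ℝ (s : Set E) :=
      ht.trans (Set.prod_mono (by simp) le_rfl)
    obtain ⟨-, hq1, hq2⟩ := hlift s hs q (ht' hq)
    have h := key2 s hs t ht' htd (⟨q.1, hq1⟩, ⟨q.2, hq2⟩) hq
    have hq0 : (⟨q.1, hq1⟩ : unitInterval) = 0 := Subtype.ext (ht hq).1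
    rw [hq0, H.apply_zero, heq] at h
    obtain ⟨v, hv, hv0⟩ := h0 ⟨q.2, hq2⟩
    exact h v hv hv0

end

end Ch


/-- Let `K` be a finite simplicial complex of dimension `r` with
`H_r(|K|; ℤ/2) ≠ 0`, and let `c` be a nonzero `r`-cycle in the simplicial chain group
`C_r(K; ℤ/2)` (since `dim K = r`, the nonvanishing of `H_r` is equivalent to the
existence of such a cycle, and with `ℤ/2`-coefficients the boundary of an `r`-chain
evaluated on an `(r−1)`-face `t` is the number mod 2 of `r`-simplices of the chain
containing `t`).  If `f : |K| → |K|` is continuous and homotopic to the identity,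
then the support of `c` is contained in the image of `f`. -/
theorem statement10 (E : Type*) [NormedAddCommGroup E] [NormedSpace ℝ E] [DecidableEq E]
    (K : Geometry.SimplicialComplex ℝ E) (hKfin : K.faces.Finite)
    (r : ℕ) (hr : 1 ≤ r)
    (hdim : ∀ s ∈ K.faces, s.card ≤ r + 1)
    (c : Finset E → ZMod 2)
    (hsupp : ∀ s : Finset E, c s ≠ 0 → s ∈ K.faces ∧ s.card = r + 1)
    (hne : c ≠ 0)
    (hcycle : ∀ t : Finset E, t ∈ K.faces → t.card = r →
      (∑ s ∈ hKfin.toFinset.filter (fun s => t ⊆ s ∧ s.card = r + 1), c s) = 0)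
    (f : C(↥K.space, ↥K.space))
    (hf : f.Homotopic (ContinuousMap.id ↥K.space)) :
    (⋃ s ∈ {s : Finset E | c s ≠ 0}, convexHull ℝ (s : Set E)) ⊆
      Subtype.val '' Set.range f := by
  classical
  intro x₀ hx₀
  simp only [Set.mem_setOf_eq, Set.mem_iUnion] at hx₀
  obtain ⟨s, hcs, hx₀⟩ := hx₀
  obtain ⟨hs, hsr⟩ := hsupp s hcs
  by_contra hnot
  -- a nearby interior point
  have hclosed : IsClosed (Subtype.val '' Set.range f) := by
    have : CompactSpace K.space := isCompact_iff_compactSpace.1 (Ch.isCompact_space hKfin)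
    exact ((isCompact_range f.continuous).image continuous_subtype_val).isClosed
  have hne0 : s ≠ ∅ := (Geometry.SimplicialComplex.nonempty_of_mem_faces hs).ne_empty
  obtain ⟨x, hx, hpos, hxn⟩ : ∃ x ∈ convexHull ℝ (s : Set E), (∀ v ∈ s, 0 < Ch.bc K x v) ∧
      x ∉ Subtype.val '' Set.range f := by
    have hcont : Continuous fun ε : ℝ => (1 - ε) • x₀ + ε • Ch.bary s := by fun_prop
    have hev : ∀ᶠ ε : ℝ in nhds 0, (1 - ε) • x₀ + ε • Ch.bary s ∉ Subtype.val '' Set.range f := by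
      refine hcont.continuousAt.eventually (hclosed.isOpen_compl.mem_nhds ?_)
      simpa using hnot
    obtain ⟨ε₀, hε₀, hball⟩ := Metric.eventually_nhds_iff.1 hev
    have hεpos : 0 < min (ε₀ / 2) 1 := by positivity
    set ε := min (ε₀ / 2) 1 with hε
    have hε1 : ε ≤ 1 := min_le_right _ _
    have hW := Ch.isW_bc hs hx₀
    have hcp : (0 : ℝ) < s.card := by rw [hsr]; positivity
    have hW' : Ch.IsW K s ((1 - ε) • x₀ + ε • Ch.bary s)
        (fun v => (1 - ε) * Ch.bc K x₀ v + ε * (if v ∈ s then (s.card : ℝ)⁻¹ else 0)) := by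
      refine ⟨hs, ?_, ?_, ?_, ?_⟩
      · intro v
        refine add_nonneg (mul_nonneg (by linarith) (hW.nonneg v)) (mul_nonneg hεpos.le ?_)
        split_ifs
        · positivity
        · exact le_rfl
      · intro v hv
        simp [hW.out v hv, hv]
      · rw [Finset.sum_add_distrib, ← Finset.mul_sum, ← Finset.mul_sum, hW.sum,
          Finset.sum_congr rfl (fun v hv => if_pos hv), Finset.sum_const, nsmul_eq_mul,
          mul_inv_cancel₀ hcp.ne']
        ring
      · simp only [add_smul, mul_smul]
        rw [Finset.sum_add_distrib, ← Finset.smul_sum, ← Finset.smul_sum, hW.comb, Ch.bary,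
          Finset.smul_sum (s := s) (r := (s.card : ℝ)⁻¹)]
        congr 2
        exact Finset.sum_congr rfl (fun v hv => by rw [if_pos hv])
    refine ⟨_, hW'.mem, ?_, hball ?_⟩
    · intro v hv
      rw [hW'.bc_eq]
      simp only [if_pos hv]
      exact add_pos_of_nonneg_of_pos (mul_nonneg (by linarith) (hW.nonneg v)) (by positivity)
    · rw [Real.dist_eq, sub_zero, abs_of_pos hεpos]
      have : ε ≤ ε₀ / 2 := min_le_left _ _
      linarith
  obtain ⟨f', hf', h0⟩ := Ch.push_off hKfin hdim hs hsr hx hpos f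
    (fun z hz => hxn ⟨f z, ⟨z, rfl⟩, hz⟩)
  -- the chain
  let cc : Ch E := ∑ t ∈ hKfin.toFinset, c t • Ch.of t
  have hcc : ∀ t, cc t = c t := by
    intro t
    simp only [cc, Finsupp.finsetSum_apply, Finsupp.smul_apply, Ch.of, Finsupp.single_apply]
    by_cases ht : t ∈ K.faces
    · rw [Finset.sum_eq_single t]
      · simp
      · intro b _ hb; simp [hb]
      · intro h; simp [ht] at h
    · have : c t = 0 := by
        by_contra h
        exact ht (hsupp t h).1
      rw [this]
      apply Finset.sum_eq_zero
      intro b hb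
      have : b ≠ t := by rintro rfl; simp at hb; exact ht hb
      simp [this]
  have hmem : cc ∈ Ch.sup {t | t ∈ K.faces ∧ t.card = r + 1} := by
    refine (Finsupp.mem_supported' _ _).2 fun t ht => ?_
    rw [hcc]
    by_contra h
    exact ht (hsupp t h)
  have hbd : Ch.bd cc = 0 := by
    ext t
    have hterm : ∀ u ∈ hKfin.toFinset, (c u • ∑ v ∈ u, Ch.of (u.erase v)) t =
        if (t ⊆ u ∧ u.card = r + 1) ∧ t.card = r then c u else 0 := by
      intro u hu
      rw [Finsupp.smul_apply, Finsupp.finsetSum_apply]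
      by_cases hcu : c u = 0
      · simp [hcu]
      have hur := (hsupp u hcu).2
      by_cases ht : t ⊆ u ∧ t.card = r
      · obtain ⟨h1, h2⟩ := ht
        rw [if_pos ⟨⟨h1, hur⟩, h2⟩]
        have hcard : (u \ t).card = 1 := by
          rw [Finset.card_sdiff_of_subset h1]; omega
        obtain ⟨a, ha⟩ := Finset.card_eq_one.1 hcard
        have hau : a ∈ u \ t := by rw [ha]; simp
        rw [Finset.mem_sdiff] at hau
        have hte : ∀ v ∈ u, u.erase v = t ↔ v = a := by
          intro v hv
          constructor
          · rintro rfl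
            have := hau.2
            rw [Finset.mem_erase] at this
            by_contra hne
            exact this ⟨fun h => hne h.symm, hau.1⟩
          · rintro rfl
            symm
            apply Finset.eq_of_subset_of_card_le
            · intro w hw
              exact Finset.mem_erase.2 ⟨fun h => hau.2 (h ▸ hw), h1 hw⟩
            · rw [Finset.card_erase_of_mem hv]; omega
        rw [Finset.sum_eq_single a]
        · rw [(hte a hau.1).2 rfl]; simp [Ch.of]
        · intro v hv hva
          rw [Ch.of, Finsupp.single_apply, if_neg (fun h => hva ((hte v hv).1 h))]
        · intro h; exact (h hau.1).elim
      · rw [if_neg (by tauto), Finset.sum_eq_zero, smul_zero]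
        intro v hv
        rw [Ch.of, Finsupp.single_apply, if_neg]
        rintro rfl
        exact ht ⟨Finset.erase_subset _ _, by rw [Finset.card_erase_of_mem hv]; omega⟩
    simp only [cc, map_sum, map_smul, Ch.bd_of]
    rw [Finsupp.finsetSum_apply, Finset.sum_congr rfl hterm, Finsupp.zero_apply]
    by_cases htr : t.card = r
    · simp only [htr, and_true]
      rw [← Finset.sum_filter]
      by_cases htf : t ∈ K.faces
      · convert hcycle t htf htr
      · apply Finset.sum_eq_zero
        intro u hu
        simp only [Finset.mem_filter, Set.Finite.mem_toFinset] at hu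
        exact (htf (K.down_closed hu.1 hu.2.1 (Finset.card_pos.1 (by omega)))).elim
    · simp [htr]
  have hfin := Ch.main_aux hKfin hdim cc hmem hbd hs f' (hf'.trans hf) h0
  rw [hcc] at hfin
  exact hcs hfin
end
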